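/- Let R be a Dedekind ring of arithmetic type and n ≥ 3. Then E(n,R) = SL(n,R), that is, SL(n,R) is generated by the elementary transvections e_{ij}(r), i ≠ j, r ∈ R. -/

import Mathlib

/-!
# `E(n,R) = SL(n,R)` for rings of `S`-integers and `n ≥ 3`

*Reduction to Mennicke symbols.* Nonzero elements of `R` lie in finitely many maximal ideals, so the
stable range condition holds, every matrix reduces to `SL₃` modulo elementary ones, and the quotient
of `SL₃` by `E₃` is described by the Mennicke symbols `m(a,b)`, attached to the first row `(a,b)` of
a matrix in `SL₂`. Such a symbol is bimultiplicative, symmetric, and depends on `b` only modulo `a`.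
Since the quotients `R/a` are finite, symbols are torsion; it is thus enough to show that every
symbol with values in `ℂˣ` of `ℓ`-power order, for a prime `ℓ`, is trivial (`elementary_of_symb`).
The ring `R` is `O[1/s]`, with `O` the integral closure of `A = ℤ` or `A = k[t]` in a finite
separable extension of the fraction field of `A` (for function fields, a separating element `t` is
found inside `R`), and triviality on `O` implies triviality on `R` (`Symb.trivial_of_comap`).

*Free primes.* The symbol extends to `M(I,b)` for nonzero ideals `I` and `b` prime to `I`,
multiplicative in both arguments. At a prime `v` this is a character of the residue field, and `v` is
called free if that character is trivial. If only finitely many primes are not free, then the symbol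
is trivial, since `a` can be moved within its class modulo `b` away from these primes
(`trivial_of_finite`). If `v` is not free and `M(v,b) = 1`, then `b` is an `ℓ`-th power modulo `v`
(`key_aux`). In characteristic `ℓ` all primes are free, as the residue fields have no units of order
`ℓ`.

*Density.* The number of ideals of norm at most `Y` is estimated by lattice point counting, which
shows that the zeta function grows like `1 / (s - 1)` at `1` and, through the Euler product, bounds
the density of sets of primes in finite extensions of `A`. As only upper bounds are needed for the density of sets of
primes cut out by characters, no non-vanishing of `L`-functions enters.

*Non-free primes have density zero* (`trivial_of_zeroDens`). If `m(α, ·) = 1`, then `I ↦ M(I,α)`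
is a character `κ` of the class group. When `κ` is trivial, `α` is an `ℓ`-th power modulo every
non-free prime, so the non-free primes split in the field generated by an `ℓ`-th root of `α`.
Starting with an extension in which they split, either cyclotomic or generated by the `ℓ`-th root of
a suitable singular element, one sees that infinitely many primes are free; these provide
infinitely many independent elements `α`, hence arbitrarily large extensions in which the non-free
primes split, and the set of non-free primes has density zero. The argument is applied to the powers
of the symbol by `ℓ ^ j` for decreasing `j`, starting from the `j` dictated by the roots of unity
in `O`.

*Conclusion* (`trivial_of_zero`). Suppose that infinitely many primes are not free. Choose `k` of
them, unramified over distinct primes `(π i)` of `A`, and elements `u i` of `O` with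
`m(u i, π i) ≠ 1` and `m(u i, π j) = 1` for `j ≠ i`. The functions `n ↦ m(u i, n)` are independent
characters of `A`, so the primes of `A` where all of them are trivial have upper density at most
`ℓ ^ (-k)`. Every other prime of `A`, up to finitely many, lies below a non-free prime. But a set of
primes of `A` of positive lower density, independent of `k`, has only primes of residue degree one
above it (those with a prime of degree one in the Galois closure). For large `k` a positive
proportion of the latter are non-free, contradicting density zero.
-/

/-!
STATEMENT 5. Let `R` be a Dedekind ring of arithmetic type and `n ≥ 3`. Then
`E(n,R) = SL(n,R)`, i.e. `SL(n,R)` is generated by the elementary transvections.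
-/

/-- A field `F` is a global field if it is a number field or a function field, i.e. a finite
extension of `𝔽_q(t)` for a finite field `𝔽_q`. -/
def IsGlobalField (F : Type) [Field F] : Prop :=
  NumberField F ∨
    ∃ (Fq : Type) (_ : Field Fq) (_ : Fintype Fq) (_ : Algebra (RatFunc Fq) F),
      FunctionField Fq F

/-- `R` is a Dedekind ring of arithmetic type: `R` is (isomorphic to) the ring of `S`-integers
`{x ∈ F : v(x) ≥ 0 for all places v ∉ S}` of a global field `F`, where `S` is a finite nonempty
set of places of `F` containing all the archimedean ones.  The nonarchimedean places of a global
field `F` are exactly its proper valuation subrings, and the archimedean places (present only in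
the number field case, where the nonemptiness of `S` is automatic) impose no condition on `x`;
hence `S` is encoded below by its (finite) set of nonarchimedean members. -/
def IsDedekindRingOfArithmeticType (R : Type) [CommRing R] : Prop :=
  ∃ (F : Type) (_ : Field F) (_ : Algebra R F) (_ : IsFractionRing R F)
    (S : Set (ValuationSubring F)),
      S.Finite ∧
      (∀ x : F, x ∈ (algebraMap R F).range ↔
        ∀ V : ValuationSubring F, V ≠ ⊤ → V ∉ S → x ∈ V) ∧
      (NumberField F ∨ (S.Nonempty ∧ ∃ (Fq : Type) (_ : Field Fq) (_ : Fintype Fq)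
          (_ : Algebra (RatFunc Fq) F), FunctionField Fq F))

/-- The set of elementary transvections `e_{ij}(r) = 1 + r·E_{ij}`, `i ≠ j`, in `SL(n,R)`. -/
def ElemTransvections (n : ℕ) (R : Type) [CommRing R] :
    Set (Matrix.SpecialLinearGroup (Fin n) R) :=
  {g | ∃ (i j : Fin n) (r : R), i ≠ j ∧
    (g : Matrix (Fin n) (Fin n) R) = Matrix.transvection i j r}

/-- `g` is a product of at most `L` elements of the set `X`. -/
def IsProductOfAtMost {G : Type*} [Monoid G] (X : Set G) (L : ℕ) (g : G) : Prop :=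
  ∃ (m : ℕ) (y : Fin m → G), m ≤ L ∧ (∀ i, y i ∈ X) ∧ g = (List.ofFn y).prod
/-- The elementary subgroup `E(n,R) ≤ SL(n,R)` generated by all elementary transvections. -/
def ElementarySubgroup (n : ℕ) (R : Type) [CommRing R] :
    Subgroup (Matrix.SpecialLinearGroup (Fin n) R) :=
  Subgroup.closure (ElemTransvections n R)

namespace SKOne
open Matrix

/-! ### Stable range and the reduction to `SL₃` -/

/-- The hypothesis on `R` behind the stable range condition: a nonzero element lies in only
finitely many maximal ideals. -/
def FinMax (R : Type*) [CommRing R] : Prop :=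
  ∀ c : R, c ≠ 0 → {P : Ideal R | P.IsMaximal ∧ c ∈ P}.Finite

section CRT
variable {R : Type*} [CommRing R]

/-- Chinese remainder: an element can be prescribed to be `0` or `1` modulo each of finitely many
maximal ideals. -/
lemma exists_zero_one {s : Set (Ideal R)} (hs : s.Finite) (hm : ∀ P ∈ s, P.IsMaximal)
    (p : Ideal R → Prop) : ∃ t : R, ∀ P ∈ s, (p P → t - 1 ∈ P) ∧ (¬ p P → t ∈ P) := by
  classical
  have := hs.fintype
  obtain ⟨r, hr⟩ := Ideal.exists_forall_sub_mem_ideal (I := fun P : s => (P : Ideal R))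
    (by
      intro P Q hPQ
      have := hm P P.2
      have := hm Q Q.2
      exact Ideal.isCoprime_of_isMaximal (fun h => hPQ (Subtype.ext h)))
    (fun P => if p P then 1 else 0)
  refine ⟨r, fun P hP => ⟨fun h => ?_, fun h => ?_⟩⟩
  · simpa [h] using hr ⟨P, hP⟩
  · simpa [h] using hr ⟨P, hP⟩

lemma isCoprime_iff_max (a b : R) :
    IsCoprime a b ↔ ∀ P : Ideal R, P.IsMaximal → a ∈ P → b ∉ P := by
  constructor
  · rintro ⟨u, v, h⟩ P hP ha hb
    exact hP.ne_top ((Ideal.eq_top_iff_one _).2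
      (h ▸ P.add_mem (P.mul_mem_left _ ha) (P.mul_mem_left _ hb)))
  · intro h
    by_contra hc
    rw [← Ideal.isCoprime_span_singleton_iff, Ideal.isCoprime_iff_sup_eq] at hc
    obtain ⟨P, hP, hle⟩ := Ideal.exists_le_maximal _ hc
    exact h P hP (hle (Ideal.mem_sup_left (Ideal.mem_span_singleton_self _)))
      (hle (Ideal.mem_sup_right (Ideal.mem_span_singleton_self _)))

lemma exists_coprime_add (hf : FinMax R) {a b c : R} (hab : IsCoprime a b) (hc : c ≠ 0) :
    ∃ t, IsCoprime (a + t * b) c := by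
  obtain ⟨t, ht⟩ := exists_zero_one (hf c hc) (fun P hP => hP.1) (fun P => a ∈ P)
  refine ⟨t, (isCoprime_iff_max _ _).2 fun P hP h1 h2 => ?_⟩
  rw [isCoprime_iff_max] at hab
  obtain ⟨h3, h4⟩ := ht P ⟨hP, h2⟩
  by_cases ha : a ∈ P
  · refine hab P hP ha ?_
    have h5 := h3 ha
    have : b = (a + t * b) - a - (t - 1) * b := by ring
    rw [this]
    exact P.sub_mem (P.sub_mem h1 ha) (P.mul_mem_right _ h5)
  · refine ha ?_
    have : a = (a + t * b) - t * b := by ring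
    rw [this]
    exact P.sub_mem h1 (P.mul_mem_right _ (h4 ha))

/-- Stable range: a unimodular vector with at least three coordinates can be shortened by adding
multiples of the coordinate `l` to the others. -/
lemma stable_range (hf : FinMax R) {ι : Type*} [Fintype ι] [DecidableEq ι] (l : ι)
    (h3 : ∀ i, ∃ j, j ≠ i ∧ j ≠ l) (v w : ι → R)
    (hv : ∑ i, v i * w i = 1) :
    ∃ t c : ι → R, ∑ i ∈ Finset.univ.erase l, c i * (v i + t i * v l) = 1 := by
  by_cases h0 : ∀ i, i ≠ l → v i = 0
  · obtain ⟨j, -, hj⟩ := h3 l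
    have hl : v l * w l = 1 := by
      rw [← hv]
      exact (Finset.sum_eq_single_of_mem (f := fun i => v i * w i) l (Finset.mem_univ _)
        (fun b _ hb => by simp only [h0 b hb, zero_mul])).symm
    refine ⟨fun i => w l, Pi.single j 1, ?_⟩
    rw [Finset.sum_eq_single_of_mem j (by simp [hj])]
    · rw [h0 j hj]; simp [mul_comm (w l), hl]
    · intro b _ hb; simp [hb]
  push Not at h0
  obtain ⟨i0, hi0, hv0⟩ := h0
  obtain ⟨i1, hi1, hi1l⟩ := h3 i0
  obtain ⟨t, ht⟩ := exists_zero_one (hf _ hv0) (fun P hP => hP.1) (fun P => v i1 ∈ P)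
  let vt : ι → R := fun i => v i + (Pi.single i1 t : ι → R) i * v l
  have key : Ideal.span (vt '' (Finset.univ.erase l : Finset ι)) = ⊤ := by
    by_contra hc
    obtain ⟨P, hP, hle⟩ := Ideal.exists_le_maximal _ hc
    have hmem : ∀ i, i ≠ l → vt i ∈ P := fun i hi =>
      hle (Ideal.subset_span ⟨i, by simp [hi], rfl⟩)
    have hne : ∀ i, i ≠ i1 → i ≠ l → v i ∈ P := by
      intro i hi hil
      have := hmem i hil
      simpa [vt, Pi.single_eq_of_ne hi] using this
    have h1 := hmem i1 hi1l
    simp only [vt, Pi.single_eq_same] at h1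
    obtain ⟨h4, h5⟩ := ht P ⟨hP, hne i0 hi1.symm hi0⟩
    have hvi1 : v i1 ∈ P := by
      by_contra hh
      have : v i1 = (v i1 + t * v l) - t * v l := by ring
      exact hh (this ▸ P.sub_mem h1 (P.mul_mem_right _ (h5 hh)))
    have hvl : v l ∈ P := by
      have : v l = (v i1 + t * v l) - v i1 - (t - 1) * v l := by ring
      rw [this]
      exact P.sub_mem (P.sub_mem h1 hvi1) (P.mul_mem_right _ (h4 hvi1))
    refine hP.ne_top ((Ideal.eq_top_iff_one _).2 (hv ▸ P.sum_mem fun i _ => P.mul_mem_right _ ?_))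
    by_cases h6 : i = l
    · exact h6 ▸ hvl
    by_cases h7 : i = i1
    · exact h7 ▸ hvi1
    exact hne i h7 h6
  have h1 : (1 : R) ∈ Ideal.span (vt '' (Finset.univ.erase l : Finset ι)) := key ▸ trivial
  rw [Ideal.span, Submodule.mem_span_image_finset_iff_exists_fun] at h1
  obtain ⟨c, hc⟩ := h1
  refine ⟨Pi.single i1 t, fun i => if h : i ∈ Finset.univ.erase l then c ⟨i, h⟩ else 0, ?_⟩
  rw [← hc, ← Finset.sum_attach]
  refine Finset.sum_congr rfl fun i _ => ?_
  beta_reduce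
  rw [dif_pos i.2]; rfl

end CRT

section Elem
variable {R : Type} [CommRing R] {n : ℕ}

/-- The elementary transvection `1 + r E_{ij}` as an element of `SL(n,R)`. -/
def elem (i j : Fin n) (h : i ≠ j) (r : R) : SpecialLinearGroup (Fin n) R :=
  ⟨transvection i j r, det_transvection_of_ne i j h r⟩

lemma elem_mem (i j : Fin n) (h : i ≠ j) (r : R) : elem i j h r ∈ ElementarySubgroup n R :=
  Subgroup.subset_closure ⟨i, j, r, h, rfl⟩

lemma elem_mul_apply (i j : Fin n) (h : i ≠ j) (r : R) (g : SpecialLinearGroup (Fin n) R)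
    (a b : Fin n) : (elem i j h r * g).1 a b = g.1 a b + if a = i then r * g.1 j b else 0 := by
  change ((transvection i j r) * g.1) a b = _
  split_ifs with h1
  · subst h1; simp
  · rw [transvection_mul_apply_of_ne _ _ _ _ h1]; simp

lemma mul_elem_apply (i j : Fin n) (h : i ≠ j) (r : R) (g : SpecialLinearGroup (Fin n) R)
    (a b : Fin n) : (g * elem i j h r).1 a b = g.1 a b + if b = j then r * g.1 a i else 0 := by
  change (g.1 * (transvection i j r)) a b = _
  split_ifs with h1
  · subst h1; simp
  · rw [mul_transvection_apply_of_ne _ _ _ _ h1]; simp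

lemma exists_row_op (l : Fin n) (t : Fin n → R) (g : SpecialLinearGroup (Fin n) R)
    (S : Finset (Fin n)) (hS : l ∉ S) : ∃ e ∈ ElementarySubgroup n R, ∀ a b,
      (e * g).1 a b = g.1 a b + if a ∈ S then t a * g.1 l b else 0 := by
  induction S using Finset.induction_on with
  | empty => exact ⟨1, one_mem _, by simp⟩
  | insert x s hx ih =>
    obtain ⟨e, he, h⟩ := ih (fun h => hS (Finset.mem_insert_of_mem h))
    have hxl : x ≠ l := fun h => hS (h ▸ Finset.mem_insert_self _ _)
    refine ⟨elem x l hxl (t x) * e, mul_mem (elem_mem _ _ _ _) he, fun a b => ?_⟩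
    have hls : l ∉ s := fun h => hS (Finset.mem_insert_of_mem h)
    rw [mul_assoc, elem_mul_apply, h, h]
    by_cases h1 : a = x
    · subst h1; simp [hx, hls]
    · simp [h1]

lemma exists_col_op (l : Fin n) (t : Fin n → R) (g : SpecialLinearGroup (Fin n) R)
    (S : Finset (Fin n)) (hS : l ∉ S) : ∃ e ∈ ElementarySubgroup n R, ∀ a b,
      (g * e).1 a b = g.1 a b + if b ∈ S then t b * g.1 a l else 0 := by
  induction S using Finset.induction_on with
  | empty => exact ⟨1, one_mem _, by simp⟩
  | insert x s hx ih =>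
    obtain ⟨e, he, h⟩ := ih (fun h => hS (Finset.mem_insert_of_mem h))
    have hxl : x ≠ l := fun h => hS (h ▸ Finset.mem_insert_self _ _)
    refine ⟨e * elem l x hxl.symm (t x), mul_mem he (elem_mem _ _ _ _), fun a b => ?_⟩
    have hls : l ∉ s := fun h => hS (Finset.mem_insert_of_mem h)
    rw [← mul_assoc, mul_elem_apply, h, h]
    by_cases h1 : b = x
    · subst h1; simp [hx, hls]
    · simp [h1]

lemma exists_col_op' (l : Fin n) (t : Fin n → R) (g : SpecialLinearGroup (Fin n) R)
    (S : Finset (Fin n)) (hS : l ∉ S) : ∃ e ∈ ElementarySubgroup n R, ∀ a b,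
      (g * e).1 a b = g.1 a b + if b = l then ∑ k ∈ S, t k * g.1 a k else 0 := by
  induction S using Finset.induction_on with
  | empty => exact ⟨1, one_mem _, by simp⟩
  | insert x s hx ih =>
    obtain ⟨e, he, h⟩ := ih (fun h => hS (Finset.mem_insert_of_mem h))
    have hxl : x ≠ l := fun h => hS (h ▸ Finset.mem_insert_self _ _)
    refine ⟨e * elem x l hxl (t x), mul_mem he (elem_mem _ _ _ _), fun a b => ?_⟩
    rw [← mul_assoc, mul_elem_apply, h, h]
    by_cases h1 : b = l
    · subst h1; simp [hxl, Finset.sum_insert hx]; ring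
    · simp [h1]

/-- The embedding `A ↦ diag(A, 1)` of `SL(n,R)` into `SL(n+1,R)`. -/
def emb : SpecialLinearGroup (Fin n) R →* SpecialLinearGroup (Fin (n + 1)) R where
  toFun A := ⟨reindexAlgEquiv R R finSumFinEquiv (fromBlocks A.1 0 0 (1 : Matrix (Fin 1) (Fin 1) R)),
    by simp⟩
  map_one' := by
    apply Subtype.ext
    change reindexAlgEquiv R R _ (fromBlocks 1 0 0 1) = 1
    rw [fromBlocks_one, map_one]
  map_mul' A B := by
    apply Subtype.ext
    change _ = reindexAlgEquiv R R _ _ * reindexAlgEquiv R R _ _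
    rw [← map_mul, fromBlocks_multiply]
    simp

lemma emb_elem (i j : Fin n) (h : i ≠ j) (r : R) :
    emb (elem i j h r) ∈ ElementarySubgroup (n + 1) R := by
  have : emb (elem i j h r) = elem i.castSucc j.castSucc (by simpa using h) r := by
    apply Subtype.ext
    let T : TransvectionStruct (Fin n) R := ⟨i, j, h, r⟩
    have h1 := TransvectionStruct.toMatrix_sumInl (p := Fin 1) T
    have h2 := TransvectionStruct.toMatrix_reindexEquiv finSumFinEquiv (T.sumInl (Fin 1))
    rw [h1] at h2
    exact h2.symm
  rw [this]
  exact elem_mem _ _ _ _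

lemma emb_mem {A : SpecialLinearGroup (Fin n) R} (hA : A ∈ ElementarySubgroup n R) :
    emb A ∈ ElementarySubgroup (n + 1) R := by
  have : ElementarySubgroup n R ≤ (ElementarySubgroup (n + 1) R).comap emb := by
    refine (Subgroup.closure_le _).2 ?_
    rintro g ⟨i, j, r, h, hg⟩
    have : g = elem i j h r := Subtype.ext hg
    rw [this]
    exact emb_elem i j h r
  exact this hA

lemma exists_emb_eq (g : SpecialLinearGroup (Fin (n + 1)) R)
    (h1 : ∀ i : Fin n, g.1 i.castSucc (Fin.last n) = 0)
    (h2 : ∀ i : Fin n, g.1 (Fin.last n) i.castSucc = 0)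
    (h3 : g.1 (Fin.last n) (Fin.last n) = 1) : ∃ A, g = emb A := by
  have key : g.1 = reindexAlgEquiv R R finSumFinEquiv
      (fromBlocks (g.1.submatrix Fin.castSucc Fin.castSucc) 0 0
        (1 : Matrix (Fin 1) (Fin 1) R)) := by
    ext a b
    obtain ⟨a, rfl⟩ := finSumFinEquiv.surjective a
    obtain ⟨b, rfl⟩ := finSumFinEquiv.surjective b
    have hl : ∀ x : Fin 1, Fin.natAdd n x = Fin.last n := by
      intro x; ext; simp [Subsingleton.elim x 0]
    have hc : ∀ x : Fin n, Fin.castAdd 1 x = x.castSucc := fun x => rfl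
    rcases a with a | a <;> rcases b with b | b
    · simp; rfl
    · simp [hl, hc, h1]
    · simp [hl, hc, h2]
    · simp [hl, h3, Subsingleton.elim a b]
  refine ⟨⟨g.1.submatrix Fin.castSucc Fin.castSucc, ?_⟩, Subtype.ext key⟩
  have := g.2
  rw [key] at this
  simpa using this

/-- Under the stable range condition `SL(n+1,R) = E(n+1,R) · SL(n,R) · E(n+1,R)` for `n ≥ 2`. -/
lemma exists_reduce (hf : FinMax R) (hn : 2 ≤ n) (g : SpecialLinearGroup (Fin (n + 1)) R) :
    ∃ e ∈ ElementarySubgroup (n + 1) R, ∃ e' ∈ ElementarySubgroup (n + 1) R, ∃ A,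
      e * g * e' = emb A := by
  classical
  set l := Fin.last n
  have hinv : ∑ j, g.1 l j * (g⁻¹).1 j l = 1 := by
    have : (g * g⁻¹).1 l l = 1 := by rw [mul_inv_cancel]; simp
    exact this
  obtain ⟨t, c, htc⟩ := stable_range hf l (by
    intro i
    by_contra! hcon
    have h0 : (Finset.univ : Finset (Fin (n + 1))) ⊆ {i, l} := by
      intro j _
      by_cases hj : j = i
      · simp [hj]
      · simp [hcon j hj]
    have := Finset.card_le_card h0
    have := Finset.card_le_two (a := i) (b := l)
    simp at *
    omega) (g.1 l) (fun j => (g⁻¹).1 j l) hinv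
  have hl : l ∉ Finset.univ.erase l := by simp
  obtain ⟨e1, he1, h1⟩ := exists_col_op l t g _ hl
  obtain ⟨e2, he2, h2⟩ := exists_col_op' l (fun k => (1 - g.1 l l) * c k) (g * e1) _ hl
  obtain ⟨e3, he3, h3⟩ := exists_col_op l (fun k => - (g * e1 * e2).1 l k) (g * e1 * e2) _ hl
  have hll : (g * e1 * e2).1 l l = 1 := by
    rw [h2, if_pos rfl]
    have : ∑ k ∈ Finset.univ.erase l, (1 - g.1 l l) * c k * (g * e1).1 l k = (1 - g.1 l l) := by
      refine Eq.trans ?_ ((congrArg (fun x => (1 - g.1 l l) * x) htc).trans (mul_one _))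
      simp only [Finset.mul_sum]
      refine Finset.sum_congr rfl fun k hk => ?_
      rw [h1, if_pos hk, mul_assoc]
    rw [this, h1, if_neg hl]; ring
  have hll3 : (g * e1 * e2 * e3).1 l l = 1 := by rw [h3, if_neg hl, hll, add_zero]
  have hlj : ∀ j, j ≠ l → (g * e1 * e2 * e3).1 l j = 0 := by
    intro j hj
    rw [h3, if_pos (by simp [hj]), hll]; ring
  obtain ⟨e4, he4, h4⟩ := exists_row_op l (fun k => - (g * e1 * e2 * e3).1 k l)
    (g * e1 * e2 * e3) _ hl
  obtain ⟨A, hA⟩ := exists_emb_eq (e4 * (g * e1 * e2 * e3))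
    (by
      intro i
      rw [h4, if_pos (by simp [l, Fin.castSucc_ne_last]), hll3]; ring)
    (by
      intro i
      rw [h4, if_neg hl, hlj _ (Fin.castSucc_ne_last i), add_zero])
    (by rw [h4, if_neg hl, add_zero]; exact hll3)
  exact ⟨e4, he4, e1 * e2 * e3, mul_mem (mul_mem he1 he2) he3, A, by rw [← hA]; simp [mul_assoc]⟩

lemma elementary_succ (hf : FinMax R) (hn : 2 ≤ n)
    (h : ∀ A : SpecialLinearGroup (Fin n) R, emb A ∈ ElementarySubgroup (n + 1) R) :
    ElementarySubgroup (n + 1) R = ⊤ := by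
  refine eq_top_iff.2 fun g _ => ?_
  obtain ⟨e, he, e', he', A, hA⟩ := exists_reduce hf hn g
  have : g = e⁻¹ * emb A * e'⁻¹ := by rw [← hA]; group
  rw [this]
  exact mul_mem (mul_mem (inv_mem he) (h A)) (inv_mem he')

lemma elementary_of_three (hf : FinMax R)
    (h : ∀ A : SpecialLinearGroup (Fin 2) R, emb A ∈ ElementarySubgroup 3 R) (hn : 3 ≤ n) :
    ElementarySubgroup n R = ⊤ := by
  induction n, hn using Nat.le_induction with
  | base => exact elementary_succ hf le_rfl h
  | succ n hn ih =>
    exact elementary_succ hf (by omega) fun A => emb_mem (ih ▸ Subgroup.mem_top A)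

end Elem
end SKOne

namespace SKOne
open Matrix

/-! ### Mennicke relations in `SL₃` modulo `E₃` -/

section Three
variable {R : Type} [CommRing R]

/-- Abbreviation for `3 × 3` transvections with the side condition discharged by `decide`. -/
abbrev e3 (i j : Fin 3) (r : R) (h : i ≠ j := by decide) : SpecialLinearGroup (Fin 3) R :=
  elem i j h r

lemma val_mul {n : ℕ} (A B : SpecialLinearGroup (Fin n) R) : (A * B).1 = A.1 * B.1 := rfl

lemma row_mul (A B : SpecialLinearGroup (Fin 2) R) (i j : Fin 2) :
    (A * B).1 i j = A.1 i 0 * B.1 0 j + A.1 i 1 * B.1 1 j := by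
  rw [val_mul, Matrix.mul_apply, Fin.sum_univ_two]

lemma emb_val (A : SpecialLinearGroup (Fin 2) R) :
    (emb A).1 = !![A.1 0 0, A.1 0 1, 0; A.1 1 0, A.1 1 1, 0; 0, 0, 1] := by
  ext a b
  fin_cases a <;> fin_cases b <;> rfl

lemma det2 (A : SpecialLinearGroup (Fin 2) R) : A.1 0 0 * A.1 1 1 - A.1 0 1 * A.1 1 0 = 1 := by
  rw [← det_fin_two]; exact A.2

lemma e01_val (r : R) : (e3 0 1 r).1 = !![1, r, 0; 0, 1, 0; 0, 0, 1] := by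
  ext a b; fin_cases a <;> fin_cases b <;> simp [elem, transvection, single]
lemma e02_val (r : R) : (e3 0 2 r).1 = !![1, 0, r; 0, 1, 0; 0, 0, 1] := by
  ext a b; fin_cases a <;> fin_cases b <;> simp [elem, transvection, single]
lemma e10_val (r : R) : (e3 1 0 r).1 = !![1, 0, 0; r, 1, 0; 0, 0, 1] := by
  ext a b; fin_cases a <;> fin_cases b <;> simp [elem, transvection, single]
lemma e12_val (r : R) : (e3 1 2 r).1 = !![1, 0, 0; 0, 1, r; 0, 0, 1] := by
  ext a b; fin_cases a <;> fin_cases b <;> simp [elem, transvection, single]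
lemma e20_val (r : R) : (e3 2 0 r).1 = !![1, 0, 0; 0, 1, 0; r, 0, 1] := by
  ext a b; fin_cases a <;> fin_cases b <;> simp [elem, transvection, single]
lemma e21_val (r : R) : (e3 2 1 r).1 = !![1, 0, 0; 0, 1, 0; 0, r, 1] := by
  ext a b; fin_cases a <;> fin_cases b <;> simp [elem, transvection, single]

lemma conj02 (A : SpecialLinearGroup (Fin 2) R) (r : R) :
    emb A * e3 0 2 r = e3 0 2 (A.1 0 0 * r) * e3 1 2 (A.1 1 0 * r) * emb A := by
  apply Subtype.ext
  simp only [val_mul, emb_val, e02_val, e12_val]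
  ext a b; fin_cases a <;> fin_cases b <;> simp [Matrix.mul_apply, Fin.sum_univ_three]

lemma conj12 (A : SpecialLinearGroup (Fin 2) R) (r : R) :
    emb A * e3 1 2 r = e3 0 2 (A.1 0 1 * r) * e3 1 2 (A.1 1 1 * r) * emb A := by
  apply Subtype.ext
  simp only [val_mul, emb_val, e02_val, e12_val]
  ext a b; fin_cases a <;> fin_cases b <;> simp [Matrix.mul_apply, Fin.sum_univ_three]

lemma conj20 (A : SpecialLinearGroup (Fin 2) R) (r : R) :
    emb A * e3 2 0 r = e3 2 0 (A.1 1 1 * r) * e3 2 1 (- A.1 0 1 * r) * emb A := by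
  apply Subtype.ext
  have h := det2 A
  simp only [val_mul, emb_val, e20_val, e21_val]
  ext a b; fin_cases a <;> fin_cases b <;> simp [Matrix.mul_apply, Fin.sum_univ_three]
  · linear_combination -r * h
  · ring

lemma conj21 (A : SpecialLinearGroup (Fin 2) R) (r : R) :
    emb A * e3 2 1 r = e3 2 0 (- A.1 1 0 * r) * e3 2 1 (A.1 0 0 * r) * emb A := by
  apply Subtype.ext
  have h := det2 A
  simp only [val_mul, emb_val, e20_val, e21_val]
  ext a b; fin_cases a <;> fin_cases b <;> simp [Matrix.mul_apply, Fin.sum_univ_three]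
  · ring
  · linear_combination -r * h

lemma comm01 (r : R) : e3 0 1 r * (e3 2 1 1 * e3 0 2 r) = e3 0 2 r * e3 2 1 1 := by
  apply Subtype.ext
  simp only [val_mul, e01_val, e02_val, e21_val]
  ext a b; fin_cases a <;> fin_cases b <;> simp [Matrix.mul_apply, Fin.sum_univ_three]

lemma comm10 (r : R) : e3 1 0 r * (e3 2 0 1 * e3 1 2 r) = e3 1 2 r * e3 2 0 1 := by
  apply Subtype.ext
  simp only [val_mul, e10_val, e12_val, e20_val]
  ext a b; fin_cases a <;> fin_cases b <;> simp [Matrix.mul_apply, Fin.sum_univ_three]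

/-- The four families of transvections involving the last coordinate generate `E(3,R)`. -/
lemma elementary_three_le (H : Subgroup (SpecialLinearGroup (Fin 3) R))
    (h02 : ∀ r, e3 0 2 r ∈ H) (h12 : ∀ r, e3 1 2 r ∈ H)
    (h20 : ∀ r, e3 2 0 r ∈ H) (h21 : ∀ r, e3 2 1 r ∈ H) : ElementarySubgroup 3 R ≤ H := by
  refine (Subgroup.closure_le _).2 ?_
  rintro g ⟨i, j, r, h, hg⟩
  have hg' : g = elem i j h r := Subtype.ext hg
  rw [hg']
  have h01 : e3 0 1 r ∈ H := by
    rw [eq_mul_inv_of_mul_eq (comm01 r)]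
    exact mul_mem (mul_mem (h02 _) (h21 _)) (inv_mem (mul_mem (h21 _) (h02 _)))
  have h10 : e3 1 0 r ∈ H := by
    rw [eq_mul_inv_of_mul_eq (comm10 r)]
    exact mul_mem (mul_mem (h12 _) (h20 _)) (inv_mem (mul_mem (h20 _) (h12 _)))
  fin_cases i <;> fin_cases j <;> simp at h
  exacts [h01, h02 r, h10, h12 r, h20 r, h21 r]

lemma emb_conj_mem (A : SpecialLinearGroup (Fin 2) R) {x : SpecialLinearGroup (Fin 3) R}
    (hx : x ∈ ElementarySubgroup 3 R) :
    emb A * x * (emb A)⁻¹ ∈ ElementarySubgroup 3 R := by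
  have : ElementarySubgroup 3 R ≤
      (ElementarySubgroup 3 R).comap (MulAut.conj (emb A)).toMonoidHom := by
    apply elementary_three_le <;> intro r <;>
      simp only [Subgroup.mem_comap, MulEquiv.coe_toMonoidHom, MulAut.conj_apply]
    · rw [conj02, mul_inv_cancel_right]; exact mul_mem (elem_mem _ _ _ _) (elem_mem _ _ _ _)
    · rw [conj12, mul_inv_cancel_right]; exact mul_mem (elem_mem _ _ _ _) (elem_mem _ _ _ _)
    · rw [conj20, mul_inv_cancel_right]; exact mul_mem (elem_mem _ _ _ _) (elem_mem _ _ _ _)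
    · rw [conj21, mul_inv_cancel_right]; exact mul_mem (elem_mem _ _ _ _) (elem_mem _ _ _ _)
  exact this hx

lemma elementary_normal (hf : FinMax R) : (ElementarySubgroup 3 R).Normal := by
  refine ⟨fun x hx g => ?_⟩
  obtain ⟨e, he, e', he', A, hA⟩ := exists_reduce hf le_rfl g
  have : g * x * g⁻¹ = e⁻¹ * (emb A * (e'⁻¹ * x * e') * (emb A)⁻¹) * e := by
    rw [← hA]; group
  rw [this]
  exact mul_mem (mul_mem (inv_mem he) (emb_conj_mem A (mul_mem (mul_mem (inv_mem he') hx) he'))) he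

end Three

section Symbol
variable {R : Type} [CommRing R] {G : Type*} [Group G]

/-- A matrix in `SL(2,R)` with a given coprime first row. -/
lemma exists_row {a b : R} (h : IsCoprime a b) :
    ∃ A : SpecialLinearGroup (Fin 2) R, A.1 0 0 = a ∧ A.1 0 1 = b := by
  obtain ⟨u, v, h⟩ := h
  refine ⟨⟨!![a, b; -v, u], ?_⟩, rfl, rfl⟩
  rw [det_fin_two_of]; linear_combination h

lemma coprime_row (A : SpecialLinearGroup (Fin 2) R) : IsCoprime (A.1 0 0) (A.1 0 1) :=
  ⟨A.1 1 1, -A.1 1 0, by linear_combination det2 A⟩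

variable (f : SpecialLinearGroup (Fin 3) R →* G) (hf : ∀ x ∈ ElementarySubgroup 3 R, f x = 1)

include hf

lemma f_row_eq {A B : SpecialLinearGroup (Fin 2) R} (h0 : A.1 0 0 = B.1 0 0)
    (h1 : A.1 0 1 = B.1 0 1) : f (emb A) = f (emb B) := by
  have : emb A = e3 1 0 (A.1 1 0 * B.1 1 1 - A.1 1 1 * B.1 1 0) * emb B := by
    apply Subtype.ext
    have hA := det2 A
    have hB := det2 B
    simp only [val_mul, emb_val, e10_val]
    ext a b; fin_cases a <;> fin_cases b <;> simp [Matrix.mul_apply, Fin.sum_univ_three, h0, h1]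
    · rw [h0, h1] at hA
      linear_combination B.1 1 0 * hA - A.1 1 0 * hB
    · rw [h0, h1] at hA
      linear_combination B.1 1 1 * hA - A.1 1 1 * hB
  rw [this, map_mul, hf _ (elem_mem _ _ _ _), one_mul]

lemma f_add_right {A B : SpecialLinearGroup (Fin 2) R} (t : R) (h0 : B.1 0 0 = A.1 0 0)
    (h1 : B.1 0 1 = A.1 0 1 + t * A.1 0 0) : f (emb B) = f (emb A) := by
  let U : SpecialLinearGroup (Fin 2) R := ⟨!![1, t; 0, 1], by simp⟩
  have h2 : emb U = e3 0 1 t := by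
    apply Subtype.ext; rw [emb_val, e01_val]; simp [U]
  rw [f_row_eq f hf (A := B) (B := A * U), map_mul, map_mul, h2, hf _ (elem_mem _ _ _ _), mul_one]
  · rw [h0]; rw [row_mul]; simp [U]
  · rw [h1]; rw [row_mul]; simp [U]; ring

lemma f_add_left {A B : SpecialLinearGroup (Fin 2) R} (t : R)
    (h0 : B.1 0 0 = A.1 0 0 + t * A.1 0 1) (h1 : B.1 0 1 = A.1 0 1) : f (emb B) = f (emb A) := by
  let U : SpecialLinearGroup (Fin 2) R := ⟨!![1, 0; t, 1], by simp⟩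
  have h2 : emb U = e3 1 0 t := by
    apply Subtype.ext; rw [emb_val, e10_val]; simp [U]
  rw [f_row_eq f hf (A := B) (B := A * U), map_mul, map_mul, h2, hf _ (elem_mem _ _ _ _), mul_one]
  · rw [h0]; rw [row_mul]; simp [U]; ring
  · rw [h1]; rw [row_mul]; simp [U]

lemma f_swap {A B : SpecialLinearGroup (Fin 2) R} (h0 : B.1 0 0 = -A.1 0 1)
    (h1 : B.1 0 1 = A.1 0 0) : f (emb B) = f (emb A) := by
  have hA := coprime_row A
  obtain ⟨A1, h10, h11⟩ := exists_row (a := A.1 0 0 - A.1 0 1) (b := A.1 0 1)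
    (by simpa [sub_eq_add_neg] using hA.add_mul_right_left (-1))
  obtain ⟨A2, h20, h21⟩ := exists_row (a := A.1 0 0 - A.1 0 1) (b := A.1 0 0)
    (by
      have := hA.symm.add_mul_right_left (-1)
      rw [← IsCoprime.neg_left_iff]
      convert this using 1; ring)
  rw [f_add_left f hf (A := A2) (B := B) (-1), f_add_right f hf (A := A1) (B := A2) 1,
    f_add_left f hf (A := A) (B := A1) (-1)]
  all_goals simp only [h0, h1, h10, h11, h20, h21]
  all_goals ring

lemma f_unit_right {A : SpecialLinearGroup (Fin 2) R} (h : A.1 0 1 = 1) : f (emb A) = 1 := by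
  obtain ⟨A1, h10, h11⟩ := exists_row (a := (0 : R)) (b := 1) isCoprime_one_right
  obtain ⟨A2, h20, h21⟩ := exists_row (a := (-1 : R)) (b := 0) (isCoprime_one_left.neg_left)
  obtain ⟨A3, h30, h31⟩ := exists_row (a := (0 : R)) (b := -1) (isCoprime_one_right.neg_right)
  rw [f_add_left f hf (A := A1) (B := A) (A.1 0 0) (by simp [h10, h11]) (by simp [h, h11]),
    ← f_swap f hf (A := A1) (B := A2) (by simp [h20, h11]) (by simp [h21, h10]),
    ← f_swap f hf (A := A2) (B := A3) (by simp [h30, h21]) (by simp [h31, h20]),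
    ← f_swap f hf (A := A3) (B := 1) (by simp [h31]) (by simp [h30]), map_one, map_one]

/-- The embedding of `SL(2,R)` in the lower right corner has the same effect modulo elementary
matrices as the one in the upper left corner. -/
lemma f_lower (N : SpecialLinearGroup (Fin 2) R) (X : SpecialLinearGroup (Fin 3) R)
    (hX : X.1 = !![1, 0, 0; 0, N.1 0 0, N.1 0 1; 0, N.1 1 0, N.1 1 1]) :
    f X = f (emb N) := by
  -- `w` is the cyclic permutation matrix carrying one corner to the other
  let w : SpecialLinearGroup (Fin 3) R := ⟨!![0, 1, 0; 0, 0, 1; 1, 0, 0], by simp [det_fin_three]⟩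
  have hw : w = (e3 1 2 1 * e3 2 1 (-1) * e3 1 2 1) * (e3 0 1 1 * e3 1 0 (-1) * e3 0 1 1) := by
    apply Subtype.ext
    simp only [val_mul, e01_val, e10_val, e12_val, e21_val, w]
    ext a b; fin_cases a <;> fin_cases b <;> simp [Matrix.mul_apply, Fin.sum_univ_three]
  have hw1 : f w = 1 := by
    apply hf
    rw [hw]
    refine mul_mem (mul_mem (mul_mem ?_ ?_) ?_) (mul_mem (mul_mem ?_ ?_) ?_) <;>
      exact elem_mem _ _ _ _
  have : w * X = emb N * w := by
    apply Subtype.ext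
    rw [val_mul, val_mul, hX, emb_val, show w.1 = !![0, 1, 0; 0, 0, 1; 1, 0, 0] from rfl]
    ext a b; fin_cases a <;> fin_cases b <;> simp [Matrix.mul_apply, Fin.sum_univ_three]
  have h2 := congrArg f this
  rwa [map_mul, map_mul, hw1, one_mul, mul_one] at h2

/-- In symbols, `[a, -(b₁ * b₂)] = [a, b₁] * [-b₂, a]`: the source of multiplicativity. -/
lemma f_mul_aux {A1 A2 B N : SpecialLinearGroup (Fin 2) R} (h12 : A1.1 0 0 = A2.1 0 0)
    (hB0 : B.1 0 0 = A1.1 0 0) (hB1 : B.1 0 1 = - (A1.1 0 1 * A2.1 0 1))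
    (hN0 : N.1 0 0 = - A2.1 0 1) (hN1 : N.1 0 1 = A2.1 0 0) :
    f (emb B) = f (emb A1) * f (emb N) := by
  have d1 := det2 A1
  have d2 := det2 A2
  obtain ⟨a, ha⟩ : ∃ a, A1.1 0 0 = a := ⟨_, rfl⟩
  obtain ⟨b1, hb1⟩ : ∃ a, A1.1 0 1 = a := ⟨_, rfl⟩
  obtain ⟨c1, hc1⟩ : ∃ a, A1.1 1 0 = a := ⟨_, rfl⟩
  obtain ⟨d1', hd1⟩ : ∃ a, A1.1 1 1 = a := ⟨_, rfl⟩
  obtain ⟨b2, hb2⟩ : ∃ a, A2.1 0 1 = a := ⟨_, rfl⟩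
  obtain ⟨c2, hc2⟩ : ∃ a, A2.1 1 0 = a := ⟨_, rfl⟩
  obtain ⟨d2', hd2⟩ : ∃ a, A2.1 1 1 = a := ⟨_, rfl⟩
  rw [← h12] at d2 hN1
  simp only [ha, hb1, hc1, hd1, hb2, hc2, hd2] at d1 d2 hB0 hB1 hN0 hN1
  let N' : SpecialLinearGroup (Fin 2) R := ⟨!![-b2, a; -d2', c2], by
    rw [det_fin_two_of]; linear_combination d2⟩
  let X : SpecialLinearGroup (Fin 3) R := ⟨!![1, 0, 0; 0, -b2, a; 0, -d2', c2], by
    simp [det_fin_three]; linear_combination d2⟩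
  let B' : SpecialLinearGroup (Fin 2) R := ⟨!![a, -(b1 * b2); c1 * c2, d2' - b2 * c2 * d1'], by
    rw [det_fin_two_of]; linear_combination d2 - b2 * c2 * d1⟩
  have hX : f X = f (emb N') := f_lower f hf N' X (by simp [X, N'])
  rw [f_row_eq f hf (A := N) (B := N') (by simp [hN0, N']) (by simp [hN1, N']),
    f_row_eq f hf (A := B) (B := B') (by simp [hB0, B']) (by simp [B', hB1])]
  -- the product of the two corner matrices becomes the corner matrix `B'` after elementary
  -- row and column operations and a signed swap of the last two rows
  have k1 : (emb A1).1 * X.1 * (e3 0 2 (-b1)).1 =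
      !![a, -(b1 * b2), 0; c1, -(d1' * b2), 1; 0, -d2', c2] := by
    rw [emb_val, e02_val, ha, hb1, hc1, hd1, show X.1 = _ from rfl, mul_fin_three, mul_fin_three]
    ext i j; fin_cases i <;> fin_cases j <;> simp
    all_goals first | ring1 | linear_combination d1
  have k2 : (e3 2 1 (-c2)).1 * !![a, -(b1 * b2), 0; c1, -(d1' * b2), 1; 0, -d2', c2] =
      !![a, -(b1 * b2), 0; c1, -(d1' * b2), 1; -(c1 * c2), -d2' + c2 * d1' * b2, 0] := by
    rw [e21_val, mul_fin_three]
    ext i j; fin_cases i <;> fin_cases j <;> simp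
    all_goals ring
  have k3 : !![a, -(b1 * b2), 0; c1, -(d1' * b2), 1; -(c1 * c2), -d2' + c2 * d1' * b2, 0] *
      ((e3 2 0 (-c1)).1 * (e3 2 1 (d1' * b2)).1) =
      !![a, -(b1 * b2), 0; 0, 0, 1; -(c1 * c2), -d2' + c2 * d1' * b2, 0] := by
    rw [e20_val, e21_val, mul_fin_three, mul_fin_three]
    ext i j; fin_cases i <;> fin_cases j <;> simp
  have k4 : (e3 1 2 (-1)).1 * (e3 2 1 1).1 * (e3 1 2 (-1)).1 *
      !![a, -(b1 * b2), 0; 0, 0, 1; -(c1 * c2), -d2' + c2 * d1' * b2, 0] = (emb B').1 := by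
    rw [emb_val, e12_val, e21_val, mul_fin_three, mul_fin_three, mul_fin_three]
    ext i j; fin_cases i <;> fin_cases j <;> simp [B']
    all_goals ring
  have key : (e3 1 2 (-1) * e3 2 1 1 * e3 1 2 (-1)) * (e3 2 1 (-c2) *
      (emb A1 * X * e3 0 2 (-b1)) * (e3 2 0 (-c1) * e3 2 1 (d1' * b2))) = emb B' := by
    apply Subtype.ext
    simp only [val_mul]
    rw [k1, k2, k3, k4]
  have h2 := congrArg f key
  simp only [map_mul, hf _ (elem_mem _ _ _ _), one_mul, mul_one] at h2
  rw [← h2, hX]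

end Symbol
end SKOne

namespace SKOne
open Matrix

/-! ### Mennicke symbols -/

/-- An abstract Mennicke symbol on the coprime pairs of a commutative ring `O` (the value at
non-coprime pairs is irrelevant). -/
structure Symb (O : Type) [CommRing O] (G : Type) [Group G] where
  m : O → O → G
  add : ∀ {a b : O} (t : O), IsCoprime a b → m a (b + t * a) = m a b
  symm : ∀ {a b : O}, IsCoprime a b → m a b = m b a
  mul : ∀ {a b c : O}, IsCoprime a b → IsCoprime a c → m a (b * c) = m a b * m a c

lemma isCoprime_of_isUnit {O : Type} [CommRing O] {u : O} (hu : IsUnit u) (a : O) :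
    IsCoprime u a := by
  obtain ⟨v, hv⟩ := hu.exists_left_inv
  exact ⟨v, 0, by rw [hv]; ring⟩

namespace Symb
variable {O : Type} [CommRing O] {G : Type} [Group G] (S : Symb O G)

lemma one_right (a : O) : S.m a 1 = 1 := by
  have := S.mul (isCoprime_one_right (x := a)) isCoprime_one_right
  rw [mul_one] at this
  exact left_eq_mul.mp this

lemma congr_right {a b c : O} (h : IsCoprime a b) (hd : a ∣ c - b) : S.m a c = S.m a b := by
  obtain ⟨t, ht⟩ := hd
  rw [← S.add t h]; congr 1; linear_combination ht

lemma unit_left {a u : O} (hu : IsUnit u) : S.m u a = 1 := by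
  rw [← S.one_right u]
  exact S.congr_right isCoprime_one_right (hu.dvd)

lemma unit_right {a u : O} (hu : IsUnit u) : S.m a u = 1 := by
  rw [S.symm (isCoprime_of_isUnit hu a).symm, S.unit_left hu]

lemma mul_left {a b c : O} (hb : IsCoprime b a) (hc : IsCoprime c a) :
    S.m (b * c) a = S.m b a * S.m c a := by
  rw [S.symm (hb.mul_left hc), S.mul hb.symm hc.symm, S.symm hb, S.symm hc]

lemma pow_right {a b : O} (h : IsCoprime a b) (k : ℕ) : S.m a (b ^ k) = S.m a b ^ k := by
  induction k with
  | zero => simp [S.one_right]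
  | succ k ih => rw [pow_succ, pow_succ, S.mul h.pow_right h, ih]

end Symb

section FromSL
variable {R : Type} [CommRing R] {G : Type} [Group G]
  (f : SpecialLinearGroup (Fin 3) R →* G) (hf : ∀ x ∈ ElementarySubgroup 3 R, f x = 1)

open Classical in
/-- The value of `f` on (the stabilization of) any matrix with first row `(a, b)`. -/
noncomputable def rowVal (a b : R) : G :=
  if h : IsCoprime a b then f (emb (exists_row h).choose) else 1

include hf in
lemma rowVal_eq (A : SpecialLinearGroup (Fin 2) R) : rowVal f (A.1 0 0) (A.1 0 1) = f (emb A) := by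
  rw [rowVal, dif_pos (coprime_row A)]
  exact f_row_eq f hf (exists_row (coprime_row A)).choose_spec.1
    (exists_row (coprime_row A)).choose_spec.2

include hf in
lemma rowVal_neg_mul {a b c : R} (hb : IsCoprime a b) (hc : IsCoprime a c) :
    rowVal f a (-(b * c)) = rowVal f a b * rowVal f a c := by
  obtain ⟨A1, h1, h1'⟩ := exists_row hb
  obtain ⟨A2, h2, h2'⟩ := exists_row hc
  obtain ⟨B, h3, h3'⟩ := exists_row (hb.mul_right hc).neg_right
  obtain ⟨N, h4, h4'⟩ := exists_row hc.symm.neg_left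
  have e1 := rowVal_eq f hf A1
  have e2 := rowVal_eq f hf A2
  have e3 := rowVal_eq f hf B
  rw [h1, h1'] at e1
  rw [h2, h2'] at e2
  rw [h3, h3'] at e3
  rw [e1, e2, e3, f_mul_aux f hf (A1 := A1) (A2 := A2) (B := B) (N := N) (by rw [h1, h2])
    (by rw [h1, h3]) (by rw [h3', h1', h2']) (by rw [h4, h2']) (by rw [h4', h2]),
    f_swap f hf (A := A2) (B := N) (by rw [h4, h2']) (by rw [h4', h2])]

include hf in
lemma rowVal_one (a : R) : rowVal f a 1 = 1 := by
  obtain ⟨A, h1, h1'⟩ := exists_row (isCoprime_one_right (x := a))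
  have e1 := rowVal_eq f hf A
  rw [h1, h1'] at e1
  rw [e1, f_unit_right f hf h1']

include hf in
lemma rowVal_neg {a b : R} (hb : IsCoprime a b) : rowVal f a (-b) = rowVal f a b := by
  have := rowVal_neg_mul f hf hb isCoprime_one_right
  rwa [mul_one, rowVal_one f hf, mul_one] at this

include hf in
lemma rowVal_swap {a b : R} (h : IsCoprime a b) : rowVal f a b = rowVal f b a := by
  obtain ⟨A, h1, h1'⟩ := exists_row h.neg_right
  obtain ⟨B, h2, h2'⟩ := exists_row h.symm
  have e1 := rowVal_eq f hf A
  have e2 := rowVal_eq f hf B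
  rw [h1, h1'] at e1
  rw [h2, h2'] at e2
  rw [← rowVal_neg f hf h, e1, e2]
  exact (f_swap f hf (by rw [h2, h1', neg_neg]) (by rw [h2', h1])).symm

/-- The Mennicke symbol attached to a homomorphism from `SL(3,R)` killing `E(3,R)`. -/
noncomputable def symbOf : Symb R G where
  m := rowVal f
  add := by
    intro a b t h
    obtain ⟨A, h1, h1'⟩ := exists_row h
    obtain ⟨B, h2, h2'⟩ := exists_row (a := a) (b := b + t * a) (h.add_mul_right_right t)
    have e1 := rowVal_eq f hf A
    have e2 := rowVal_eq f hf B
    rw [h1, h1'] at e1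
    rw [h2, h2'] at e2
    rw [e1, e2]
    exact f_add_right f hf t (by rw [h2, h1]) (by rw [h2', h1', h1])
  symm := rowVal_swap f hf
  mul := by
    intro a b c hb hc
    rw [← rowVal_neg f hf (hb.mul_right hc), rowVal_neg_mul f hf hb hc]

lemma symbOf_m (A : SpecialLinearGroup (Fin 2) R) :
    (symbOf f hf).m (A.1 0 0) (A.1 0 1) = f (emb A) := rowVal_eq f hf A

end FromSL

lemma exists_crt {R : Type} [CommRing R] {a c : R} (h : IsCoprime a c) (b d : R) :
    ∃ x, a ∣ x - b ∧ c ∣ x - d := by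
  obtain ⟨u, v, h⟩ := h
  refine ⟨b * (v * c) + d * (u * a), ⟨u * (d - b), ?_⟩, ⟨v * (b - d), ?_⟩⟩
  · linear_combination b * h
  · linear_combination d * h

lemma isCoprime_of_dvd_sub {R : Type} [CommRing R] {a b x : R} (h : IsCoprime a b)
    (hd : a ∣ x - b) : IsCoprime a x := by
  obtain ⟨t, ht⟩ := hd
  rw [show x = b + a * t by linear_combination ht]
  exact h.add_mul_left_right t

lemma Symb.commute {R : Type} [CommRing R] [IsDomain R] {G : Type} [Group G] (S : Symb R G)
    (hF : FinMax R) {a b c d : R} (hab : IsCoprime a b) (hcd : IsCoprime c d) :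
    S.m a b * S.m c d = S.m c d * S.m a b := by
  by_cases hc : c = 0
  · subst hc
    have hu : IsUnit d := isCoprime_zero_left.1 hcd
    rw [S.unit_right hu]; simp
  obtain ⟨t, ht⟩ := exists_coprime_add hF hab hc
  have hab' : IsCoprime (a + t * b) b := hab.add_mul_right_left t
  have h1 : S.m a b = S.m (a + t * b) b := by
    rw [S.symm hab', S.add t hab.symm, S.symm hab]
  rw [h1]
  set a' := a + t * b
  -- both symbols are of the form `m (a' * c) _`
  obtain ⟨x, hx1, hx2⟩ := exists_crt ht b 1
  obtain ⟨y, hy1, hy2⟩ := exists_crt ht 1 d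
  have cx1 := isCoprime_of_dvd_sub hab' hx1
  have cx2 := isCoprime_of_dvd_sub isCoprime_one_right hx2
  have cy1 := isCoprime_of_dvd_sub isCoprime_one_right hy1
  have cy2 := isCoprime_of_dvd_sub hcd hy2
  have e1 : S.m (a' * c) x = S.m a' b := by
    rw [S.mul_left cx1 cx2, S.congr_right hab' hx1, S.congr_right isCoprime_one_right hx2,
      S.one_right, mul_one]
  have e2 : S.m (a' * c) y = S.m c d := by
    rw [S.mul_left cy1 cy2, S.congr_right hcd hy2, S.congr_right isCoprime_one_right hy1,
      S.one_right, one_mul]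
  rw [← e1, ← e2, ← S.mul (cx1.mul_left cx2) (cy1.mul_left cy2), mul_comm x y,
    S.mul (cy1.mul_left cy2) (cx1.mul_left cx2)]

/-- All proper quotients by principal ideals are finite. -/
def FinQuot (R : Type) [CommRing R] : Prop := ∀ c : R, c ≠ 0 → Finite (R ⧸ Ideal.span {c})

lemma FinQuot.finMax {R : Type} [CommRing R] (h : FinQuot R) : FinMax R := by
  intro c hc
  have := h c hc
  have h2 : Finite (Ideal (R ⧸ Ideal.span {c})) := inferInstance
  refine Set.Finite.of_finite_image (f := Ideal.map (Ideal.Quotient.mk (Ideal.span {c})))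
    (Set.toFinite _) ?_
  rintro P ⟨_, hP⟩ Q ⟨_, hQ⟩ hPQ
  have key : ∀ P : Ideal R, c ∈ P →
      Ideal.comap (Ideal.Quotient.mk (Ideal.span {c}))
        (Ideal.map (Ideal.Quotient.mk (Ideal.span {c})) P) = P := by
    intro P hP
    rw [Ideal.comap_map_of_surjective _ Ideal.Quotient.mk_surjective, sup_eq_left]
    intro x hx
    rw [Ideal.mem_comap, Ideal.mem_bot, Ideal.Quotient.eq_zero_iff_mem] at hx
    exact (Ideal.span_singleton_le_iff_mem P).2 hP hx
  rw [← key P hP, ← key Q hQ]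
  exact congrArg _ hPQ

lemma FinQuot.exists_pow {R : Type} [CommRing R] (h : FinQuot R) {a b : R} (ha : a ≠ 0)
    (hab : IsCoprime a b) : ∃ k : ℕ, 0 < k ∧ a ∣ b ^ k - 1 := by
  have := h a ha
  have hu : IsUnit (Ideal.Quotient.mk (Ideal.span {a}) b) := by
    obtain ⟨u, v, huv⟩ := hab
    refine IsUnit.of_mul_eq_one (Ideal.Quotient.mk _ v) ?_
    rw [← map_mul, ← map_one (Ideal.Quotient.mk _), Ideal.Quotient.mk_eq_mk_iff_sub_mem,
      Ideal.mem_span_singleton]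
    exact ⟨-u, by linear_combination huv⟩
  obtain ⟨u, hu⟩ := hu
  obtain ⟨k, hk, hk'⟩ := (isOfFinOrder_of_finite u).exists_pow_eq_one
  refine ⟨k, hk, ?_⟩
  rw [← Ideal.mem_span_singleton, ← Ideal.Quotient.mk_eq_mk_iff_sub_mem, map_pow, ← hu,
    ← Units.val_pow_eq_pow_val, hk', map_one, Units.val_one]

lemma Symb.torsion {R : Type} [CommRing R] {G : Type} [Group G] (S : Symb R G)
    (h : FinQuot R) {a b : R} (hab : IsCoprime a b) : ∃ k : ℕ, 0 < k ∧ S.m a b ^ k = 1 := by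
  by_cases ha : a = 0
  · subst ha
    exact ⟨1, one_pos, by rw [S.unit_right (isCoprime_zero_left.1 hab), one_pow]⟩
  obtain ⟨k, hk, hk'⟩ := h.exists_pow ha hab
  exact ⟨k, hk, by rw [← S.pow_right hab, S.congr_right isCoprime_one_right hk', S.one_right]⟩

/-- Restriction of a symbol along a ring homomorphism. -/
def Symb.comap {O R : Type} [CommRing O] [CommRing R] {G : Type} [Group G] (S : Symb R G)
    (i : O →+* R) : Symb O G where
  m a b := S.m (i a) (i b)
  add t h := by rw [map_add, map_mul, S.add _ (h.map i)]
  symm h := S.symm (h.map i)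
  mul h h' := by rw [map_mul, S.mul (h.map i) (h'.map i)]

/-- Composition of a symbol with a group homomorphism. -/
def Symb.map {O : Type} [CommRing O] {G H : Type} [Group G] [Group H] (S : Symb O G)
    (φ : G →* H) : Symb O H where
  m a b := φ (S.m a b)
  add t h := by rw [S.add _ h]
  symm h := by rw [S.symm h]
  mul h h' := by rw [S.mul h h', map_mul]

/-- A symbol on a localization `R = O[1/s]` is trivial once its restriction to `O` is. -/
lemma Symb.trivial_of_comap {O R : Type} [CommRing O] [IsDomain O] [CommRing R] [IsDomain R]
    {G : Type} [Group G]
    (S : Symb R G) (i : O →+* R) (hi : Function.Injective i) (s : O) (hs : IsUnit (i s))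
    (hloc : ∀ r : R, ∃ (k : ℕ) (x : O), i s ^ k * r = i x) (hO : FinQuot O)
    (htriv : ∀ a b : O, IsCoprime a b → S.m (i a) (i b) = 1) (a b : R) (hab : IsCoprime a b) :
    S.m a b = 1 := by
  obtain ⟨k, a0, ha0⟩ := hloc a
  obtain ⟨l, b0, hb0⟩ := hloc b
  have us : ∀ k : ℕ, IsUnit (i s ^ k) := fun k => hs.pow k
  have cab : IsCoprime (i a0) (i b0) := by
    rw [← ha0, ← hb0]
    exact (isCoprime_mul_unit_left_left (us k) _ _).2
      ((isCoprime_mul_unit_left_right (us l) _ _).2 hab)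
  have e1 : S.m a b = S.m (i a0) (i b0) := by
    rw [← ha0, ← hb0]
    rw [S.mul_left (isCoprime_of_isUnit (us k) _), S.unit_left (us k), one_mul,
      S.mul (isCoprime_of_isUnit (us l) _).symm hab, S.unit_right (us l), one_mul]
    exact (isCoprime_mul_unit_left_right (us l) _ _).2 hab
  rw [e1]
  by_cases ha : a0 = 0
  · subst ha
    rw [map_zero] at cab ⊢
    exact S.unit_right (isCoprime_zero_left.1 cab)
  -- `J` is the contraction of the ideal generated by `a0` in the localization
  let J : Ideal O := Ideal.comap i (Ideal.span {i a0})
  have hJ : IsUnit (Ideal.Quotient.mk J s) := by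
    have hfin := hO a0 ha
    have hle : Ideal.span {a0} ≤ J := by
      rw [Ideal.span_singleton_le_iff_mem]
      exact Ideal.mem_comap.2 (Ideal.mem_span_singleton_self _)
    have : Finite (O ⧸ J) := Finite.of_surjective _ (Ideal.Quotient.factor_surjective hle)
    have hinj : Function.Injective (fun x : O ⧸ J => Ideal.Quotient.mk J s * x) := by
      intro x y hxy
      obtain ⟨x, rfl⟩ := Ideal.Quotient.mk_surjective x
      obtain ⟨y, rfl⟩ := Ideal.Quotient.mk_surjective y
      simp only [← map_mul] at hxy
      rw [Ideal.Quotient.mk_eq_mk_iff_sub_mem, ← mul_sub] at hxy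
      rw [Ideal.Quotient.mk_eq_mk_iff_sub_mem]
      rw [Ideal.mem_comap, Ideal.mem_span_singleton, map_mul] at hxy
      rw [Ideal.mem_comap, Ideal.mem_span_singleton]
      exact (hs.dvd_mul_left).1 hxy
    obtain ⟨w, hw⟩ := Finite.surjective_of_injective hinj 1
    exact IsUnit.of_mul_eq_one w hw
  obtain ⟨z, hz⟩ : ∃ z : O, s * z - 1 ∈ J := by
    obtain ⟨w, hw⟩ := hJ.exists_right_inv
    obtain ⟨z, rfl⟩ := Ideal.Quotient.mk_surjective w
    exact ⟨z, by rwa [← Ideal.Quotient.mk_eq_mk_iff_sub_mem, map_mul, map_one]⟩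
  have hx : i a0 ∣ i (b0 - (1 - b0) * (s * z - 1)) - i b0 := by
    have h1 : (-(1 - b0)) * (s * z - 1) ∈ J := J.mul_mem_left _ hz
    have := Ideal.mem_span_singleton.1 (Ideal.mem_comap.1 h1)
    rw [← map_sub]; convert this using 2; ring
  rw [← S.congr_right cab hx]
  set b' := b0 - (1 - b0) * (s * z - 1) with hb'
  have cab' : IsCoprime (i a0) (i b') := isCoprime_of_dvd_sub cab hx
  have hsb : IsCoprime s b' := ⟨(1 - b0) * z, 1, by rw [hb']; ring⟩
  refine htriv a0 b' ?_
  obtain ⟨u, v, huv⟩ := cab'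
  obtain ⟨k1, x1, hx1⟩ := hloc u
  obtain ⟨k2, x2, hx2⟩ := hloc v
  have : s ^ (k1 + k2) = s ^ k2 * x1 * a0 + s ^ k1 * x2 * b' := by
    apply hi
    simp only [map_add, map_mul, map_pow, ← hx1, ← hx2]
    linear_combination (-(i s) ^ (k1 + k2)) * huv
  obtain ⟨p, q, hpq⟩ := hsb.pow_left (m := k1 + k2)
  exact ⟨p * (s ^ k2 * x1), q + p * (s ^ k1 * x2), by linear_combination hpq - p * this⟩

end SKOne

namespace SKOne
open Matrix

/-! ### Reduction to symbols of prime power order -/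

/-- The homomorphism `q ↦ exp(2πiq)` from the rational numbers to `ℂˣ`. -/
noncomputable def expHom : ℚ →+ Additive ℂˣ where
  toFun q := Additive.ofMul (Units.mk0 (Complex.exp (2 * Real.pi * Complex.I * q)) (Complex.exp_ne_zero _))
  map_zero' := by
    rw [← ofMul_one]; congr 1; ext; simp
  map_add' x y := by
    rw [← ofMul_mul]; congr 1; ext; simp [mul_add, Complex.exp_add]

lemma expHom_eq_zero {q : ℚ} (h : expHom q = 0) : q ∈ AddSubgroup.zmultiples (1 : ℚ) := by
  have h1 : Complex.exp (2 * Real.pi * Complex.I * q) = 1 := congrArg (fun u => ((Additive.toMul u : ℂˣ) : ℂ)) h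
  rw [Complex.exp_eq_one_iff] at h1
  obtain ⟨n, hn⟩ := h1
  refine ⟨n, ?_⟩
  have : (q : ℂ) = n := by
    have h2 : (2 * Real.pi * Complex.I : ℂ) ≠ 0 := Complex.two_pi_I_ne_zero
    apply mul_left_cancel₀ h2; rw [hn]; ring
  have h3 : q = n := by exact_mod_cast this
  simp [h3]

/-- Characters separate the points of a commutative group. -/
lemma exists_char {Q : Type} [CommGroup Q] {x : Q} (hx : x ≠ 1) : ∃ χ : Q →* ℂˣ, χ x ≠ 1 := by
  have hx' : Additive.ofMul x ≠ 0 := by simpa using hx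
  obtain ⟨c, hc⟩ := CharacterModule.exists_character_apply_ne_zero_of_ne_zero hx'
  have hle : AddSubgroup.zmultiples (1 : ℚ) ≤ expHom.ker := by
    rw [AddSubgroup.zmultiples_le, AddMonoidHom.mem_ker]
    change Additive.ofMul _ = _
    rw [← ofMul_one]; congr 1; ext; simp [Complex.exp_two_pi_mul_I]
  let e : (ℚ ⧸ AddSubgroup.zmultiples (1 : ℚ)) →+ Additive ℂˣ :=
    QuotientAddGroup.lift _ expHom hle
  let c' : Additive Q →+ (ℚ ⧸ AddSubgroup.zmultiples (1 : ℚ)) := c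
  refine ⟨
    { toFun := fun q => Additive.toMul (e (c' (Additive.ofMul q)))
      map_one' := by simp
      map_mul' := by intro x y; simp }, ?_⟩
  intro h
  have h1 : e (c' (Additive.ofMul x)) = 0 := h
  obtain ⟨q, hq⟩ := QuotientAddGroup.mk_surjective (c' (Additive.ofMul x))
  rw [← hq] at h1
  have h2 := expHom_eq_zero (q := q) h1
  apply hc
  change c' (Additive.ofMul x) = 0
  rw [← hq]
  exact (QuotientAddGroup.eq_zero_iff q).2 h2

/-- Reduction of the equality `E(n,R) = SL(n,R)` to the triviality of all complex valued symbols of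
`ℓ`-power order. -/
theorem elementary_of_symb {R : Type} [CommRing R] [IsDomain R] (hR : FinQuot R)
    (h : ∀ ℓ : ℕ, ℓ.Prime → ∀ S : Symb R ℂˣ,
      (∀ a b, IsCoprime a b → ∃ k : ℕ, S.m a b ^ (ℓ ^ k) = 1) →
      ∀ a b, IsCoprime a b → S.m a b = 1) {n : ℕ} (hn : 3 ≤ n) :
    ElementarySubgroup n R = ⊤ := by
  refine elementary_of_three hR.finMax (fun A => ?_) hn
  have hN := elementary_normal hR.finMax
  let f := QuotientGroup.mk' (ElementarySubgroup 3 R)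
  have hf : ∀ x ∈ ElementarySubgroup 3 R, f x = 1 := fun x hx =>
    (QuotientGroup.eq_one_iff x).2 hx
  let S := symbOf f hf
  have hsurj : ∀ q : SpecialLinearGroup (Fin 3) R ⧸ ElementarySubgroup 3 R,
      ∃ a b, IsCoprime a b ∧ S.m a b = q := by
    intro q
    obtain ⟨g, rfl⟩ := QuotientGroup.mk'_surjective _ q
    obtain ⟨e, he, e', he', B, hB⟩ := exists_reduce hR.finMax le_rfl g
    refine ⟨_, _, coprime_row B, ?_⟩
    rw [symbOf_m, ← hB, map_mul, map_mul, hf e he, hf e' he', one_mul, mul_one]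
  let _ : CommGroup (SpecialLinearGroup (Fin 3) R ⧸ ElementarySubgroup 3 R) :=
    { (inferInstance : Group (SpecialLinearGroup (Fin 3) R ⧸ ElementarySubgroup 3 R)) with
      mul_comm := by
        intro x y
        obtain ⟨a, b, hab, rfl⟩ := hsurj x
        obtain ⟨c, d, hcd, rfl⟩ := hsurj y
        exact S.commute hR.finMax hab hcd }
  by_contra hA
  have hx : f (emb A) ≠ 1 := fun h => hA ((QuotientGroup.eq_one_iff _).1 h)
  have htors : ∀ q : SpecialLinearGroup (Fin 3) R ⧸ ElementarySubgroup 3 R, ∃ k, 0 < k ∧ q ^ k = 1 := by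
    intro q
    obtain ⟨a, b, hab, rfl⟩ := hsurj q
    exact S.torsion hR hab
  obtain ⟨k, hk, hk'⟩ := htors (f (emb A))
  have hord : orderOf (f (emb A)) ≠ 1 := by rwa [Ne, orderOf_eq_one_iff]
  obtain ⟨ℓ, hℓ, hdvd⟩ := Nat.exists_prime_and_dvd hord
  -- the elements of order prime to `ℓ`
  let H : Subgroup (SpecialLinearGroup (Fin 3) R ⧸ ElementarySubgroup 3 R) :=
    { carrier := {z | ∃ n : ℕ, n.Coprime ℓ ∧ z ^ n = 1}
      one_mem' := ⟨1, by simp, by simp⟩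
      mul_mem' := by
        rintro x y ⟨n, hn, hx⟩ ⟨m, hm, hy⟩
        refine ⟨n * m, Nat.Coprime.mul_left hn hm, ?_⟩
        rw [mul_pow, pow_mul, hx, mul_comm n m, pow_mul, hy, one_pow, one_pow, one_mul]
      inv_mem' := by
        rintro x ⟨n, hn, hx⟩
        exact ⟨n, hn, by rw [inv_pow, hx, inv_one]⟩ }
  have hxH : (QuotientGroup.mk' H) (f (emb A)) ≠ 1 := by
    intro h
    obtain ⟨n, hn, hn'⟩ := (QuotientGroup.eq_one_iff _).1 h
    exact hℓ.one_lt.ne' (Nat.dvd_one.1 (hn ▸ Nat.dvd_gcd (hdvd.trans (orderOf_dvd_of_pow_eq_one hn'))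
      dvd_rfl))
  obtain ⟨χ, hχ⟩ := exists_char hxH
  refine hχ ?_
  rw [← symbOf_m f hf A]
  refine h ℓ hℓ ((S.map (QuotientGroup.mk' H)).map χ) ?_ _ _ (coprime_row A)
  intro a b hab
  obtain ⟨j, hj, hj'⟩ := htors (S.m a b)
  obtain ⟨e, t, ht, rfl⟩ := Nat.exists_eq_pow_mul_and_not_dvd hj.ne' ℓ hℓ.ne_one
  refine ⟨e, ?_⟩
  change χ (QuotientGroup.mk' H (S.m a b)) ^ _ = 1
  have h1 : QuotientGroup.mk' H (S.m a b ^ ℓ ^ e) = 1 := (QuotientGroup.eq_one_iff _).2 ?_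
  · rw [← map_pow, ← map_pow, h1, map_one]
  exact ⟨t, (hℓ.coprime_iff_not_dvd.2 ht).symm, by rw [← pow_mul]; exact hj'⟩

end SKOne

namespace SKOne
open Ideal

/-! ### Extension of symbols to ideals -/

section IdealSymbol
variable {O : Type} [CommRing O] [IsDedekindDomain O] {G : Type} [CommGroup G] (S : Symb O G)

/-- Every nonzero ideal divides a nonzero principal ideal with cofactor prime to a given one. -/
lemma exists_gen (I J : Ideal O) (hI : I ≠ ⊥) (hJ : J ≠ ⊥) :
    ∃ (w : O) (W : Ideal O), w ≠ 0 ∧ span {w} = I * W ∧ W ⊔ J = ⊤ := by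
  by_cases hJt : J = ⊤
  · obtain ⟨w, hw, hw0⟩ := Submodule.exists_mem_ne_zero_of_ne_bot hI
    obtain ⟨W, hW⟩ := Ideal.dvd_iff_le.2 ((span_singleton_le_iff_mem I).2 hw)
    exact ⟨w, W, hw0, hW, by simp [hJt]⟩
  obtain ⟨w, hw⟩ := IsDedekindDomain.exists_sup_span_eq (I := I * J) (J := I)
    Ideal.mul_le_left (mul_ne_zero hI hJ)
  obtain ⟨W, hW⟩ := Ideal.dvd_iff_le.2 (le_sup_right.trans hw.le : span {w} ≤ I)
  refine ⟨w, W, ?_, hW, ?_⟩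
  · rintro rfl
    apply hJt
    have : I * J = I * ⊤ := by simpa using hw
    exact mul_left_cancel₀ hI this
  · rw [hW, ← Ideal.mul_sup] at hw
    have : I * (J ⊔ W) = I * ⊤ := by simpa using hw
    rw [sup_comm]; exact mul_left_cancel₀ hI this

lemma exists_ideal_crt {I J : Ideal O} (h : I ⊔ J = ⊤) (b d : O) :
    ∃ x, x - b ∈ I ∧ x - d ∈ J := by
  obtain ⟨u, hu, v, hv, huv⟩ := Submodule.mem_sup.1 (h ▸ Submodule.mem_top : (1 : O) ∈ I ⊔ J)
  refine ⟨b * v + d * u, ?_, ?_⟩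
  · convert I.mul_mem_left (d - b) hu using 1; linear_combination b * huv
  · convert J.mul_mem_left (b - d) hv using 1; linear_combination d * huv

/-- `(x, y)` computes the symbol of the ideal `I` at `b`: `x` generates `I * X` with `X` prime to
`I`, while `y` is `b` modulo `I` and `1` modulo `X`. -/
def Rep (I : Ideal O) (b x y : O) : Prop :=
  x ≠ 0 ∧ ∃ X : Ideal O, span {x} = I * X ∧ I ⊔ X = ⊤ ∧ y - b ∈ I ∧ y - 1 ∈ X

lemma coprime_sup_of_sub_mem {I : Ideal O} {b y : O} (hb : I ⊔ span {b} = ⊤) (h : y - b ∈ I) :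
    I ⊔ span {y} = ⊤ := by
  rw [eq_top_iff, ← hb]
  refine sup_le le_sup_left ((span_singleton_le_iff_mem _).2 ?_)
  have h1 : y ∈ I ⊔ span {y} := (le_sup_right : span {y} ≤ _) (mem_span_singleton_self y)
  have h2 : y - b ∈ I ⊔ span {y} := (le_sup_left : I ≤ _) h
  simpa using Ideal.sub_mem _ h1 h2

lemma coprime_one (X : Ideal O) : X ⊔ span {(1 : O)} = ⊤ := by
  rw [span_singleton_one]; simp

lemma isCoprime_iff_sup {x y : O} : IsCoprime x y ↔ span {x} ⊔ span {y} = ⊤ := by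
  rw [← Ideal.isCoprime_span_singleton_iff, Ideal.isCoprime_iff_sup_eq]

lemma sup_mul_top {I J K : Ideal O} (h : I ⊔ K = ⊤) (h' : J ⊔ K = ⊤) : I * J ⊔ K = ⊤ := by
  rw [← Ideal.isCoprime_iff_sup_eq] at *
  exact h.mul_left h'

lemma sup_mul_top' {I J K : Ideal O} (h : K ⊔ I = ⊤) (h' : K ⊔ J = ⊤) : K ⊔ I * J = ⊤ := by
  rw [sup_comm] at *; exact sup_mul_top h h'

lemma Rep.coprime {I : Ideal O} {b x y : O} (h : Rep I b x y) (hb : I ⊔ span {b} = ⊤) :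
    IsCoprime x y := by
  obtain ⟨_, X, hx, hX, h1, h2⟩ := h
  rw [isCoprime_iff_sup, hx]
  exact sup_mul_top (coprime_sup_of_sub_mem hb h1) (coprime_sup_of_sub_mem (coprime_one X) h2)

lemma dvd_of_mem_mul {I X : Ideal O} {x z : O} (hx : span {x} = I * X) (hX : I ⊔ X = ⊤)
    (h1 : z ∈ I) (h2 : z ∈ X) : x ∣ z := by
  rw [← mem_span_singleton, hx, Ideal.mul_eq_inf_of_coprime hX]
  exact ⟨h1, h2⟩

lemma exists_rep (I : Ideal O) (hI : I ≠ ⊥) (b : O) : ∃ x y, Rep I b x y := by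
  obtain ⟨x, X, hx0, hx, hX⟩ := exists_gen I I hI hI
  obtain ⟨y, h1, h2⟩ := exists_ideal_crt (sup_comm I X ▸ hX) b 1
  exact ⟨x, y, hx0, X, hx, sup_comm I X ▸ hX, h1, h2⟩

/-- The symbol of `I` at `b` does not depend on the pair computing it. -/
lemma Rep.eq {I : Ideal O} {b x y x' y' : O} (h : Rep I b x y) (h' : Rep I b x' y')
    (hb : I ⊔ span {b} = ⊤) : S.m x y = S.m x' y' := by
  have hxy := h.coprime hb
  have hxy' := h'.coprime hb
  obtain ⟨hx0, X, hx, hX, h1, h2⟩ := h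
  obtain ⟨hx0', X', hx', hX', h1', h2'⟩ := h'
  have hI : I ≠ ⊥ := by rintro rfl; apply hx0; simpa using hx
  have hX0 : X' ≠ ⊥ := by rintro rfl; exact hx0' (by simpa using hx')
  -- a common multiple of the two generators
  obtain ⟨w, W, hw0, hw, hW⟩ := exists_gen X' I hX0 hI
  have hdvd : x' ∣ x * w := by
    rw [← mem_span_singleton, hx']
    have : x * w ∈ span {x * w} := mem_span_singleton_self _
    rw [← span_singleton_mul_span_singleton, hx, hw] at this
    refine (?_ : I * X * (X' * W) ≤ I * X') this
    rw [show I * X * (X' * W) = I * X' * (X * W) by ring]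
    exact Ideal.mul_le_left
  obtain ⟨w', hw'⟩ := hdvd
  have hw1 : span {w'} = X * W := by
    have : span {x'} * span {w'} = span {x'} * (X * W) := by
      rw [span_singleton_mul_span_singleton, ← hw', ← span_singleton_mul_span_singleton, hx, hw, hx']
      ring
    exact mul_left_cancel₀ (by simpa using hx0') this
  have hW' : I ⊔ W = ⊤ := by rw [sup_comm]; exact hW
  obtain ⟨z, hz1, hz2⟩ := exists_ideal_crt (sup_mul_top' (sup_mul_top' hX hX') hW') b 1
  have hzX : z - 1 ∈ X := (Ideal.mul_le_left.trans Ideal.mul_le_left : X * X' * W ≤ X) hz2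
  have hzX' : z - 1 ∈ X' := (Ideal.mul_le_left.trans Ideal.mul_le_right : X * X' * W ≤ X') hz2
  have e1 : S.m x z = S.m x y := S.congr_right hxy (dvd_of_mem_mul hx hX
    (by simpa using I.sub_mem hz1 h1) (by simpa using X.sub_mem hzX h2))
  have e2 : S.m x' z = S.m x' y' := S.congr_right hxy' (dvd_of_mem_mul hx' hX'
    (by simpa using I.sub_mem hz1 h1') (by simpa using X'.sub_mem hzX' h2'))
  have c1 : IsCoprime x z := isCoprime_of_dvd_sub hxy (dvd_of_mem_mul hx hX
    (by simpa using I.sub_mem hz1 h1) (by simpa using X.sub_mem hzX h2))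
  have c2 : IsCoprime x' z := isCoprime_of_dvd_sub hxy' (dvd_of_mem_mul hx' hX'
    (by simpa using I.sub_mem hz1 h1') (by simpa using X'.sub_mem hzX' h2'))
  have d1 : w ∣ z - 1 := by
    rw [← mem_span_singleton, hw]
    refine (?_ : X * X' * W ≤ X' * W) hz2
    rw [mul_assoc]; exact Ideal.mul_le_right
  have d2 : w' ∣ z - 1 := by
    rw [← mem_span_singleton, hw1]
    refine (?_ : X * X' * W ≤ X * W) hz2
    rw [show X * X' * W = X' * (X * W) by ring]; exact Ideal.mul_le_right
  have c3 := isCoprime_of_dvd_sub isCoprime_one_right d1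
  have c4 := isCoprime_of_dvd_sub isCoprime_one_right d2
  rw [← e1, ← e2]
  have := congrArg (fun t => S.m t z) hw'
  simp only [S.mul_left c1 c3, S.mul_left c2 c4, S.congr_right isCoprime_one_right d1,
    S.congr_right isCoprime_one_right d2, S.one_right, mul_one] at this
  exact this

open Classical in
/-- The symbol of a nonzero ideal `I` at an element `b` prime to `I`. -/
noncomputable def Symb.M (I : Ideal O) (b : O) : G :=
  if h : I ≠ ⊥ then S.m (exists_rep I h b).choose (exists_rep I h b).choose_spec.choose else 1

lemma Symb.M_eq {I : Ideal O} {b x y : O} (h : Rep I b x y) (hb : I ⊔ span {b} = ⊤) :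
    S.M I b = S.m x y := by
  have hI : I ≠ ⊥ := by
    obtain ⟨hx0, X, hx, -⟩ := h
    rintro rfl; apply hx0; simpa using hx
  rw [Symb.M, dif_pos hI]
  exact Rep.eq S (exists_rep I hI b).choose_spec.choose_spec h hb

lemma Symb.M_congr {I : Ideal O} (hI : I ≠ ⊥) {b b' : O} (hb : I ⊔ span {b} = ⊤) (h : b' - b ∈ I) :
    S.M I b' = S.M I b := by
  obtain ⟨x, y, hr⟩ := exists_rep I hI b
  rw [S.M_eq hr hb]
  refine S.M_eq ?_ (coprime_sup_of_sub_mem hb h)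
  obtain ⟨hx0, X, hx, hX, h1, h2⟩ := hr
  exact ⟨hx0, X, hx, hX, by simpa using I.sub_mem h1 h, h2⟩

lemma Symb.M_mul_right {I : Ideal O} (hI : I ≠ ⊥) {b c : O} (hb : I ⊔ span {b} = ⊤)
    (hc : I ⊔ span {c} = ⊤) : S.M I (b * c) = S.M I b * S.M I c := by
  obtain ⟨x, X, hx0, hx, hX⟩ := exists_gen I I hI hI
  rw [sup_comm] at hX
  obtain ⟨y, h1, h2⟩ := exists_ideal_crt hX b 1
  obtain ⟨z, h3, h4⟩ := exists_ideal_crt hX c 1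
  have r1 : Rep I b x y := ⟨hx0, X, hx, hX, h1, h2⟩
  have r2 : Rep I c x z := ⟨hx0, X, hx, hX, h3, h4⟩
  have r3 : Rep I (b * c) x (y * z) := by
    refine ⟨hx0, X, hx, hX, ?_, ?_⟩
    · convert I.add_mem (I.mul_mem_left z h1) (I.mul_mem_left b h3) using 1; ring
    · convert X.add_mem (X.mul_mem_left z h2) h4 using 1; ring
  rw [S.M_eq r1 hb, S.M_eq r2 hc, S.M_eq r3, S.mul (r1.coprime hb) (r2.coprime hc)]
  rw [← span_singleton_mul_span_singleton]
  exact sup_mul_top' hb hc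

lemma Symb.M_mul_left {I J : Ideal O} (hI : I ≠ ⊥) (hJ : J ≠ ⊥) {b : O} (hb : I ⊔ span {b} = ⊤)
    (hb' : J ⊔ span {b} = ⊤) : S.M (I * J) b = S.M I b * S.M J b := by
  have hIJ : I * J ≠ ⊥ := mul_ne_zero hI hJ
  obtain ⟨x, X, hx0, hx, hX⟩ := exists_gen I (I * J) hI hIJ
  obtain ⟨x', X', hx0', hx', hX'⟩ := exists_gen J (I * J) hJ hIJ
  rw [sup_comm] at hX hX'
  obtain ⟨y, h1, h2⟩ := exists_ideal_crt (sup_mul_top' hX hX') b 1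
  have hle : ∀ {A B C : Ideal O}, A ⊔ B = ⊤ → A ≤ C → C ⊔ B = ⊤ := by
    intro A B C h h'; exact top_le_iff.1 (h ▸ sup_le_sup_right h' B)
  have r1 : Rep I b x y := ⟨hx0, X, hx, hle hX (Ideal.mul_le_left : I * J ≤ I),
    (Ideal.mul_le_left : I * J ≤ I) h1, (Ideal.mul_le_left : X * X' ≤ X) h2⟩
  have r2 : Rep J b x' y := ⟨hx0', X', hx', hle hX' (Ideal.mul_le_right : I * J ≤ J),
    (Ideal.mul_le_right : I * J ≤ J) h1, (Ideal.mul_le_right : X * X' ≤ X') h2⟩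
  have r3 : Rep (I * J) b (x * x') y := by
    refine ⟨mul_ne_zero hx0 hx0', X * X', ?_, sup_mul_top' hX hX', h1, h2⟩
    rw [← span_singleton_mul_span_singleton, hx, hx']; ring
  rw [S.M_eq r1 hb, S.M_eq r2 hb', S.M_eq r3 (sup_mul_top hb hb'),
    S.mul_left (r1.coprime hb) (r2.coprime hb')]

lemma Symb.M_span {a b : O} (ha : a ≠ 0) (hab : IsCoprime a b) : S.M (span {a}) b = S.m a b :=
  S.M_eq ⟨ha, ⊤, by simp, by simp, by simp, by simp⟩ (isCoprime_iff_sup.1 hab)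

lemma Symb.M_one {I : Ideal O} (hI : I ≠ ⊥) : S.M I 1 = 1 := by
  have := S.M_mul_right hI (coprime_one I) (coprime_one I)
  rw [mul_one] at this
  exact left_eq_mul.mp this

lemma Symb.M_pow_right {I : Ideal O} (hI : I ≠ ⊥) {b : O} (hb : I ⊔ span {b} = ⊤) (k : ℕ) :
    S.M I (b ^ k) = S.M I b ^ k ∧ I ⊔ span {b ^ k} = ⊤ := by
  induction k with
  | zero => simp [S.M_one hI]
  | succ k ih =>
    refine ⟨by rw [pow_succ, S.M_mul_right hI ih.2 hb, ih.1, pow_succ], ?_⟩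
    rw [pow_succ, ← span_singleton_mul_span_singleton]; exact sup_mul_top' ih.2 hb

lemma Symb.M_top {b : O} : S.M ⊤ b = 1 := by
  have : S.M (span {1}) b = S.m 1 b := S.M_span (one_ne_zero) isCoprime_one_left
  rw [span_singleton_one] at this
  rw [this, S.unit_left isUnit_one]

lemma Symb.M_pow_left {I : Ideal O} (hI : I ≠ ⊥) {b : O} (hb : I ⊔ span {b} = ⊤) (k : ℕ) :
    S.M (I ^ k) b = S.M I b ^ k ∧ I ^ k ⊔ span {b} = ⊤ := by
  induction k with
  | zero => simp [S.M_top]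
  | succ k ih =>
    refine ⟨by rw [pow_succ, S.M_mul_left (pow_ne_zero k hI) hI ih.2 hb, ih.1, pow_succ], ?_⟩
    rw [pow_succ]; exact sup_mul_top ih.2 hb

lemma Symb.M_values (I : Ideal O) (b : O) (hI : I ≠ ⊥) (hb : I ⊔ span {b} = ⊤) :
    ∃ x y, IsCoprime x y ∧ S.M I b = S.m x y := by
  obtain ⟨x, y, h⟩ := exists_rep I hI b
  exact ⟨x, y, h.coprime hb, S.M_eq h hb⟩

end IdealSymbol
end SKOne

namespace SKOne
open Ideal IsDedekindDomain nonZeroDivisors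

/-! ### Free and non-free primes -/

/-- A nontrivial character of `ℓ`-power order of a finite cyclic group: its kernel consists of
`ℓ`-th powers, and the group is large enough to carry it. -/
lemma cyclic_char {G H : Type} [Group G] [Finite G] [IsCyclic G] [CommGroup H] {ℓ : ℕ}
    (hℓ : ℓ.Prime) (χ : G →* H) (hp : ∀ g, ∃ k, χ g ^ (ℓ ^ k) = 1) (J : ℕ)
    (hne : ∃ g, χ g ^ (ℓ ^ J) ≠ 1) :
    ℓ ^ (J + 1) ∣ Nat.card G ∧ ∀ x, χ x = 1 → ∃ z, z ^ ℓ = x := by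
  obtain ⟨g, hg⟩ := IsCyclic.exists_generator (α := G)
  obtain ⟨k, hk⟩ := hp g
  obtain ⟨j, -, hj⟩ := (Nat.dvd_prime_pow hℓ).1 (orderOf_dvd_of_pow_eq_one hk)
  have hJ : J < j := by
    by_contra hlt
    obtain ⟨x, hx⟩ := hne
    obtain ⟨n, rfl⟩ := hg x
    apply hx
    have : χ g ^ (ℓ ^ J) = 1 := by
      rw [← orderOf_dvd_iff_pow_eq_one, hj]; exact pow_dvd_pow _ (by omega)
    simp only [map_zpow]
    rw [← zpow_natCast, zpow_comm, zpow_natCast, this, one_zpow]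
  refine ⟨?_, ?_⟩
  · refine (pow_dvd_pow ℓ (by omega : J + 1 ≤ j)).trans ?_
    rw [← hj]
    exact (orderOf_map_dvd χ g).trans (orderOf_dvd_natCard g)
  · intro x hx
    obtain ⟨n, rfl⟩ := hg x
    simp only [map_zpow] at hx
    have h1 : (ℓ : ℤ) ∣ n := by
      have := orderOf_dvd_iff_zpow_eq_one.2 hx
      rw [hj] at this
      refine dvd_trans ?_ this
      exact_mod_cast dvd_pow_self ℓ (by omega)
    obtain ⟨r, rfl⟩ := h1
    exact ⟨g ^ r, by rw [← zpow_natCast, ← zpow_mul, mul_comm]⟩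

section Free
variable {O : Type} [CommRing O] [IsDedekindDomain O] (S : Symb O ℂˣ)

lemma sup_span_iff (v : HeightOneSpectrum O) (b : O) :
    v.asIdeal ⊔ span {b} = ⊤ ↔ b ∉ v.asIdeal := by
  constructor
  · intro h hb
    have : v.asIdeal ⊔ span {b} ≤ v.asIdeal :=
      sup_le le_rfl ((span_singleton_le_iff_mem _).2 hb)
    rw [h] at this
    exact v.isPrime.ne_top (top_le_iff.1 this)
  · intro hb
    by_contra hne
    have := (v.isPrime.isMaximal v.ne_bot).eq_of_le hne le_sup_left
    exact hb (this ▸ (le_sup_right : span {b} ≤ _) (mem_span_singleton_self b))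

/-- The prime `v` is free for the symbol when the local symbol at `v` is trivial. -/
def Free (v : HeightOneSpectrum O) : Prop := ∀ b ∉ v.asIdeal, S.M v.asIdeal b = 1

lemma M_trivial_of_free (I : Ideal O) (hI : I ≠ ⊥) {b : O} (hb : I ⊔ span {b} = ⊤)
    (h : ∀ v : HeightOneSpectrum O, I ≤ v.asIdeal → S.M v.asIdeal b = 1) : S.M I b = 1 := by
  induction I using UniqueFactorizationMonoid.induction_on_prime with
  | h₁ => exact absurd rfl hI
  | h₂ x hx => rw [Ideal.isUnit_iff.1 hx, S.M_top]
  | h₃ J p hJ hp ih =>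
    have hle : ∀ {A C : Ideal O}, A ≤ C → A ⊔ span {b} = ⊤ → C ⊔ span {b} = ⊤ := by
      intro A C h' h; exact top_le_iff.1 (h ▸ sup_le_sup_right h' _)
    have h1 : p * J ≤ p := Ideal.mul_le_left
    have h2 : p * J ≤ J := Ideal.mul_le_right
    rw [S.M_mul_left hp.ne_zero hJ (hle h1 hb) (hle h2 hb),
      ih hJ (hle h2 hb) (fun v hv => h v (h2.trans hv)),
      h ⟨p, Ideal.isPrime_of_prime hp, hp.ne_zero⟩ h1, one_mul]

lemma exists_mem_finite (s : Set (HeightOneSpectrum O)) (hs : s.Finite) :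
    ∃ c : O, c ≠ 0 ∧ ∀ v ∈ s, c ∈ v.asIdeal := by
  induction s, hs using Set.Finite.induction_on with
  | empty => exact ⟨1, one_ne_zero, by simp⟩
  | @insert v s _ _ ih =>
    obtain ⟨c, hc, h⟩ := ih
    obtain ⟨w, hw, hw0⟩ := Submodule.exists_mem_ne_zero_of_ne_bot v.ne_bot
    refine ⟨w * c, mul_ne_zero hw0 hc, ?_⟩
    rintro u (rfl | hu)
    · exact u.asIdeal.mul_mem_right _ hw
    · exact u.asIdeal.mul_mem_left _ (h u hu)

lemma trivial_of_finite (hO : FinQuot O) (h : {v | ¬ Free S v}.Finite) {a b : O}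
    (hab : IsCoprime a b) : S.m a b = 1 := by
  obtain ⟨c, hc, hcv⟩ := exists_mem_finite _ h
  obtain ⟨t, ht⟩ := exists_coprime_add hO.finMax hab hc
  have hab' : IsCoprime (a + t * b) b := by simpa using hab.add_mul_right_left t
  have e : S.m a b = S.m (a + t * b) b := by
    rw [S.symm hab', S.add t hab.symm, S.symm hab]
  rw [e]
  by_cases h0 : a + t * b = 0
  · rw [h0, isCoprime_zero_left] at hab'
    exact S.unit_right hab'
  rw [← S.M_span h0 hab']
  refine M_trivial_of_free S _ (by simpa using h0) (isCoprime_iff_sup.1 hab') ?_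
  intro v hv
  have hav : a + t * b ∈ v.asIdeal := (span_singleton_le_iff_mem _).1 hv
  have key : ∀ d, IsCoprime (a + t * b) d → d ∉ v.asIdeal := by
    rintro d ⟨x, y, hxy⟩ hd
    apply v.isPrime.ne_top
    rw [eq_top_iff_one, ← hxy]
    exact add_mem (v.asIdeal.mul_mem_left _ hav) (v.asIdeal.mul_mem_left _ hd)
  have hfree : Free S v := by
    by_contra hn
    exact key c ht (hcv v hn)
  exact hfree b (key b hab')

lemma primary_M {ℓ : ℕ} (hp : ∀ a b, IsCoprime a b → ∃ k, S.m a b ^ (ℓ ^ k) = 1)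
    (v : HeightOneSpectrum O) {b : O} (hb : b ∉ v.asIdeal) :
    ∃ k, S.M v.asIdeal b ^ (ℓ ^ k) = 1 := by
  obtain ⟨x, y, hxy, h⟩ := S.M_values v.asIdeal b v.ne_bot ((sup_span_iff v b).2 hb)
  rw [h]; exact hp x y hxy

/-- The local symbol at `v` as a character of the residue field. -/
noncomputable def localChar (v : HeightOneSpectrum O) : (O ⧸ v.asIdeal)ˣ →* ℂˣ where
  toFun u := S.M v.asIdeal (Ideal.Quotient.mk_surjective (u : O ⧸ v.asIdeal)).choose
  map_one' := by
    have h := (Ideal.Quotient.mk_surjective ((1 : (O ⧸ v.asIdeal)ˣ) : O ⧸ v.asIdeal)).choose_spec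
    rw [← S.M_one v.ne_bot]
    refine S.M_congr v.ne_bot (coprime_one _) ?_
    rw [← Ideal.Quotient.eq, h]; simp
  map_mul' := by
    intro x y
    have hx := (Ideal.Quotient.mk_surjective (x : O ⧸ v.asIdeal)).choose_spec
    have hy := (Ideal.Quotient.mk_surjective (y : O ⧸ v.asIdeal)).choose_spec
    have hxy := (Ideal.Quotient.mk_surjective ((x * y : (O ⧸ v.asIdeal)ˣ) : O ⧸ v.asIdeal)).choose_spec
    set a := (Ideal.Quotient.mk_surjective (x : O ⧸ v.asIdeal)).choose
    set b := (Ideal.Quotient.mk_surjective (y : O ⧸ v.asIdeal)).choose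
    have hnz : ∀ (z : (O ⧸ v.asIdeal)ˣ) (c : O), Ideal.Quotient.mk v.asIdeal c = z →
        v.asIdeal ⊔ span {c} = ⊤ := by
      intro z c hc
      rw [sup_span_iff, ← Ideal.Quotient.eq_zero_iff_mem, hc]
      have : Nontrivial (O ⧸ v.asIdeal) := Ideal.Quotient.nontrivial_iff.2 v.isPrime.ne_top
      exact z.ne_zero
    have e := S.M_mul_right v.ne_bot (hnz x a hx) (hnz y b hy)
    rw [← e]
    refine S.M_congr v.ne_bot ?_ ?_
    · exact hnz (x * y) _ (by rw [map_mul, hx, hy]; simp)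
    · rw [← Ideal.Quotient.eq, hxy, map_mul, hx, hy]; simp

lemma localChar_eq (v : HeightOneSpectrum O) (u : (O ⧸ v.asIdeal)ˣ) {b : O}
    (hb : b ∉ v.asIdeal) (h : Ideal.Quotient.mk v.asIdeal b = u) :
    localChar S v u = S.M v.asIdeal b := by
  have hu := (Ideal.Quotient.mk_surjective (u : O ⧸ v.asIdeal)).choose_spec
  refine S.M_congr v.ne_bot ((sup_span_iff v b).2 hb) ?_
  rw [← Ideal.Quotient.eq, hu, h]

/-- If the `ℓ ^ J`-th power of the local symbol at `v` is nontrivial, then `ℓ ^ (J + 1)` divides the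
order of the cyclic group of units of the residue field, and the kernel of the local symbol consists
of `ℓ`-th powers. -/
lemma key_aux (hO : FinQuot O) {ℓ : ℕ} (hℓ : ℓ.Prime)
    (hp : ∀ a b, IsCoprime a b → ∃ k, S.m a b ^ (ℓ ^ k) = 1) (v : HeightOneSpectrum O) (J : ℕ)
    (hv : ∃ b ∉ v.asIdeal, S.M v.asIdeal b ^ (ℓ ^ J) ≠ 1) :
    ℓ ^ (J + 1) ∣ Nat.card (O ⧸ v.asIdeal)ˣ ∧
      ∀ b ∉ v.asIdeal, S.M v.asIdeal b = 1 → ∃ z, z ^ ℓ - b ∈ v.asIdeal := by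
  have : v.asIdeal.IsMaximal := v.isPrime.isMaximal v.ne_bot
  let _ : Field (O ⧸ v.asIdeal) := Ideal.Quotient.field _
  have : Finite (O ⧸ v.asIdeal) := by
    obtain ⟨w, hw, hw0⟩ := Submodule.exists_mem_ne_zero_of_ne_bot v.ne_bot
    have := hO w hw0
    exact Finite.of_surjective _
      (Ideal.Quotient.factor_surjective ((span_singleton_le_iff_mem _).2 hw))
  have hrep : ∀ u : (O ⧸ v.asIdeal)ˣ, ∃ b ∉ v.asIdeal, Ideal.Quotient.mk v.asIdeal b = u := by
    intro u
    obtain ⟨b, hb⟩ := Ideal.Quotient.mk_surjective (u : O ⧸ v.asIdeal)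
    refine ⟨b, ?_, hb⟩
    rw [← Ideal.Quotient.eq_zero_iff_mem, hb]; exact u.ne_zero
  have hlift : ∀ b ∉ v.asIdeal, ∃ u : (O ⧸ v.asIdeal)ˣ, Ideal.Quotient.mk v.asIdeal b = u := by
    intro b hb
    rw [← Ideal.Quotient.eq_zero_iff_mem] at hb
    exact ⟨Units.mk0 _ hb, rfl⟩
  obtain ⟨h1, h2⟩ := cyclic_char hℓ (localChar S v) (fun u => by
      obtain ⟨b, hb, h⟩ := hrep u
      rw [localChar_eq S v u hb h]; exact primary_M S hp v hb) J (by
      obtain ⟨b, hb, h⟩ := hv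
      obtain ⟨u, hu⟩ := hlift b hb
      exact ⟨u, by rwa [localChar_eq S v u hb hu]⟩)
  refine ⟨h1, fun b hb hM => ?_⟩
  obtain ⟨u, hu⟩ := hlift b hb
  obtain ⟨z, hz⟩ := h2 u (by rwa [localChar_eq S v u hb hu])
  obtain ⟨y, -, hy⟩ := hrep z
  refine ⟨y, ?_⟩
  rw [← Ideal.Quotient.eq, map_pow, hy, hu, ← hz]; simp

/-! ### Null elements -/

/-- `α` is null when `m(α, ·) = 1`. -/
def Null (α : O) : Prop := ∀ β, IsCoprime α β → S.m α β = 1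

lemma exists_coprime_rep (c : ClassGroup O) (J : Ideal O) (hJ : J ≠ ⊥) :
    ∃ I : (Ideal O)⁰, ClassGroup.mk0 I = c ∧ (I : Ideal O) ⊔ J = ⊤ := by
  obtain ⟨⟨I, hI⟩, hIc⟩ := ClassGroup.mk0_surjective c⁻¹
  obtain ⟨w, W, hw, hIW, hW⟩ := exists_gen I J (nonZeroDivisors.ne_zero hI) hJ
  have hW0 : W ≠ ⊥ := by rintro rfl; apply hw; simpa using hIW
  refine ⟨⟨W, mem_nonZeroDivisors_of_ne_zero hW0⟩, ?_, hW⟩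
  have h1 : ClassGroup.mk0 (⟨I, hI⟩ * ⟨W, mem_nonZeroDivisors_of_ne_zero hW0⟩ : (Ideal O)⁰) = 1 := by
    refine (ClassGroup.mk0_eq_one_iff (I := I * W) _).2 ?_
    rw [← hIW]; exact ⟨w, rfl⟩
  rw [map_mul, hIc, inv_mul_eq_one] at h1
  exact h1.symm

lemma null_principal {α : O} (hn : Null S α) {I : Ideal O} (hI0 : I ≠ ⊥)
    (hI : Submodule.IsPrincipal I) (hIα : I ⊔ span {α} = ⊤) : S.M I α = 1 := by
  obtain ⟨w, hw⟩ := hI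
  have hw' : I = span {w} := hw
  subst hw'
  have hc : IsCoprime w α := isCoprime_iff_sup.2 hIα
  rw [S.M_span (by simpa using hI0) hc, S.symm hc]
  exact hn w hc.symm

lemma null_eq {α : O} (hα : α ≠ 0) (hn : Null S α) (I J : (Ideal O)⁰)
    (hIJ : ClassGroup.mk0 I = ClassGroup.mk0 J) (hI : (I : Ideal O) ⊔ span {α} = ⊤)
    (hJ : (J : Ideal O) ⊔ span {α} = ⊤) : S.M (I : Ideal O) α = S.M (J : Ideal O) α := by
  obtain ⟨W, hWc, hW⟩ := exists_coprime_rep (ClassGroup.mk0 I)⁻¹ (span {α}) (by simpa using hα)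
  have h0 : ∀ I : (Ideal O)⁰, (I : Ideal O) ≠ ⊥ := fun I => nonZeroDivisors.ne_zero I.2
  have key : ∀ L : (Ideal O)⁰, ClassGroup.mk0 L = ClassGroup.mk0 I → (L : Ideal O) ⊔ span {α} = ⊤ →
      S.M (L : Ideal O) α * S.M (W : Ideal O) α = 1 := by
    intro L hL hLα
    rw [← S.M_mul_left (h0 L) (h0 W) hLα hW]
    refine null_principal S hn (h0 (L * W)) ?_ (sup_mul_top hLα hW)
    refine (ClassGroup.mk0_eq_one_iff (L * W).2).1 ?_
    change ClassGroup.mk0 (L * W) = 1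
    rw [map_mul, hL, hWc, mul_inv_cancel]
  exact mul_right_cancel ((key I rfl hI).trans (key J hIJ.symm hJ).symm)

/-- For `α` null, `I ↦ M(I, α)` is a character of the class group. -/
lemma exists_kappa {α : O} (hα : α ≠ 0) (hn : Null S α) :
    ∃ κ : ClassGroup O →* ℂˣ, ∀ I : (Ideal O)⁰, (I : Ideal O) ⊔ span {α} = ⊤ →
      S.M (I : Ideal O) α = κ (ClassGroup.mk0 I) := by
  have h0 : ∀ I : (Ideal O)⁰, (I : Ideal O) ≠ ⊥ := fun I => nonZeroDivisors.ne_zero I.2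
  choose r hr hrα using fun c => exists_coprime_rep (O := O) c (span {α}) (by simpa using hα)
  refine ⟨MonoidHom.mk' (fun c => S.M (r c : Ideal O) α) ?_, ?_⟩
  · intro c d
    have : S.M (r (c * d) : Ideal O) α = S.M (r c * r d : (Ideal O)⁰) α :=
      null_eq S hα hn _ _ (by rw [hr, map_mul, hr, hr]) (hrα _) (sup_mul_top (hrα c) (hrα d))
    rw [this]
    exact S.M_mul_left (h0 _) (h0 _) (hrα c) (hrα d)
  · intro I hI
    exact null_eq S hα hn _ _ (by rw [hr]) hI (hrα _)

/-- `κ` is the class group character attached to the null element `α`. -/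
def HasKappa (α : O) (κ : ClassGroup O →* ℂˣ) : Prop :=
  ∀ v : HeightOneSpectrum O, α ∉ v.asIdeal →
    S.M v.asIdeal α = κ (ClassGroup.mk0 ⟨v.asIdeal, mem_nonZeroDivisors_of_ne_zero v.ne_bot⟩)

lemma exists_hasKappa {α : O} (hα : α ≠ 0) (hn : Null S α) : ∃ κ, HasKappa S α κ := by
  obtain ⟨κ, h⟩ := exists_kappa S hα hn
  exact ⟨κ, fun v hv =>
    h ⟨v.asIdeal, mem_nonZeroDivisors_of_ne_zero v.ne_bot⟩ ((sup_span_iff v α).2 hv)⟩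

lemma HasKappa.mul {α β : O} {κ μ : ClassGroup O →* ℂˣ} (h : HasKappa S α κ)
    (h' : HasKappa S β μ) : HasKappa S (α * β) (κ * μ) := by
  intro v hv
  have ha : α ∉ v.asIdeal := fun h => hv (v.asIdeal.mul_mem_right _ h)
  have hb : β ∉ v.asIdeal := fun h => hv (v.asIdeal.mul_mem_left _ h)
  rw [S.M_mul_right v.ne_bot ((sup_span_iff v _).2 ha) ((sup_span_iff v _).2 hb), h v ha, h' v hb]
  rfl

lemma hasKappa_one : HasKappa S 1 1 := fun v _ => S.M_one v.ne_bot

lemma HasKappa.pow {α : O} {κ : ClassGroup O →* ℂˣ} (h : HasKappa S α κ) (n : ℕ) :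
    HasKappa S (α ^ n) (κ ^ n) := by
  induction n with
  | zero =>
    have : κ ^ 0 = 1 := by ext; simp
    rw [pow_zero, this]; exact hasKappa_one S
  | succ n ih =>
    have : κ ^ (n + 1) = κ ^ n * κ := by ext; simp [pow_succ]
    rw [pow_succ, this]; exact ih.mul S h

end Free
end SKOne

namespace SKOne
open Finset

/-! ### Dirichlet series of sets with polynomial counting functions -/

section Counting
variable {ι : Type} {N : ι → ℕ} {C c : ℝ}

lemma half_rpow_le {x : ℝ} (h0 : 0 ≤ x) (h1 : x ≤ 1) : (2 : ℝ) ^ (-x) ≤ 1 - x / 2 := by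
  have := rpow_one_add_le_one_add_mul_self (s := -1 / 2) (by norm_num) h0 h1
  have e : (2 : ℝ) ^ (-x) = (1 + -1 / 2 : ℝ) ^ x := by
    rw [Real.rpow_neg (by norm_num), ← Real.inv_rpow (by norm_num)]; norm_num
  rw [e]; linarith

/-- Linear upper bound for the counting function gives a simple pole bound. -/
lemma sum_rpow_le (hpos : ∀ i, 0 < N i) (hfin : ∀ Y, {i | N i ≤ Y}.Finite)
    (hC : ∀ Y : ℕ, 1 ≤ Y → ({i | N i ≤ Y}.ncard : ℝ) ≤ C * Y) (hC0 : 0 ≤ C)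
    {s : ℝ} (hs : 1 < s) (hs2 : s ≤ 2) (u : Finset ι) :
    ∑ i ∈ u, (N i : ℝ) ^ (-s) ≤ 4 * C / (s - 1) := by
  set J := (u.sup fun i => Nat.log 2 (N i)) + 1 with hJ
  have hmaps : ∀ i ∈ u, Nat.log 2 (N i) ∈ range J := fun i hi => by
    rw [mem_range, hJ]
    exact Nat.lt_succ_of_le (Finset.le_sup (f := fun i => Nat.log 2 (N i)) hi)
  rw [← Finset.sum_fiberwise_of_maps_to hmaps]
  set z : ℝ := (2 : ℝ) ^ (-(s - 1)) with hz
  have hz0 : 0 ≤ z := by positivity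
  have hz1 : z ≤ 1 - (s - 1) / 2 := half_rpow_le (by linarith) (by linarith)
  have hfib : ∀ j ∈ range J, ∑ i ∈ u with Nat.log 2 (N i) = j, (N i : ℝ) ^ (-s) ≤
      2 * C * z ^ j := by
    intro j _
    have h1 : ∀ i ∈ u.filter (fun i => Nat.log 2 (N i) = j),
        (N i : ℝ) ^ (-s) ≤ ((2 : ℝ) ^ j) ^ (-s) := by
      intro i hi
      rw [mem_filter] at hi
      have : 2 ^ j ≤ N i := by
        rw [← hi.2]; exact Nat.pow_log_le_self 2 (hpos i).ne'
      exact Real.rpow_le_rpow_of_nonpos (by positivity) (by exact_mod_cast this) (by linarith)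
    have h2 : ((u.filter (fun i => Nat.log 2 (N i) = j)).card : ℝ) ≤ C * (2 ^ (j + 1) : ℕ) := by
      refine le_trans ?_ (hC (2 ^ (j + 1)) Nat.one_le_two_pow)
      have hsub : ((u.filter (fun i => Nat.log 2 (N i) = j) : Finset ι) : Set ι) ⊆
          {i | N i ≤ 2 ^ (j + 1)} := fun i hi => by
        simp only [coe_filter, Set.mem_ofPred_eq] at hi ⊢
        rw [← hi.2]; exact (Nat.lt_pow_succ_log_self (by norm_num) _).le
      have := Set.ncard_le_ncard hsub (hfin _)
      rw [Set.ncard_coe_finset] at this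
      exact_mod_cast this
    refine (Finset.sum_le_card_nsmul _ _ _ h1).trans ?_
    rw [nsmul_eq_mul]
    refine (mul_le_mul_of_nonneg_right h2 (by positivity)).trans (le_of_eq ?_)
    have : z ^ j = (2 : ℝ) ^ j * ((2 : ℝ) ^ j) ^ (-s) := by
      rw [hz, ← Real.rpow_natCast, ← Real.rpow_mul (by norm_num), ← Real.rpow_natCast 2 j,
        ← Real.rpow_mul (by norm_num), ← Real.rpow_add (by norm_num)]
      congr 1; ring
    rw [this]; push_cast; ring
  refine (Finset.sum_le_sum hfib).trans ?_
  rw [← Finset.mul_sum]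
  have hgeo : ∑ j ∈ range J, z ^ j ≤ (1 - z)⁻¹ := by
    have hz1' : z < 1 := by linarith
    rw [← tsum_geometric_of_lt_one hz0 hz1']
    exact (summable_geometric_of_lt_one hz0 hz1').sum_le_tsum _ (fun i _ => by positivity)
  have : (1 - z)⁻¹ ≤ 2 / (s - 1) := by
    rw [inv_eq_one_div, div_le_div_iff₀ (by linarith) (by linarith)]; linarith
  calc 2 * C * ∑ j ∈ range J, z ^ j ≤ 2 * C * (2 / (s - 1)) := by
        gcongr; exact hgeo.trans this
    _ = _ := by ring

lemma summable_rpow (hpos : ∀ i, 0 < N i) (hfin : ∀ Y, {i | N i ≤ Y}.Finite)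
    (hC : ∀ Y : ℕ, 1 ≤ Y → ({i | N i ≤ Y}.ncard : ℝ) ≤ C * Y) (hC0 : 0 ≤ C)
    {s : ℝ} (hs : 1 < s) : Summable fun i => (N i : ℝ) ^ (-s) := by
  have h := summable_of_sum_le (f := fun i => (N i : ℝ) ^ (-(min s 2))) (fun i => by positivity)
    (sum_rpow_le hpos hfin hC hC0 (lt_min hs (by norm_num)) (min_le_right _ _))
  refine h.of_nonneg_of_le (fun i => by positivity) (fun i => ?_)
  exact Real.rpow_le_rpow_of_exponent_le (by exact_mod_cast hpos i)
    (neg_le_neg (min_le_left _ _))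

/-- Two-sided linear bounds for the counting function give a lower simple pole bound. -/
lemma exists_le_tsum_rpow (hpos : ∀ i, 0 < N i) (hfin : ∀ Y, {i | N i ≤ Y}.Finite)
    (hC : ∀ Y : ℕ, 1 ≤ Y → ({i | N i ≤ Y}.ncard : ℝ) ≤ C * Y) (hC0 : 0 ≤ C) (hc0 : 0 < c)
    (hc : ∀ Y : ℕ, 1 ≤ Y → c * Y ≤ ({i | N i ≤ Y}.ncard : ℝ)) :
    ∃ c' > 0, ∀ s : ℝ, 1 < s → s ≤ 2 → c' / (s - 1) ≤ ∑' i, (N i : ℝ) ^ (-s) := by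
  classical
  obtain ⟨Q, hQ⟩ := exists_nat_ge (max 2 ((C + 1) / c))
  have hQ2 : 2 ≤ Q := by exact_mod_cast (le_max_left _ _).trans hQ
  have hQc : C + 1 ≤ c * Q := by
    have := (le_max_right _ _).trans hQ
    rw [div_le_iff₀ hc0] at this; linarith
  have hQ0 : (0 : ℝ) < Q := by positivity
  have hlog : 0 < Real.log Q := Real.log_pos (by exact_mod_cast hQ2)
  refine ⟨(Q : ℝ) ^ (-2 : ℝ) / Real.log Q, by positivity, fun s hs hs2 => ?_⟩
  set z : ℝ := (Q : ℝ) ^ (-(s - 1)) with hz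
  have hz0 : 0 ≤ z := by positivity
  have hz1 : z < 1 := Real.rpow_lt_one_of_one_lt_of_neg (by exact_mod_cast hQ2) (by linarith)
  have hsum := summable_rpow hpos hfin hC hC0 hs
  have hpart : ∀ J : ℕ, ∑ j ∈ range J, (Q : ℝ) ^ (-s) * z ^ j ≤
      ∑ i ∈ (hfin (Q ^ J)).toFinset, (N i : ℝ) ^ (-s) := by
    intro J
    induction J with
    | zero => simpa using Finset.sum_nonneg fun i _ => by positivity
    | succ J ih =>
      have hsub : (hfin (Q ^ J)).toFinset ⊆ (hfin (Q ^ (J + 1))).toFinset := by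
        intro i hi
        simp only [Set.Finite.mem_toFinset, Set.mem_ofPred_eq] at hi ⊢
        exact hi.trans (Nat.pow_le_pow_right (by omega) (by omega))
      rw [sum_range_succ, ← Finset.sum_sdiff hsub, add_comm]
      refine add_le_add ?_ ih
      have hcard : ((Q : ℝ) ^ J) ≤
          (((hfin (Q ^ (J + 1))).toFinset \ (hfin (Q ^ J)).toFinset).card : ℝ) := by
        rw [Finset.cast_card_sdiff hsub]
        have h1 := hc (Q ^ (J + 1)) (Nat.one_le_pow _ _ (by omega))
        have h2 := hC (Q ^ J) (Nat.one_le_pow _ _ (by omega))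
        rw [Set.ncard_eq_toFinset_card _ (hfin _)] at h1 h2
        have h3 : (C + 1) * (Q : ℝ) ^ J ≤ c * Q * (Q : ℝ) ^ J := by gcongr
        push_cast at h1 h2
        have : c * (Q : ℝ) ^ (J + 1) = c * Q * (Q : ℝ) ^ J := by ring
        linarith
      have hterm : ∀ i ∈ (hfin (Q ^ (J + 1))).toFinset \ (hfin (Q ^ J)).toFinset,
          ((Q : ℝ) ^ (J + 1)) ^ (-s) ≤ (N i : ℝ) ^ (-s) := by
        intro i hi
        simp only [mem_sdiff, Set.Finite.mem_toFinset, Set.mem_ofPred_eq] at hi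
        exact Real.rpow_le_rpow_of_nonpos (by exact_mod_cast hpos i) (by exact_mod_cast hi.1)
          (by linarith)
      refine le_trans ?_ (Finset.card_nsmul_le_sum _ _ _ hterm)
      rw [nsmul_eq_mul]
      refine le_trans (le_of_eq ?_) (mul_le_mul_of_nonneg_right hcard (by positivity))
      rw [hz, ← Real.rpow_natCast, ← Real.rpow_mul hQ0.le, ← Real.rpow_natCast,
        ← Real.rpow_natCast, ← Real.rpow_mul hQ0.le, ← Real.rpow_add hQ0, ← Real.rpow_add hQ0]
      congr 1; push_cast; ring
  have hlim : (Q : ℝ) ^ (-s) * (1 - z)⁻¹ ≤ ∑' i, (N i : ℝ) ^ (-s) := by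
    rw [← tsum_geometric_of_lt_one hz0 hz1, ← tsum_mul_left]
    refine Real.tsum_le_of_sum_range_le (fun j => by positivity) fun J => (hpart J).trans ?_
    exact hsum.sum_le_tsum _ (fun i _ => by positivity)
  refine le_trans ?_ hlim
  have h1 : 1 - z ≤ (s - 1) * Real.log Q := by
    have := Real.add_one_le_exp (-(s - 1) * Real.log Q)
    rw [hz, Real.rpow_def_of_pos hQ0, mul_comm (Real.log Q)]; linarith
  have h2 : (Q : ℝ) ^ (-2 : ℝ) ≤ (Q : ℝ) ^ (-s) :=
    Real.rpow_le_rpow_of_exponent_le (by exact_mod_cast (by omega : 1 ≤ Q)) (by linarith)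
  rw [div_div, div_eq_mul_inv]
  have h3 : 0 < 1 - z := by linarith
  gcongr
  linarith

end Counting
end SKOne

namespace SKOne
open Ideal Module

/-! ### Base rings and finite algebras over them -/

/-- A base ring (`ℤ` or `𝔽_q[X]`): an absolute value with values in `ℕ` that computes the index of
principal ideals and whose balls have linear growth. -/
structure BaseRing (A : Type) [CommRing A] where
  ab : A → ℕ
  ab_eq_zero : ∀ a, ab a = 0 ↔ a = 0
  ab_mul : ∀ a b, ab (a * b) = ab a * ab b
  ab_add : ∀ a b, ab (a + b) ≤ ab a + ab b
  card_quot : ∀ a ≠ 0, Nat.card (A ⧸ span {a}) = ab a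
  ball_fin : ∀ X : ℕ, {a | ab a ≤ X}.Finite
  le_ball : ∀ X : ℕ, 1 ≤ X → X ≤ {a | ab a ≤ X}.ncard
  K : ℕ
  ball_le : ∀ X : ℕ, 1 ≤ X → {a | ab a ≤ X}.ncard ≤ K * X

namespace BaseRing
variable {A : Type} [CommRing A] [IsDomain A] (β : BaseRing A)

lemma ab_zero : β.ab 0 = 0 := (β.ab_eq_zero 0).2 rfl

lemma ab_pos {a : A} (h : a ≠ 0) : 0 < β.ab a :=
  Nat.pos_of_ne_zero fun h' => h ((β.ab_eq_zero a).1 h')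

lemma ab_one : β.ab 1 = 1 := by
  have h := β.ab_mul 1 1
  rw [mul_one] at h
  have := β.ab_pos (one_ne_zero (α := A))
  nlinarith

lemma ab_unit {u : A} (hu : IsUnit u) : β.ab u = 1 := by
  obtain ⟨v, hv⟩ := hu.exists_right_inv
  have := β.ab_mul u v
  rw [hv, β.ab_one] at this
  exact Nat.eq_one_of_mul_eq_one_right this.symm

lemma ab_neg (a : A) : β.ab (-a) = β.ab a := by
  rw [neg_eq_neg_one_mul, β.ab_mul, β.ab_unit (isUnit_one.neg), one_mul]

lemma ab_sub (a b : A) : β.ab (a - b) ≤ β.ab a + β.ab b := by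
  rw [sub_eq_add_neg, ← β.ab_neg b]; exact β.ab_add _ _

lemma ab_pow (a : A) (n : ℕ) : β.ab (a ^ n) = β.ab a ^ n := by
  induction n with
  | zero => simp [β.ab_one]
  | succ n ih => rw [pow_succ, pow_succ, β.ab_mul, ih]

lemma ab_prod {κ : Type} (s : Finset κ) (f : κ → A) :
    β.ab (∏ i ∈ s, f i) = ∏ i ∈ s, β.ab (f i) := by
  classical
  induction s using Finset.induction_on with
  | empty => simp [β.ab_one]
  | insert a s ha ih => rw [Finset.prod_insert ha, Finset.prod_insert ha, β.ab_mul, ih]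

lemma ab_sum {κ : Type} (s : Finset κ) (f : κ → A) :
    β.ab (∑ i ∈ s, f i) ≤ ∑ i ∈ s, β.ab (f i) := by
  classical
  induction s using Finset.induction_on with
  | empty => simp [β.ab_zero]
  | insert a s ha ih =>
    rw [Finset.sum_insert ha, Finset.sum_insert ha]; exact (β.ab_add _ _).trans (by omega)

lemma ab_sign (σ : ℤˣ) (a : A) : β.ab (σ • a) = β.ab a := by
  rcases Int.units_eq_one_or σ with rfl | rfl
  · simp
  · simp [β.ab_neg]

lemma exists_large (X : ℕ) : ∃ a : A, X < β.ab a := by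
  by_contra! h
  have h1 : {a : A | β.ab a ≤ X} = Set.univ := by ext a; simpa using h a
  have h2 := β.le_ball ({a : A | β.ab a ≤ X}.ncard + X + 1) (by omega)
  have h3 : {a : A | β.ab a ≤ {a : A | β.ab a ≤ X}.ncard + X + 1} = Set.univ := by
    ext a; simpa using (h a).trans (by omega)
  rw [h3, ← h1] at h2
  omega

include β in
lemma infinite : Infinite A := by
  by_contra hf
  rw [not_infinite_iff_finite] at hf
  have := Fintype.ofFinite A
  obtain ⟨a, ha⟩ := β.exists_large (Finset.univ.sup β.ab)
  exact absurd (Finset.le_sup (f := β.ab) (Finset.mem_univ a)) (by omega)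

/-- Perturbation of a product, by telescoping. -/
lemma ab_prod_add_sub {κ : Type} (s : Finset κ) (f g : κ → A) {x y : ℕ}
    (hf : ∀ i, β.ab (f i) ≤ x) (hg : ∀ i, β.ab (g i) ≤ y) :
    β.ab (∏ i ∈ s, (f i + g i) - ∏ i ∈ s, f i) + x ^ s.card ≤ (x + y) ^ s.card := by
  classical
  induction s using Finset.induction_on with
  | empty => simp [β.ab_zero]
  | insert a s ha ih =>
    rw [Finset.prod_insert ha, Finset.prod_insert ha, Finset.card_insert_of_notMem ha]
    set P := ∏ i ∈ s, (f i + g i)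
    set Q := ∏ i ∈ s, f i
    have hQ : β.ab Q ≤ x ^ s.card := by
      rw [β.ab_prod]; exact Finset.prod_le_pow_card _ _ _ fun i _ => hf i
    have e : (f a + g a) * P - f a * Q = (f a + g a) * (P - Q) + g a * Q := by ring
    have h1 : β.ab ((f a + g a) * (P - Q)) ≤ (x + y) * β.ab (P - Q) := by
      rw [β.ab_mul]
      exact Nat.mul_le_mul_right _ ((β.ab_add _ _).trans (add_le_add (hf a) (hg a)))
    have h2 : β.ab (g a * Q) ≤ y * x ^ s.card := by
      rw [β.ab_mul]; exact Nat.mul_le_mul (hg a) hQ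
    rw [e]
    have h3 := β.ab_add ((f a + g a) * (P - Q)) (g a * Q)
    have h4 := Nat.mul_le_mul_left (x + y) ih
    calc _ ≤ (x + y) * β.ab (P - Q) + y * x ^ s.card + x ^ (s.card + 1) := by omega
      _ = (x + y) * (β.ab (P - Q) + x ^ s.card) := by ring
      _ ≤ _ := by rw [pow_succ']; exact h4

variable {ι : Type} [Fintype ι] [DecidableEq ι]

lemma ab_det_le (M : Matrix ι ι A) {x : ℕ} (h : ∀ i j, β.ab (M i j) ≤ x) :
    β.ab M.det ≤ (Fintype.card ι).factorial * x ^ Fintype.card ι := by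
  rw [Matrix.det_apply]
  refine (β.ab_sum _ _).trans ?_
  refine (Finset.sum_le_card_nsmul _ _ (x ^ Fintype.card ι) fun σ _ => ?_).trans ?_
  · rw [β.ab_sign, β.ab_prod]
    exact (Finset.prod_le_pow_card _ _ x fun i _ => h _ _).trans (by simp)
  · simp [Fintype.card_perm]

lemma ab_det_add (T : A) (W : Matrix ι ι A) {y : ℕ} (h : ∀ i j, β.ab (W i j) ≤ y) :
    β.ab (T ^ Fintype.card ι) + (Fintype.card ι).factorial * β.ab T ^ Fintype.card ι ≤
      β.ab (T • (1 : Matrix ι ι A) + W).det +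
        (Fintype.card ι).factorial * (β.ab T + y) ^ Fintype.card ι := by
  have e : (T • (1 : Matrix ι ι A)).det = T ^ Fintype.card ι := by simp
  have h1 : β.ab (T ^ Fintype.card ι) ≤ β.ab (T • (1 : Matrix ι ι A) + W).det +
      β.ab ((T • (1 : Matrix ι ι A) + W).det - (T • (1 : Matrix ι ι A)).det) := by
    have := β.ab_sub (T • (1 : Matrix ι ι A) + W).det
      ((T • (1 : Matrix ι ι A) + W).det - (T • (1 : Matrix ι ι A)).det)
    rw [sub_sub_cancel] at this
    exact e ▸ this
  have h2 : β.ab ((T • (1 : Matrix ι ι A) + W).det - (T • (1 : Matrix ι ι A)).det) +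
      (Fintype.card ι).factorial * β.ab T ^ Fintype.card ι ≤
      (Fintype.card ι).factorial * (β.ab T + y) ^ Fintype.card ι := by
    rw [Matrix.det_apply, Matrix.det_apply, ← Finset.sum_sub_distrib]
    have key : ∀ σ : Equiv.Perm ι, β.ab (Equiv.Perm.sign σ • ∏ i, (T • (1 : Matrix ι ι A) + W) (σ i) i -
        Equiv.Perm.sign σ • ∏ i, (T • (1 : Matrix ι ι A)) (σ i) i) + β.ab T ^ Fintype.card ι ≤
        (β.ab T + y) ^ Fintype.card ι := by
      intro σ
      rw [← smul_sub, β.ab_sign]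
      refine β.ab_prod_add_sub Finset.univ (fun i => (T • (1 : Matrix ι ι A)) (σ i) i)
        (fun i => W (σ i) i) (fun i => ?_) (fun i => h _ _)
      simp only [Matrix.smul_apply, Matrix.one_apply, smul_eq_mul]
      split_ifs <;> simp [β.ab_zero]
    have hsum := Finset.sum_le_sum fun σ (_ : σ ∈ (Finset.univ : Finset (Equiv.Perm ι))) => key σ
    rw [Finset.sum_add_distrib] at hsum
    simp only [Finset.sum_const, Finset.card_univ, Fintype.card_perm, smul_eq_mul] at hsum
    exact (Nat.add_le_add_right (β.ab_sum _ _) _).trans hsum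
  omega

end BaseRing

/-! ### The norm of ideals -/

/-- The norm of an ideal: the cardinality of the quotient (`0` when infinite). -/
noncomputable def nm {B : Type} [CommRing B] (I : Ideal B) : ℕ := Nat.card (B ⧸ I)

section Norm
variable {B : Type} [CommRing B]

lemma nm_top : nm (⊤ : Ideal B) = 1 := by
  rw [nm, ← Submodule.cardQuot_apply, Submodule.cardQuot_top]

lemma nm_bot [Infinite B] : nm (⊥ : Ideal B) = 0 := by
  rw [nm, ← Submodule.cardQuot_apply, Submodule.cardQuot_bot]

lemma nm_mul [IsDedekindDomain B] [Infinite B] (I J : Ideal B) : nm (I * J) = nm I * nm J := by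
  simp only [nm, ← Submodule.cardQuot_apply]
  exact UniqueFactorizationMonoid.multiplicative_of_coprime Submodule.cardQuot I J
      (Submodule.cardQuot_bot _ _)
      (fun {I J} hI => by simp [Ideal.isUnit_iff.mp hI, Ideal.mul_top])
      (fun {I} i hI =>
        have : Ideal.IsPrime I := Ideal.isPrime_of_prime hI
        cardQuot_pow_of_prime hI.ne_zero)
      fun {I J} hIJ => cardQuot_mul_of_coprime <| Ideal.isCoprime_iff_sup_eq.mpr
        (Ideal.isUnit_iff.mp
          (hIJ (Ideal.dvd_iff_le.mpr le_sup_left) (Ideal.dvd_iff_le.mpr le_sup_right)))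

lemma nm_eq_one_iff {I : Ideal B} : nm I = 1 ↔ I = ⊤ := by
  rw [nm, ← Submodule.cardQuot_apply, Submodule.cardQuot_eq_one_iff]

end Norm

section Counts
variable {A : Type} [CommRing A] [IsDomain A] [IsPrincipalIdealRing A] (β : BaseRing A)
  {B : Type} [CommRing B] [IsDedekindDomain B] [Algebra A B]
  {ι : Type} [Fintype ι] [DecidableEq ι] (b : Basis ι A B)

include β b

lemma infinite_of_basis : Infinite B := by
  have := β.infinite
  have hne : Nonempty ι := b.index_nonempty
  exact Infinite.of_injective _ (Module.Basis.equivFun b).symm.injective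

lemma nm_span {x : B} (hx : x ≠ 0) : nm (span {x}) = β.ab (Algebra.norm A x) := by
  have hI : span {x} ≠ ⊥ := by simpa using hx
  have e := Nat.card_congr (Ideal.quotientEquivPiSpan (span {x}) b hI).toEquiv
  rw [nm, e, Nat.card_pi]
  obtain ⟨u, hu⟩ := associated_norm_prod_smith b hx
  have h1 : β.ab (Algebra.norm A x) = β.ab (∏ i, smithCoeffs b (span {x}) hI i) := by
    rw [← hu, β.ab_mul, β.ab_unit u.isUnit, mul_one]
  rw [h1, β.ab_prod]
  exact Finset.prod_congr rfl fun i _ => β.card_quot _ (smithCoeffs_ne_zero b _ hI i)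

lemma nm_span_pos {x : B} (hx : x ≠ 0) : 0 < nm (span {x}) := by
  have hI : span {x} ≠ ⊥ := by simpa using hx
  have e := Nat.card_congr (Ideal.quotientEquivPiSpan (span {x}) b hI).toEquiv
  rw [nm, e, Nat.card_pi]
  refine Finset.prod_pos fun i _ => ?_
  rw [β.card_quot _ (smithCoeffs_ne_zero b _ hI i)]
  exact β.ab_pos (smithCoeffs_ne_zero b _ hI i)

lemma finQuot_of_basis : FinQuot B := fun _ hx => Nat.finite_of_card_ne_zero (nm_span_pos β b hx).ne'

lemma nm_pos {I : Ideal B} (hI : I ≠ ⊥) : 0 < nm I := by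
  obtain ⟨x, hx, hx0⟩ := Submodule.exists_mem_ne_zero_of_ne_bot hI
  have := finQuot_of_basis β b x hx0
  have : Finite (B ⧸ I) := Finite.of_surjective _
      (Ideal.Quotient.factor_surjective ((span_singleton_le_iff_mem _).2 hx))
  exact Nat.card_pos

/-- Coordinates control the norm. -/
lemma exists_mulMatrix_bound : ∃ m0 : ℕ, 1 ≤ m0 ∧ ∀ (x : B) (X : ℕ), (∀ k, β.ab (b.repr x k) ≤ X) →
    ∀ i j, β.ab (Algebra.leftMulMatrix b x i j) ≤ m0 * X := by
  refine ⟨∑ k, ∑ i, ∑ j, β.ab (Algebra.leftMulMatrix b (b k) i j) + 1, by omega, ?_⟩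
  intro x X hX i j
  have e : Algebra.leftMulMatrix b x i j =
      ∑ k, b.repr x k * Algebra.leftMulMatrix b (b k) i j := by
    conv_lhs => rw [← b.sum_repr x, map_sum]
    simp [Matrix.sum_apply]
  rw [e]
  calc _ ≤ ∑ k, X * β.ab (Algebra.leftMulMatrix b (b k) i j) := by
        refine (β.ab_sum _ _).trans (Finset.sum_le_sum fun k _ => ?_)
        rw [β.ab_mul]; exact Nat.mul_le_mul_right _ (hX k)
    _ = (∑ k, β.ab (Algebra.leftMulMatrix b (b k) i j)) * X := by rw [← Finset.mul_sum, mul_comm]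
    _ ≤ _ := by
        refine Nat.mul_le_mul_right _ (le_trans (Finset.sum_le_sum fun k _ => ?_) (Nat.le_succ _))
        exact (Finset.single_le_sum (f := fun j => β.ab (Algebra.leftMulMatrix b (b k) i j))
          (fun _ _ => Nat.zero_le _) (Finset.mem_univ j)).trans
          (Finset.single_le_sum (f := fun i => ∑ j, β.ab (Algebra.leftMulMatrix b (b k) i j))
          (fun _ _ => Nat.zero_le _) (Finset.mem_univ i))

lemma exists_norm_bound : ∃ c1 : ℕ, 1 ≤ c1 ∧ ∀ (x : B) (X : ℕ), (∀ k, β.ab (b.repr x k) ≤ X) →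
    x ≠ 0 → nm (span {x}) ≤ c1 * X ^ Fintype.card ι := by
  obtain ⟨m0, hm0, h⟩ := exists_mulMatrix_bound β b
  refine ⟨(Fintype.card ι).factorial * m0 ^ Fintype.card ι, ?_, fun x X hX hx => ?_⟩
  · exact Nat.mul_pos (Nat.factorial_pos _) (pow_pos hm0 _)
  · rw [nm_span β b hx, Algebra.norm_eq_matrix_det b]
    refine (β.ab_det_le _ (h x X hX)).trans (le_of_eq ?_)
    rw [mul_pow]; ring

omit [IsDomain A] [IsPrincipalIdealRing A] [DecidableEq ι] in
/-- The elements whose coordinates have absolute value at most `X`. -/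
lemma box_card (X : ℕ) : {x : B | ∀ k, β.ab (b.repr x k) ≤ X}.Finite ∧
    {x : B | ∀ k, β.ab (b.repr x k) ≤ X}.ncard = {a | β.ab a ≤ X}.ncard ^ Fintype.card ι := by
  classical
  have e : {x : B | ∀ k, β.ab (b.repr x k) ≤ X} =
      b.equivFun.symm '' (Fintype.piFinset fun _ : ι => (β.ball_fin X).toFinset : Finset (ι → A)) := by
    ext x
    simp only [Set.mem_ofPred_eq, Set.mem_image, Finset.mem_coe, Fintype.mem_piFinset,
      Set.Finite.mem_toFinset]
    constructor
    · intro h; exact ⟨b.equivFun x, by simpa using h, by simp⟩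
    · rintro ⟨c, hc, rfl⟩ k
      have := congrFun (b.equivFun.apply_symm_apply c) k
      rw [b.equivFun_apply] at this
      rw [this]; exact hc k
  rw [e]
  refine ⟨(Finset.finite_toSet _).image _, ?_⟩
  rw [Set.ncard_image_of_injective _ b.equivFun.symm.injective, Set.ncard_coe_finset,
    Fintype.card_piFinset, Finset.prod_const, Finset.card_univ,
    Set.ncard_eq_toFinset_card _ (β.ball_fin X)]

/-- Pigeonhole: an ideal of norm less than `X ^ D` has a nonzero element of size at most `2 X`. -/
lemma exists_small {I : Ideal B} (hI : I ≠ ⊥) {X : ℕ} (hX1 : 1 ≤ X)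
    (hX : nm I < X ^ Fintype.card ι) :
    ∃ x ∈ I, x ≠ 0 ∧ ∀ k, β.ab (b.repr x k) ≤ 2 * X := by
  classical
  have hfin : Finite (B ⧸ I) := Nat.finite_of_card_ne_zero (nm_pos β b hI).ne'
  have := Fintype.ofFinite (B ⧸ I)
  obtain ⟨hf, hc⟩ := box_card β b X
  have hlt : (Finset.univ : Finset (B ⧸ I)).card < hf.toFinset.card := by
    rw [← Set.ncard_eq_toFinset_card _ hf, hc, Finset.card_univ, ← Nat.card_eq_fintype_card]
    exact hX.trans_le (Nat.pow_le_pow_left (β.le_ball X hX1) _)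
  obtain ⟨x, hx, y, hy, hne, hxy⟩ := Finset.exists_ne_map_eq_of_card_lt_of_maps_to hlt
    (f := Ideal.Quotient.mk I) (fun _ _ => Finset.mem_coe.2 (Finset.mem_univ _))
  rw [Set.Finite.mem_toFinset] at hx hy
  refine ⟨x - y, Ideal.Quotient.eq.1 hxy, sub_ne_zero.2 hne, fun k => ?_⟩
  rw [map_sub, Finsupp.sub_apply]
  exact (β.ab_sub _ _).trans (by have := hx k; have := hy k; omega)

omit [IsPrincipalIdealRing A] [IsDedekindDomain B] [Fintype ι] [DecidableEq ι] in
lemma algebraMap_inj_of_basis [IsDomain B] : Function.Injective (algebraMap A B) := by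
  obtain ⟨i⟩ := b.index_nonempty
  rw [injective_iff_map_eq_zero]
  intro a ha
  have h := congrArg (fun x => b.repr x i) (show a • b i = 0 by rw [Algebra.smul_def, ha, zero_mul])
  simpa using h

lemma finite_nm_le (Y : ℕ) : {I : Ideal B | I ≠ ⊥ ∧ nm I ≤ Y}.Finite := by
  classical
  have hinj : Function.Injective (algebraMap A B) := algebraMap_inj_of_basis β b
  have hsub : {I : Ideal B | I ≠ ⊥ ∧ nm I ≤ Y} ⊆
      ⋃ a ∈ {a : A | β.ab a ≤ 2 * (Y + 1)} ∩ {a | a ≠ 0},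
        {I : Ideal B | I ∣ span {algebraMap A B a}} := by
    rintro I ⟨hI, hY⟩
    have hfin : Finite (B ⧸ I) := Nat.finite_of_card_ne_zero (nm_pos β b hI).ne'
    have := Fintype.ofFinite (B ⧸ I)
    have hlt : (Finset.univ : Finset (B ⧸ I)).card < (β.ball_fin (Y + 1)).toFinset.card := by
      rw [← Set.ncard_eq_toFinset_card _ (β.ball_fin (Y + 1)), Finset.card_univ,
        ← Nat.card_eq_fintype_card]
      exact (Nat.lt_succ_of_le hY).trans_le (β.le_ball (Y + 1) (by omega))
    obtain ⟨x, hx, y, hy, hne, hxy⟩ := Finset.exists_ne_map_eq_of_card_lt_of_maps_to hlt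
      (f := fun a => Ideal.Quotient.mk I (algebraMap A B a))
      (fun _ _ => Finset.mem_coe.2 (Finset.mem_univ _))
    rw [Set.Finite.mem_toFinset] at hx hy
    simp only [Set.mem_iUnion]
    refine ⟨x - y, ⟨?_, sub_ne_zero.2 hne⟩, ?_⟩
    · exact (β.ab_sub _ _).trans (by have := hx.out; have := hy.out; omega)
    · refine Ideal.dvd_iff_le.2 ((span_singleton_le_iff_mem _).2 ?_)
      rw [map_sub]; exact Ideal.Quotient.eq.1 hxy
  refine Set.Finite.subset (Set.Finite.biUnion ((β.ball_fin _).inter_of_left _) ?_) hsub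
  rintro a ⟨-, ha⟩
  have hne : (span {algebraMap A B a} : Ideal B) ≠ 0 := by
    simpa using (map_ne_zero_iff _ hinj).2 ha
  have := UniqueFactorizationMonoid.fintypeSubtypeDvd (span {algebraMap A B a} : Ideal B) hne
  exact Set.finite_coe_iff.1 (@Finite.of_fintype _ this)

omit β b [IsDomain A] [IsPrincipalIdealRing A] [CommRing A] [CommRing B] [IsDedekindDomain B] [Algebra A B] [Fintype ι] [DecidableEq ι] in
lemma exists_root {D n : ℕ} (hD : 1 ≤ D) (hn : 1 ≤ n) :
    ∃ X : ℕ, 1 ≤ X ∧ n < X ^ D ∧ X ^ D ≤ 2 ^ D * n := by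
  have hex : ∃ X : ℕ, n < X ^ D := ⟨n + 1, lt_of_lt_of_le (Nat.lt_succ_self n)
    (Nat.le_self_pow (by omega) _)⟩
  set X := Nat.find hex with hXdef
  have h1 : n < X ^ D := Nat.find_spec hex
  have hX2 : 2 ≤ X := by
    by_contra hlt
    have : X ^ D ≤ 1 ^ D := Nat.pow_le_pow_left (by omega) _
    rw [one_pow] at this; omega
  have h2 : ¬ n < (X - 1) ^ D := Nat.find_min hex (by omega)
  refine ⟨X, by omega, h1, ?_⟩
  calc X ^ D ≤ (2 * (X - 1)) ^ D := Nat.pow_le_pow_left (by omega) _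
    _ = 2 ^ D * (X - 1) ^ D := by rw [mul_pow]
    _ ≤ _ := Nat.mul_le_mul_left _ (by omega)

/-- Every nonzero ideal divides a small principal ideal with cofactor of bounded norm. -/
lemma exists_cofactor : ∃ c2 : ℕ, ∀ I : Ideal B, I ≠ ⊥ → ∃ (x : B) (J : Ideal B) (X : ℕ),
    x ≠ 0 ∧ I * J = span {x} ∧ J ≠ ⊥ ∧ nm J ≤ c2 ∧ (∀ k, β.ab (b.repr x k) ≤ 2 * X) ∧
      X ^ Fintype.card ι ≤ 2 ^ Fintype.card ι * nm I := by
  have := infinite_of_basis β b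
  have : Nonempty ι := b.index_nonempty
  obtain ⟨c1, hc1, h⟩ := exists_norm_bound β b
  refine ⟨c1 * 4 ^ Fintype.card ι, fun I hI => ?_⟩
  obtain ⟨X, hX1, hX2, hX3⟩ := exists_root (D := Fintype.card ι) Fintype.card_pos (nm_pos β b hI)
  obtain ⟨x, hx, hx0, hxk⟩ := exists_small β b hI hX1 hX2
  obtain ⟨J, hJ⟩ := Ideal.dvd_iff_le.2 ((span_singleton_le_iff_mem I).2 hx)
  have hJ0 : J ≠ ⊥ := by rintro rfl; apply hx0; simpa using hJ
  refine ⟨x, J, X, hx0, hJ.symm, hJ0, ?_, hxk, hX3⟩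
  have h1 := h x (2 * X) hxk hx0
  rw [hJ, nm_mul] at h1
  have h2 : nm I * nm J ≤ nm I * (c1 * 4 ^ Fintype.card ι) := by
    refine h1.trans ?_
    calc c1 * (2 * X) ^ Fintype.card ι = c1 * (2 ^ Fintype.card ι * X ^ Fintype.card ι) := by
          rw [mul_pow]
      _ ≤ c1 * (2 ^ Fintype.card ι * (2 ^ Fintype.card ι * nm I)) := by gcongr
      _ = _ := by
          rw [show (4 : ℕ) = 2 * 2 from rfl, mul_pow]; ring
  exact Nat.le_of_mul_le_mul_left h2 (nm_pos β b hI)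

lemma finite_classGroup : Finite (ClassGroup B) := by
  obtain ⟨c2, h⟩ := exists_cofactor β b
  have hfin := finite_nm_le β b c2
  have : Finite {I : Ideal B | I ≠ ⊥ ∧ nm I ≤ c2} := hfin
  refine Finite.of_surjective (fun I : {I : Ideal B | I ≠ ⊥ ∧ nm I ≤ c2} =>
    (ClassGroup.mk0 ⟨I.1, mem_nonZeroDivisors_of_ne_zero I.2.1⟩)) ?_
  intro c
  obtain ⟨⟨I, hI⟩, hIc⟩ := ClassGroup.mk0_surjective c⁻¹
  obtain ⟨x, J, X, hx0, hIJ, hJ0, hJ, -⟩ := h I (nonZeroDivisors.ne_zero hI)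
  refine ⟨⟨J, hJ0, hJ⟩, ?_⟩
  have h1 : ClassGroup.mk0 (⟨I, hI⟩ * ⟨J, mem_nonZeroDivisors_of_ne_zero hJ0⟩ :
      nonZeroDivisors (Ideal B)) = 1 := by
    refine (ClassGroup.mk0_eq_one_iff (I := I * J) _).2 ?_
    rw [hIJ]; exact ⟨x, rfl⟩
  rw [map_mul, hIc, inv_mul_eq_one] at h1
  exact h1.symm

end Counts
end SKOne

namespace SKOne
open Ideal Module

/-! ### Counting ideals by norm -/

section Counts
variable {A : Type} [CommRing A] [IsDomain A] [IsPrincipalIdealRing A] (β : BaseRing A)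
  {B : Type} [CommRing B] [IsDedekindDomain B] [Algebra A B]
  {ι : Type} [Fintype ι] [DecidableEq ι] (b : Basis ι A B)

include β b

lemma nm_le_of_mem {x y : B} (hy : y ≠ 0) (h : y ∈ span {x}) : nm (span {x}) ≤ nm (span {y}) := by
  have := infinite_of_basis β b
  obtain ⟨J, hJ⟩ := Ideal.dvd_iff_le.2 ((span_singleton_le_iff_mem (span {x})).2 h)
  have hp := nm_span_pos β b hy
  rw [hJ, nm_mul] at hp ⊢
  exact Nat.le_mul_of_pos_right _ (Nat.pos_of_mul_pos_left hp)

/-- The number of ideals of norm at most `Y` is `O(Y)`. -/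
lemma exists_count_le : ∃ C : ℕ, ∀ Y : ℕ, 1 ≤ Y →
    {I : Ideal B | I ≠ ⊥ ∧ nm I ≤ Y}.ncard ≤ C * Y := by
  classical
  have : Nonempty ι := b.index_nonempty
  obtain ⟨c2, h⟩ := exists_cofactor β b
  choose! x J X hx0 hIJ hJ0 hJ hbox hX using h
  set D := Fintype.card ι with hD
  have hD1 : 1 ≤ D := Fintype.card_pos
  set F := {I : Ideal B | I ≠ ⊥ ∧ nm I ≤ c2}
  have hF : F.Finite := finite_nm_le β b c2
  refine ⟨(β.K * 8) ^ D * F.ncard, fun Y hY => ?_⟩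
  obtain ⟨Z, hZ1, hZ2, hZ3⟩ := exists_root hD1 hY
  obtain ⟨hbf, hbc⟩ := box_card β b (4 * Z)
  set bx := {x : B | ∀ k, β.ab (b.repr x k) ≤ 4 * Z}
  have hle : {I : Ideal B | I ≠ ⊥ ∧ nm I ≤ Y}.ncard ≤ (bx ×ˢ F).ncard := by
    refine Set.ncard_le_ncard_of_injOn (fun I => (x I, J I)) ?_ ?_ (hbf.prod hF)
    · rintro I ⟨hI, hIY⟩
      refine ⟨fun k => (hbox I hI k).trans ?_, hJ0 I hI, hJ I hI⟩
      have : X I ≤ 2 * Z := by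
        by_contra hlt
        have h1 : (2 * Z) ^ D < X I ^ D := Nat.pow_lt_pow_left (by omega) (by omega)
        have h2 := hX I hI
        have h3 : 2 ^ D * nm I ≤ 2 ^ D * Z ^ D := Nat.mul_le_mul_left _ (hIY.trans hZ2.le)
        rw [mul_pow] at h1
        omega
      omega
    · rintro I ⟨hI, -⟩ I' ⟨hI', -⟩ he
      simp only [Prod.mk.injEq] at he
      have h1 := hIJ I hI
      rw [he.1, he.2, ← hIJ I' hI'] at h1
      exact mul_right_cancel₀ (hJ0 I' hI') h1
  refine hle.trans ?_
  rw [Set.ncard_prod, hbc]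
  calc _ ≤ (β.K * (4 * Z)) ^ D * F.ncard :=
        Nat.mul_le_mul_right _ (Nat.pow_le_pow_left (β.ball_le _ (by omega)) _)
    _ = (β.K * 4) ^ D * F.ncard * Z ^ D := by rw [← mul_assoc, mul_pow]; ring
    _ ≤ (β.K * 4) ^ D * F.ncard * (2 ^ D * Y) := Nat.mul_le_mul_left _ hZ3
    _ = _ := by rw [show β.K * 8 = β.K * 4 * 2 by ring, mul_pow (β.K * 4) 2]; ring

omit β b [IsDomain A] [IsPrincipalIdealRing A] [CommRing A] [CommRing B] [IsDedekindDomain B] [Algebra A B] [Fintype ι] [DecidableEq ι] in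
lemma add_pow_bound {q m : ℕ} (h : m ≤ q) (D : ℕ) :
    q * (q + m) ^ D ≤ q ^ D * (q + m * 3 ^ D) := by
  induction D with
  | zero => simp
  | succ D ih =>
    calc q * (q + m) ^ (D + 1) = (q + m) * (q * (q + m) ^ D) := by ring
      _ ≤ (q + m) * (q ^ D * (q + m * 3 ^ D)) := Nat.mul_le_mul_left _ ih
      _ = q ^ D * (q * q + m * 3 ^ D * q + m * q + m * (m * 3 ^ D)) := by ring
      _ ≤ q ^ D * (q * q + m * 3 ^ D * q + m * 3 ^ D * q + q * (m * 3 ^ D)) := by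
          have : 1 ≤ 3 ^ D := Nat.one_le_pow _ _ (by norm_num)
          gcongr
          exact Nat.le_mul_of_pos_right _ (by omega)
      _ = _ := by ring

/-- The number of ideals of norm at most `Y` is at least a constant times `Y`: the principal ideals
generated by perturbations of powers of a fixed large element of the base ring are distinct. -/
lemma exists_le_count : ∃ c : ℝ, 0 < c ∧ ∀ Y : ℕ, 1 ≤ Y →
    c * Y ≤ ({I : Ideal B | I ≠ ⊥ ∧ nm I ≤ Y}.ncard : ℝ) := by
  classical
  have : Nonempty ι := b.index_nonempty
  have hinf := infinite_of_basis β b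
  obtain ⟨m0, hm0, hm⟩ := exists_mulMatrix_bound β b
  obtain ⟨c1, hc1, hn⟩ := exists_norm_bound β b
  set D := Fintype.card ι with hD
  have hD1 : 1 ≤ D := Fintype.card_pos
  set e0 := ∑ k, β.ab (b.repr 1 k) with he0
  obtain ⟨τ, hτ⟩ := β.exists_large (m0 + 2 * D.factorial * m0 * 3 ^ D + 4 * c1)
  set q0 := β.ab τ with hq0
  have hq1 : 1 ≤ q0 := by omega
  -- the elements `τ ^ (k + 1) + w` with `w` in a box of size `q0 ^ k`
  let y : ℕ → B → B := fun k w => algebraMap A B (τ ^ (k + 1)) + w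
  have hdet : ∀ k w, (∀ i, β.ab (b.repr w i) ≤ q0 ^ k) →
      (q0 * q0 ^ k) ^ D ≤ 2 * β.ab (Algebra.norm A (y k w)) := by
    intro k w hw
    have h1 := β.ab_det_add (τ ^ (k + 1)) (Algebra.leftMulMatrix b w) (hm w _ hw)
    have e1 : τ ^ (k + 1) • (1 : Matrix ι ι A) + Algebra.leftMulMatrix b w =
        Algebra.leftMulMatrix b (y k w) := by
      rw [map_add, AlgHom.commutes, Algebra.algebraMap_eq_smul_one]
    rw [e1, ← Algebra.norm_eq_matrix_det, ← hD, β.ab_pow, β.ab_pow, ← hq0, pow_succ'] at h1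
    set X := q0 ^ k
    have hX : 0 < X := by positivity
    have h2 := add_pow_bound (q := q0) (m := m0) (by omega) D
    have h3 : (q0 * X + m0 * X) ^ D = (q0 + m0) ^ D * X ^ D := by rw [← add_mul, mul_pow]
    have h4 : 2 * D.factorial * (q0 + m0) ^ D ≤ 2 * D.factorial * q0 ^ D + q0 ^ D := by
      refine Nat.le_of_mul_le_mul_left ?_ hq1
      calc q0 * (2 * D.factorial * (q0 + m0) ^ D) = 2 * D.factorial * (q0 * (q0 + m0) ^ D) := by ring
        _ ≤ 2 * D.factorial * (q0 ^ D * (q0 + m0 * 3 ^ D)) := Nat.mul_le_mul_left _ h2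
        _ = q0 ^ D * (2 * D.factorial * q0 + 2 * D.factorial * m0 * 3 ^ D) := by ring
        _ ≤ q0 ^ D * (2 * D.factorial * q0 + q0) := by gcongr; omega
        _ = _ := by ring
    rw [h3] at h1
    have h5 := Nat.mul_le_mul_right (X ^ D) h4
    rw [mul_pow] at h1 ⊢
    nlinarith
  have hy0 : ∀ k w, (∀ i, β.ab (b.repr w i) ≤ q0 ^ k) → y k w ≠ 0 := by
    intro k w hw h0
    have := Module.Free.of_basis b
    have := Module.Finite.of_basis b
    have := hdet k w hw
    rw [h0, Algebra.norm_zero, β.ab_zero, mul_zero] at this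
    have : 0 < (q0 * q0 ^ k) ^ D := by positivity
    omega
  have hcount : ∀ k : ℕ, (q0 ^ D) ^ k ≤
      {I : Ideal B | I ≠ ⊥ ∧ nm I ≤ c1 * (e0 + 1) ^ D * (q0 ^ D) ^ (k + 1)}.ncard := by
    intro k
    obtain ⟨hbf, hbc⟩ := box_card β b (q0 ^ k)
    have h1 : (q0 ^ D) ^ k ≤ {x : B | ∀ i, β.ab (b.repr x i) ≤ q0 ^ k}.ncard := by
      rw [hbc, ← pow_mul, mul_comm, pow_mul]
      exact Nat.pow_le_pow_left (β.le_ball _ (Nat.one_le_pow _ _ hq1)) _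
    refine h1.trans (Set.ncard_le_ncard_of_injOn (fun w => span {y k w}) ?_ ?_
      (finite_nm_le β b _))
    · intro w hw
      refine ⟨by simpa using hy0 k w hw, ?_⟩
      refine (hn (y k w) ((e0 + 1) * q0 ^ (k + 1)) (fun i => ?_) (hy0 k w hw)).trans (le_of_eq ?_)
      · have e : b.repr (y k w) i = τ ^ (k + 1) * b.repr 1 i + b.repr w i := by
          simp [y, Algebra.algebraMap_eq_smul_one]
        rw [e]
        refine (β.ab_add _ _).trans ?_
        rw [β.ab_mul, β.ab_pow, ← hq0]
        have h2 : β.ab (b.repr 1 i) ≤ e0 :=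
          Finset.single_le_sum (f := fun i => β.ab (b.repr 1 i)) (fun _ _ => Nat.zero_le _)
            (Finset.mem_univ i)
        calc _ ≤ q0 ^ (k + 1) * e0 + q0 ^ (k + 1) := by
              gcongr
              exact (hw i).trans (Nat.pow_le_pow_right hq1 (Nat.le_succ k))
          _ = _ := by ring
      · rw [mul_pow, ← pow_mul, ← pow_mul, mul_comm (k + 1) D]; ring
    · intro w hw w' hw' he
      by_contra hne
      have h2 : w' - w ∈ span {y k w} := by
        have e : w' - w = y k w' - y k w := by simp [y]
        rw [e]
        refine Ideal.sub_mem _ ?_ (mem_span_singleton_self _)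
        have he' : span {y k w} = span {y k w'} := he
        rw [he']; exact mem_span_singleton_self _
      have h3 := nm_le_of_mem β b (sub_ne_zero.2 (Ne.symm hne)) h2
      have h4 := hn (w' - w) (2 * q0 ^ k) (fun i => by
        rw [map_sub, Finsupp.sub_apply]
        exact (β.ab_sub _ _).trans (by have := hw i; have := hw' i; omega))
        (sub_ne_zero.2 (Ne.symm hne))
      have h5 := hdet k w hw
      rw [← nm_span β b (hy0 k w hw)] at h5
      have h10 : 4 * c1 * 2 ^ D < 2 * q0 ^ D := by
        have h7 : (4 * c1) ^ D < q0 ^ D := Nat.pow_lt_pow_left (by omega) (by omega)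
        have h7' : c1 ≤ c1 ^ D := Nat.le_self_pow (by omega) _
        have h8 : 2 ≤ 2 ^ D := Nat.le_self_pow (by omega) _
        have e : (4 * c1) ^ D = 2 ^ D * 2 ^ D * c1 ^ D := by
          rw [mul_pow, show (4:ℕ) = 2 * 2 from rfl, mul_pow]
        have h9 : 2 * 2 ^ D * c1 ≤ 2 ^ D * 2 ^ D * c1 ^ D := by gcongr
        nlinarith
      have h11 := Nat.mul_lt_mul_of_pos_right h10 (show 0 < (q0 ^ k) ^ D by positivity)
      rw [mul_pow] at h4 h5
      nlinarith
  set q := q0 ^ D with hq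
  set C1 := c1 * (e0 + 1) ^ D with hC1
  have hC1p : 1 ≤ C1 := Nat.mul_pos hc1 (by positivity)
  have hq2 : 2 ≤ q := le_trans (show 2 ≤ q0 by omega) (Nat.le_self_pow (by omega) _)
  refine ⟨1 / (C1 * q ^ 2), by positivity, fun Y hY => ?_⟩
  rw [div_mul_eq_mul_div, one_mul, div_le_iff₀ (by positivity)]
  norm_cast
  by_cases hYs : Y < C1 * q
  · have h1 : 1 ≤ {I : Ideal B | I ≠ ⊥ ∧ nm I ≤ Y}.ncard :=
      (Set.ncard_pos (finite_nm_le β b Y)).2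
        ⟨⊤, by simp [nm_top, hY]⟩
    calc Y ≤ 1 * (C1 * q ^ 2) := by nlinarith
      _ ≤ _ := Nat.mul_le_mul_right _ h1
  · rw [not_lt] at hYs
    have hz : Y / C1 ≠ 0 := by
      have : 1 ≤ Y / C1 := (Nat.le_div_iff_mul_le hC1p).2 (by nlinarith)
      omega
    have hlog : 1 ≤ Nat.log q (Y / C1) := by
      refine Nat.le_log_of_pow_le (by omega) ?_
      rw [pow_one]; exact (Nat.le_div_iff_mul_le hC1p).2 (by linarith)
    obtain ⟨k, hk⟩ : ∃ k, Nat.log q (Y / C1) = k + 1 := ⟨_, (Nat.sub_add_cancel hlog).symm⟩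
    have h1 : q ^ (k + 1) ≤ Y / C1 := by rw [← hk]; exact Nat.pow_log_le_self _ hz
    have h2 : Y / C1 < q ^ (k + 1 + 1) := by
      rw [← hk]; exact Nat.lt_pow_succ_log_self (by omega) _
    rw [Nat.div_lt_iff_lt_mul hC1p] at h2
    have h3 : C1 * q ^ (k + 1) ≤ Y := by
      rw [mul_comm]; exact (Nat.le_div_iff_mul_le hC1p).1 h1
    have h4 : q ^ k ≤ {I : Ideal B | I ≠ ⊥ ∧ nm I ≤ Y}.ncard :=
      (hcount k).trans (Set.ncard_le_ncard (fun I hI => ⟨hI.1, hI.2.trans h3⟩)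
        (finite_nm_le β b Y))
    calc Y ≤ q ^ k * (C1 * q ^ 2) := by
          refine h2.le.trans (le_of_eq ?_); ring
      _ ≤ _ := Nat.mul_le_mul_right _ h4

end Counts
end SKOne

namespace SKOne
open Ideal Module IsDedekindDomain Filter Topology

/-! ### Zeta functions and Dirichlet density -/

/-- The nonzero ideals. -/
abbrev NZI (B : Type) [CommRing B] := {I : Ideal B // I ≠ ⊥}

/-- What is needed about the zeta function of `B`: finiteness of norms, convergence for `s > 1`,
and a simple pole (up to bounded factors) at `s = 1`. -/
structure Zeta (B : Type) [CommRing B] [IsDedekindDomain B] : Prop where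
  inf : Infinite B
  pos : ∀ I : Ideal B, I ≠ ⊥ → 0 < nm I
  fin : ∀ Y : ℕ, {I : NZI B | nm I.1 ≤ Y}.Finite
  summ : ∀ s : ℝ, 1 < s → Summable fun I : NZI B => (nm I.1 : ℝ) ^ (-s)
  pole : ∃ C : ℝ, ∀ s : ℝ, 1 < s → s ≤ 2 →
    |Real.log (∑' I : NZI B, (nm I.1 : ℝ) ^ (-s)) - Real.log (1 / (s - 1))| ≤ C

/-- The number of ideals of norm at most `Y` is of order `Y`, so the zeta function of `B` grows like
`1 / (s - 1)` as `s` tends to `1`. -/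
lemma zeta_of_basis {A : Type} [CommRing A] [IsDomain A] [IsPrincipalIdealRing A] (β : BaseRing A)
    {B : Type} [CommRing B] [IsDedekindDomain B] [Algebra A B]
    {ι : Type} [Fintype ι] (b : Basis ι A B) : Zeta B := by
  classical
  have hinf := infinite_of_basis β b
  have hpos : ∀ I : NZI B, 0 < nm I.1 := fun I => nm_pos β b I.2
  have himg : ∀ Y : ℕ, Subtype.val '' {I : NZI B | nm I.1 ≤ Y} = {I : Ideal B | I ≠ ⊥ ∧ nm I ≤ Y} := by
    intro Y; ext I; constructor
    · rintro ⟨J, hJ, rfl⟩; exact ⟨J.2, hJ⟩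
    · rintro ⟨h1, h2⟩; exact ⟨⟨I, h1⟩, h2, rfl⟩
  have hfin : ∀ Y : ℕ, {I : NZI B | nm I.1 ≤ Y}.Finite := fun Y => by
    refine Set.Finite.of_finite_image (f := Subtype.val) ?_ Subtype.val_injective.injOn
    rw [himg]; exact finite_nm_le β b Y
  have hcard : ∀ Y : ℕ, {I : NZI B | nm I.1 ≤ Y}.ncard = {I : Ideal B | I ≠ ⊥ ∧ nm I ≤ Y}.ncard :=
    fun Y => by rw [← himg, Set.ncard_image_of_injective _ Subtype.val_injective]
  obtain ⟨C, hC⟩ := exists_count_le β b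
  obtain ⟨c, hc0, hc⟩ := exists_le_count β b
  have hC' : ∀ Y : ℕ, 1 ≤ Y → ({I : NZI B | nm I.1 ≤ Y}.ncard : ℝ) ≤ C * Y := fun Y hY => by
    rw [hcard]; exact_mod_cast hC Y hY
  have hc' : ∀ Y : ℕ, 1 ≤ Y → c * Y ≤ ({I : NZI B | nm I.1 ≤ Y}.ncard : ℝ) := fun Y hY => by
    rw [hcard]; exact hc Y hY
  have hCC : (0 : ℝ) < C := by
    have h1 := hc' 1 le_rfl; have h2 := hC' 1 le_rfl
    push_cast at h1 h2; linarith
  have hsum : ∀ s : ℝ, 1 < s → Summable fun I : NZI B => (nm I.1 : ℝ) ^ (-s) :=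
    fun s hs => summable_rpow hpos hfin hC' hCC.le hs
  refine ⟨hinf, fun I hI => nm_pos β b hI, hfin, hsum, ?_⟩
  obtain ⟨c', hc'0, hlow⟩ := exists_le_tsum_rpow hpos hfin hC' hCC.le hc0 hc'
  refine ⟨|Real.log c'| + |Real.log (4 * C)|, fun s hs hs2 => ?_⟩
  have h1 := hlow s hs hs2
  have h2 : ∑' I : NZI B, (nm I.1 : ℝ) ^ (-s) ≤ 4 * C / (s - 1) :=
    Real.tsum_le_of_sum_le (fun _ => by positivity) (sum_rpow_le hpos hfin hC' hCC.le hs hs2)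
  have hs0 : 0 < s - 1 := by linarith
  have hp : 0 < c' / (s - 1) := by positivity
  have l1 := Real.log_le_log hp h1
  have l2 := Real.log_le_log (hp.trans_le h1) h2
  rw [Real.log_div (by positivity) (by positivity)] at l1 l2
  rw [one_div, Real.log_inv, abs_le]
  have a1 := neg_abs_le (Real.log c')
  have a2 := le_abs_self (Real.log (4 * C))
  have a3 := abs_nonneg (Real.log c')
  have a4 := abs_nonneg (Real.log (4 * C))
  constructor <;> linarith

section Euler
variable {B : Type} [CommRing B] [IsDedekindDomain B]

/-- `v` as a nonzero ideal. -/
def nzi (v : HeightOneSpectrum B) : NZI B := ⟨v.asIdeal, v.ne_bot⟩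

lemma nzi_inj : Function.Injective (nzi (B := B)) := fun v w h =>
  HeightOneSpectrum.ext (congrArg Subtype.val h)

open Classical in
/-- The sum of `f` over the ideals coprime to `S`. -/
noncomputable def sieve (f : Ideal B → ℂ) (S : Finset (HeightOneSpectrum B)) : ℂ :=
  ∑' I : NZI B, if ∀ v ∈ S, ¬ v.asIdeal ∣ I.1 then f I.1 else 0

/-- Removing the multiples of `v` multiplies the sum by `1 - f v`: one factor of the Euler product. -/
lemma sieve_insert {f : Ideal B → ℂ} (hmul : ∀ I J, f (I * J) = f I * f J)
    (hf : Summable fun I : NZI B => ‖f I.1‖) {S : Finset (HeightOneSpectrum B)}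
    {v : HeightOneSpectrum B} (hv : v ∉ S) [DecidableEq (HeightOneSpectrum B)] :
    sieve f (insert v S) = sieve f S * (1 - f v.asIdeal) := by
  classical
  have hsm : ∀ (P : NZI B → Prop) [DecidablePred P], Summable fun I : NZI B => if P I then f I.1 else 0 := by
    intro P _
    refine Summable.of_norm_bounded hf fun I => ?_
    split_ifs <;> simp
  -- the ideals coprime to `S` and divisible by `v` are the `v * I` with `I` coprime to `S`
  have key : ∑' I : NZI B, (if (∀ w ∈ S, ¬ w.asIdeal ∣ I.1) ∧ v.asIdeal ∣ I.1 then f I.1 else 0) =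
      f v.asIdeal * sieve f S := by
    rw [sieve, ← tsum_mul_left]
    let g : NZI B → NZI B := fun I => ⟨v.asIdeal * I.1, mul_ne_zero v.ne_bot I.2⟩
    have hg : Function.Injective g := by
      intro I J h
      have := congrArg Subtype.val h
      exact Subtype.ext (mul_left_cancel₀ v.ne_bot this)
    rw [← hg.tsum_eq]
    · refine tsum_congr fun I => ?_
      have hiff : ((∀ w ∈ S, ¬ w.asIdeal ∣ (g I).1) ∧ v.asIdeal ∣ (g I).1) ↔
          ∀ w ∈ S, ¬ w.asIdeal ∣ I.1 := by
        constructor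
        · rintro ⟨h, -⟩ w hw hd; exact h w hw (hd.mul_left _)
        · refine fun h => ⟨fun w hw hd => ?_, dvd_mul_right _ _⟩
          rcases w.prime.dvd_or_dvd hd with h1 | h1
          · have h2 : v.asIdeal = w.asIdeal :=
              v.isMaximal.eq_of_le w.isPrime.ne_top (Ideal.dvd_iff_le.1 h1)
            exact hv (HeightOneSpectrum.ext h2 ▸ hw)
          · exact h w hw h1
      simp only [hiff]
      split_ifs
      · exact hmul _ _
      · simp
    · intro I hI
      simp only [Function.mem_support, ne_eq, ite_eq_right_iff, Classical.not_imp] at hI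
      obtain ⟨J, hJ⟩ := hI.1.2
      exact ⟨⟨J, fun h => I.2 (by rw [hJ, h, Ideal.mul_bot])⟩, Subtype.ext hJ.symm⟩
  have hsplit : sieve f S = sieve f (insert v S) + f v.asIdeal * sieve f S := by
    rw [← key, sieve, sieve, ← Summable.tsum_add (hsm _) (hsm _)]
    refine tsum_congr fun I => ?_
    simp only [Finset.mem_insert, forall_eq_or_imp]
    by_cases h1 : ∀ w ∈ S, ¬ w.asIdeal ∣ I.1 <;> by_cases h2 : v.asIdeal ∣ I.1 <;> simp [h1, h2]
  rw [mul_one_sub, mul_comm _ (f v.asIdeal)]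
  linear_combination -hsplit

lemma sieve_eq_prod {f : Ideal B → ℂ} (hmul : ∀ I J, f (I * J) = f I * f J)
    (hf : Summable fun I : NZI B => ‖f I.1‖) (S : Finset (HeightOneSpectrum B)) :
    sieve f S = (∑' I : NZI B, f I.1) * ∏ v ∈ S, (1 - f v.asIdeal) := by
  classical
  induction S using Finset.induction_on with
  | empty => simp [sieve]
  | insert v S hv ih => rw [sieve_insert hmul hf hv, ih, Finset.prod_insert hv]; ring

lemma sieve_tendsto {f : Ideal B → ℂ} (h1 : f ⊤ = 1)
    (hf : Summable fun I : NZI B => ‖f I.1‖) : Tendsto (sieve f) atTop (𝓝 1) := by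
  classical
  have hlim : ∑' I : NZI B, (if I.1 = ⊤ then (1 : ℂ) else 0) = 1 := by
    rw [tsum_eq_single (⟨⊤, top_ne_bot⟩ : NZI B)]
    · simp
    · intro I hI
      rw [if_neg]; exact fun h => hI (Subtype.ext h)
  rw [← hlim]
  refine tendsto_tsum_of_dominated_convergence hf (fun I => ?_) (Eventually.of_forall fun S I => ?_)
  · refine tendsto_const_nhds.congr' ?_
    by_cases hI : I.1 = ⊤
    · refine Eventually.of_forall fun S => ?_
      beta_reduce
      rw [if_pos hI, if_pos, hI, h1]
      intro v _ hd
      rw [hI] at hd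
      exact v.isPrime.ne_top (top_le_iff.1 (Ideal.dvd_iff_le.1 hd))
    · obtain ⟨P, hP, hIP⟩ := Ideal.exists_le_maximal I.1 hI
      have hP0 : P ≠ ⊥ := fun h => I.2 (le_bot_iff.1 (h ▸ hIP))
      let v : HeightOneSpectrum B := ⟨P, hP.isPrime, hP0⟩
      filter_upwards [eventually_ge_atTop {v}] with S hS
      beta_reduce
      rw [if_neg hI, if_neg]
      intro h
      exact h v (hS (Finset.mem_singleton_self v)) (Ideal.dvd_iff_le.2 hIP)
  · split_ifs <;> simp

lemma abs_log_one_sub {z : ℂ} (hz : ‖z‖ ≤ 1 / 2) : |Real.log ‖1 - z‖ + z.re| ≤ ‖z‖ ^ 2 := by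
  have h := Complex.norm_log_one_add_sub_self_le (z := -z) (by rw [norm_neg]; linarith)
  have h2 := (Complex.abs_re_le_norm _).trans h
  rw [Complex.sub_re, Complex.log_re, norm_neg, Complex.neg_re, sub_neg_eq_add, ← sub_eq_add_neg] at h2
  refine h2.trans ?_
  have h3 : (1 - ‖z‖)⁻¹ ≤ 2 := by
    rw [inv_le_comm₀ (by linarith) (by norm_num)]; linarith
  nlinarith [sq_nonneg ‖z‖, mul_le_mul_of_nonneg_left h3 (sq_nonneg ‖z‖)]

lemma two_le_nm (hZ : Zeta B) (v : HeightOneSpectrum B) : 2 ≤ nm v.asIdeal := by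
  have h1 := hZ.pos _ v.ne_bot
  have h2 : nm v.asIdeal ≠ 1 := fun h => v.isPrime.ne_top (nm_eq_one_iff.1 h)
  omega

lemma Zeta.summ_prime (hZ : Zeta B) {s : ℝ} (hs : 1 < s) :
    Summable fun v : HeightOneSpectrum B => (nm v.asIdeal : ℝ) ^ (-s) := by
  have h := (hZ.summ s hs).comp_injective (nzi_inj (B := B))
  exact h

/-- Euler product: the logarithm of an `L`-series is, up to a bounded error, its prime sum. -/
lemma euler (hZ : Zeta B) {f : Ideal B → ℂ} (h1 : f ⊤ = 1) (hmul : ∀ I J, f (I * J) = f I * f J)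
    {s : ℝ} (hs : 1 < s) (hf : ∀ I : NZI B, ‖f I.1‖ ≤ (nm I.1 : ℝ) ^ (-s)) :
    (∑' I : NZI B, f I.1) ≠ 0 ∧
    |Real.log ‖∑' I : NZI B, f I.1‖ - ∑' v : HeightOneSpectrum B, (f v.asIdeal).re| ≤
      ∑' v : HeightOneSpectrum B, (nm v.asIdeal : ℝ) ^ (-2 : ℝ) := by
  have hsum : Summable fun I : NZI B => ‖f I.1‖ :=
    (hZ.summ s hs).of_nonneg_of_le (fun _ => norm_nonneg _) hf
  set L := ∑' I : NZI B, f I.1 with hL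
  have ht : Tendsto (fun S : Finset (HeightOneSpectrum B) => L * ∏ v ∈ S, (1 - f v.asIdeal)) atTop (𝓝 1) := by
    have := sieve_tendsto h1 hsum
    rwa [funext (sieve_eq_prod hmul hsum)] at this
  have hL0 : L ≠ 0 := by
    intro h0
    simp only [h0, zero_mul] at ht
    exact zero_ne_one (tendsto_nhds_unique tendsto_const_nhds ht)
  refine ⟨hL0, ?_⟩
  have hle1 : ∀ v : HeightOneSpectrum B, ‖f v.asIdeal‖ ≤ (nm v.asIdeal : ℝ) ^ (-1 : ℝ) := fun v => by
    refine (hf (nzi v)).trans (Real.rpow_le_rpow_of_exponent_le ?_ (by linarith))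
    have := two_le_nm hZ v
    exact_mod_cast (by omega : 1 ≤ nm v.asIdeal)
  have hhalf : ∀ v : HeightOneSpectrum B, ‖f v.asIdeal‖ ≤ 1 / 2 := fun v => by
    refine (hle1 v).trans ?_
    rw [Real.rpow_neg_one, one_div]
    exact inv_anti₀ (by norm_num) (by exact_mod_cast two_le_nm hZ v)
  have hne : ∀ v : HeightOneSpectrum B, 1 - f v.asIdeal ≠ 0 := fun v h => by
    have := hhalf v
    rw [← sub_eq_zero.1 h, norm_one] at this; norm_num at this
  have hlog : Tendsto (fun S : Finset (HeightOneSpectrum B) => Real.log ‖L‖ +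
      ∑ v ∈ S, Real.log ‖1 - f v.asIdeal‖) atTop (𝓝 0) := by
    have := ((Real.continuousAt_log (x := ‖(1 : ℂ)‖) (by simp)).tendsto.comp ht.norm)
    rw [norm_one, Real.log_one] at this
    refine this.congr fun S => ?_
    simp only [Function.comp]
    rw [norm_mul, norm_prod, Real.log_mul (norm_ne_zero_iff.2 hL0)
      (Finset.prod_ne_zero_iff.2 fun v _ => norm_ne_zero_iff.2 (hne v)),
      Real.log_prod (fun v _ => norm_ne_zero_iff.2 (hne v))]
  have hsv : Summable fun v : HeightOneSpectrum B => (f v.asIdeal).re :=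
    Summable.of_norm_bounded (hZ.summ_prime hs) fun v =>
      (Complex.abs_re_le_norm _).trans (hf (nzi v))
  have hlim := hlog.sub (hsv.hasSum : Tendsto _ _ _).neg
  have h2s := hZ.summ_prime (s := 2) (by norm_num)
  refine le_of_tendsto (x := atTop) (f := fun S : Finset (HeightOneSpectrum B) =>
      |Real.log ‖L‖ - ∑ v ∈ S, (f v.asIdeal).re - (Real.log ‖L‖ +
      ∑ v ∈ S, Real.log ‖1 - f v.asIdeal‖)|) ?_ (Eventually.of_forall fun S => ?_)
  · have := ((tendsto_const_nhds (x := Real.log ‖L‖)).sub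
      (hsv.hasSum : Tendsto _ _ _)).sub hlog
    rw [sub_zero] at this
    exact this.abs
  · have e : Real.log ‖L‖ - ∑ v ∈ S, (f v.asIdeal).re - (Real.log ‖L‖ +
      ∑ v ∈ S, Real.log ‖1 - f v.asIdeal‖) =
      -∑ v ∈ S, (Real.log ‖1 - f v.asIdeal‖ + (f v.asIdeal).re) := by
      rw [Finset.sum_add_distrib]; ring
    rw [e, abs_neg]
    refine (Finset.abs_sum_le_sum_abs _ _).trans ?_
    refine (Finset.sum_le_sum fun v _ => ?_).trans (h2s.sum_le_tsum S fun v _ => by positivity)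
    refine (abs_log_one_sub (hhalf v)).trans ?_
    calc ‖f v.asIdeal‖ ^ 2 ≤ ((nm v.asIdeal : ℝ) ^ (-1 : ℝ)) ^ 2 :=
          pow_le_pow_left₀ (norm_nonneg _) (hle1 v) 2
      _ = _ := by rw [← Real.rpow_natCast, ← Real.rpow_mul (by positivity)]; norm_num

open Classical in
/-- The prime sum of the set of primes `Φ`. -/
noncomputable def dens (Φ : Set (HeightOneSpectrum B)) (s : ℝ) : ℝ :=
  ∑' v : HeightOneSpectrum B, if v ∈ Φ then (nm v.asIdeal : ℝ) ^ (-s) else 0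

lemma dens_summable (hZ : Zeta B) (Φ : Set (HeightOneSpectrum B)) {s : ℝ} (hs : 1 < s)
    [DecidablePred (· ∈ Φ)] :
    Summable fun v : HeightOneSpectrum B => if v ∈ Φ then (nm v.asIdeal : ℝ) ^ (-s) else 0 := by
  refine Summable.of_norm_bounded (hZ.summ_prime hs) fun v => ?_
  split_ifs
  · rw [Real.norm_of_nonneg (by positivity)]
  · simp only [norm_zero]; positivity

lemma dens_mono (hZ : Zeta B) {Φ Ψ : Set (HeightOneSpectrum B)} (h : Φ ⊆ Ψ) {s : ℝ} (hs : 1 < s) :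
    dens Φ s ≤ dens Ψ s := by
  classical
  refine (dens_summable hZ Φ hs).tsum_le_tsum (fun v => ?_) (dens_summable hZ Ψ hs)
  by_cases h1 : v ∈ Φ
  · rw [if_pos h1, if_pos (h h1)]
  · rw [if_neg h1]; split_ifs <;> positivity

lemma dens_union_le (hZ : Zeta B) (Φ Ψ : Set (HeightOneSpectrum B)) {s : ℝ} (hs : 1 < s) :
    dens (Φ ∪ Ψ) s ≤ dens Φ s + dens Ψ s := by
  classical
  rw [dens, dens, dens, ← (dens_summable hZ Φ hs).tsum_add (dens_summable hZ Ψ hs)]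
  refine Summable.tsum_le_tsum (fun v => ?_)
    (@dens_summable _ _ _ hZ (Φ ∪ Ψ) _ hs fun _ => Classical.propDecidable _)
    ((dens_summable hZ Φ hs).add (dens_summable hZ Ψ hs))
  have h0 : (0 : ℝ) ≤ (nm v.asIdeal : ℝ) ^ (-s) := by positivity
  by_cases h1 : v ∈ Φ <;> by_cases h2 : v ∈ Ψ <;> simp [h1, h2, h0]

lemma dens_nonneg (Φ : Set (HeightOneSpectrum B)) (s : ℝ) : 0 ≤ dens Φ s :=
  tsum_nonneg fun v => by split_ifs <;> positivity

lemma dens_finite_le (hZ : Zeta B) {Φ : Set (HeightOneSpectrum B)} (h : Φ.Finite) {s : ℝ}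
    (hs : 1 < s) : dens Φ s ≤ Φ.ncard := by
  classical
  rw [dens, tsum_eq_sum (s := h.toFinset) (fun v hv => if_neg (by simpa using hv)),
    Set.ncard_eq_toFinset_card _ h, Finset.card_eq_sum_ones, Nat.cast_sum]
  refine Finset.sum_le_sum fun v _ => ?_
  have h2 := two_le_nm hZ v
  have : (nm v.asIdeal : ℝ) ^ (-s) ≤ 1 :=
    Real.rpow_le_one_of_one_le_of_nonpos (by exact_mod_cast (by omega : 1 ≤ nm v.asIdeal))
      (by linarith)
  split_ifs <;> simp [this]

/-- The primes have density one. -/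
lemma dens_univ (hZ : Zeta B) : ∃ C : ℝ, ∀ s : ℝ, 1 < s → s ≤ 2 →
    |dens (Set.univ : Set (HeightOneSpectrum B)) s - Real.log (1 / (s - 1))| ≤ C := by
  classical
  obtain ⟨C, hC⟩ := hZ.pole
  refine ⟨C + ∑' v : HeightOneSpectrum B, (nm v.asIdeal : ℝ) ^ (-2 : ℝ), fun s hs hs2 => ?_⟩
  have hinf := hZ.inf
  have hc := hC s hs hs2
  have h := (euler hZ (f := fun I => (((nm I : ℝ) ^ (-s) : ℝ) : ℂ)) (by simp [nm_top])
    (fun I J => by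
      rw [nm_mul, Nat.cast_mul, Real.mul_rpow (by positivity) (by positivity), Complex.ofReal_mul])
    hs (fun I => by rw [Complex.norm_real, Real.norm_of_nonneg (by positivity)])).2
  rw [← Complex.ofReal_tsum, Complex.norm_real, Real.norm_of_nonneg
    (tsum_nonneg fun _ => by positivity)] at h
  simp only [Complex.ofReal_re] at h
  have e : dens (Set.univ : Set (HeightOneSpectrum B)) s =
      ∑' v : HeightOneSpectrum B, (nm v.asIdeal : ℝ) ^ (-s) := by simp [dens]
  rw [e]
  rw [abs_le] at h hc ⊢
  constructor <;> linarith [h.1, h.2, hc.1, hc.2]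

lemma dens_le (hZ : Zeta B) : ∃ C : ℝ, ∀ (Φ : Set (HeightOneSpectrum B)) (s : ℝ), 1 < s → s ≤ 2 →
    dens Φ s ≤ Real.log (1 / (s - 1)) + C := by
  obtain ⟨C, hC⟩ := dens_univ hZ
  refine ⟨C, fun Φ s hs hs2 => (dens_mono hZ (Set.subset_univ _) hs).trans ?_⟩
  linarith [(abs_le.1 (hC s hs hs2)).2]

/-- Comparison of the prime sums of two rings along a map that is injective and norm preserving
on the given set. -/
lemma dens_le_of_injOn {B' : Type} [CommRing B'] [IsDedekindDomain B'] (hZ' : Zeta B')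
    {Φ : Set (HeightOneSpectrum B)} {Ψ : Set (HeightOneSpectrum B')}
    (g : HeightOneSpectrum B → HeightOneSpectrum B') (hg : Set.InjOn g Φ) (hm : ∀ v ∈ Φ, g v ∈ Ψ)
    (hn : ∀ v ∈ Φ, nm (g v).asIdeal = nm v.asIdeal) {s : ℝ} (hs : 1 < s) : dens Φ s ≤ dens Ψ s := by
  classical
  refine Real.tsum_le_of_sum_le (fun v => by split_ifs <;> positivity) fun u => ?_
  rw [← Finset.sum_filter]
  calc ∑ v ∈ u with v ∈ Φ, (nm v.asIdeal : ℝ) ^ (-s)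
      = ∑ v ∈ u with v ∈ Φ, (if g v ∈ Ψ then (nm (g v).asIdeal : ℝ) ^ (-s) else 0) :=
        Finset.sum_congr rfl fun v hv => by
          rw [Finset.mem_filter] at hv
          rw [if_pos (hm v hv.2), hn v hv.2]
    _ = ∑ w ∈ (u.filter (· ∈ Φ)).image g, (if w ∈ Ψ then (nm w.asIdeal : ℝ) ^ (-s) else 0) := by
        rw [Finset.sum_image]
        intro v hv w hw h
        simp only [Finset.coe_filter, Set.mem_ofPred_eq] at hv hw
        exact hg hv.2 hw.2 h
    _ ≤ _ := (dens_summable hZ' Ψ hs).sum_le_tsum _ fun w _ => by split_ifs <;> positivity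

end Euler
end SKOne

namespace SKOne
open Ideal Module IsDedekindDomain Filter Topology

/-! ### Periodic characters of the base ring -/

section Chars
variable {A : Type} [CommRing A] [IsDomain A] [IsPrincipalIdealRing A] (β : BaseRing A)

include β in
lemma zeta_base : Zeta A := zeta_of_basis β (Basis.singleton Unit A)

lemma nm_span_base {a : A} (ha : a ≠ 0) : nm (span {a}) = β.ab a := β.card_quot a ha

/-- A multiplicative function on `A`, periodic modulo `M` and trivial on units. -/
structure IsChar (M : A) (ψ : A → ℂ) : Prop where
  mul : ∀ a b, ψ (a * b) = ψ a * ψ b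
  unit : ∀ a, IsUnit a → ψ a = 1
  norm_le : ∀ a, ‖ψ a‖ ≤ 1
  per : ∀ a b, M ∣ a - b → ψ a = ψ b

/-- The function on ideals induced by a function on elements that ignores units. -/
noncomputable def onIdeal (ψ : A → ℂ) (I : Ideal A) : ℂ := ψ (Submodule.IsPrincipal.generator I)

variable {M : A} {ψ : A → ℂ}

lemma onIdeal_span (h : IsChar M ψ) (a : A) : onIdeal ψ (span {a}) = ψ a := by
  have : Associated (Submodule.IsPrincipal.generator (span {a})) a := by
    rw [← span_singleton_eq_span_singleton, Ideal.span_singleton_generator]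
  obtain ⟨u, hu⟩ := this
  conv_rhs => rw [← hu, h.mul, h.unit _ u.isUnit, mul_one]
  rfl

lemma onIdeal_mul (h : IsChar M ψ) (I J : Ideal A) :
    onIdeal ψ (I * J) = onIdeal ψ I * onIdeal ψ J := by
  obtain ⟨a, rfl⟩ := (IsPrincipalIdealRing.principal I).principal
  obtain ⟨b, rfl⟩ := (IsPrincipalIdealRing.principal J).principal
  change onIdeal ψ (span {a} * span {b}) = onIdeal ψ (span {a}) * onIdeal ψ (span {b})
  rw [span_singleton_mul_span_singleton, onIdeal_span h, onIdeal_span h, onIdeal_span h, h.mul]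

/-- The mean of a character that is nontrivial on a unit modulo `M` vanishes. -/
lemma sum_char_zero (h : IsChar M ψ) [Fintype (A ⧸ span {M})] {p : A} (hp : IsCoprime p M)
    (hp1 : ψ p ≠ 1) : ∑ r : A ⧸ span {M}, ψ r.out = 0 := by
  have hper : ∀ a : A, ψ (Ideal.Quotient.mk (span {M}) a).out = ψ a := fun a => by
    refine h.per _ _ (mem_span_singleton.1 (Ideal.Quotient.eq.1 ?_))
    exact Quotient.out_eq' _
  have hu : IsUnit (Ideal.Quotient.mk (span {M}) p) := by
    obtain ⟨x, y, hxy⟩ := hp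
    refine .of_mul_eq_one (Ideal.Quotient.mk _ x) ?_
    rw [← map_mul, ← map_one (Ideal.Quotient.mk (span {M}))]
    refine Ideal.Quotient.eq.2 (mem_span_singleton.2 ⟨-y, ?_⟩)
    linear_combination hxy
  obtain ⟨u, hu⟩ := hu
  have e : ∑ r : A ⧸ span {M}, ψ r.out = ψ p * ∑ r : A ⧸ span {M}, ψ r.out := by
    rw [Finset.mul_sum, ← Equiv.sum_comp (Units.mulLeft u)]
    refine Finset.sum_congr rfl fun r _ => ?_
    obtain ⟨a, rfl⟩ := Ideal.Quotient.mk_surjective r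
    rw [Units.mulLeft_apply]
    beta_reduce
    rw [hu, ← map_mul, hper, hper, h.mul]
  have h2 : (1 - ψ p) * ∑ r : A ⧸ span {M}, ψ r.out = 0 := by linear_combination e
  exact (mul_eq_zero.1 h2).resolve_left (sub_ne_zero.2 (Ne.symm hp1))

lemma abs_rpow_sub {x y m ρ s : ℝ} (hs : 1 < s) (hs2 : s ≤ 2) (hm : 1 ≤ m) (hx : m ≤ x) (hy : m ≤ y)
    (hxy : |x - y| ≤ ρ) : |x ^ (-s) - y ^ (-s)| ≤ 2 * ρ * m ^ (-2 : ℝ) := by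
  wlog hle : y ≤ x generalizing x y
  · rw [abs_sub_comm]
    exact this hy hx (by rwa [abs_sub_comm]) (le_of_not_ge hle)
  have hy0 : 0 < y := by linarith
  have hx0 : 0 < x := by linarith
  have hρ : x - y ≤ ρ := (le_abs_self _).trans hxy
  have e : x ^ (-s) = y ^ (-s) * (y / x) ^ s := by
    rw [Real.div_rpow hy0.le hx0.le, Real.rpow_neg hx0.le, Real.rpow_neg hy0.le]
    have : y ^ s ≠ 0 := (Real.rpow_pos_of_pos hy0 _).ne'
    field_simp
  have h1 : (y / x) ^ (2 : ℝ) ≤ (y / x) ^ s :=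
    Real.rpow_le_rpow_of_exponent_ge (by positivity) ((div_le_one hx0).2 hle) hs2
  have h1' : (y / x) ^ s ≤ 1 :=
    Real.rpow_le_one (by positivity) ((div_le_one hx0).2 hle) (by linarith)
  have h2 : 1 - (y / x) ^ s ≤ 2 * ρ / m := by
    rw [Real.rpow_two] at h1
    have h3 : 1 - (y / x) ^ 2 ≤ 2 * (1 - y / x) := by nlinarith [sq_nonneg (1 - y / x)]
    have h4 : 1 - y / x = (x - y) / x := by field_simp
    have h5 : (x - y) / x ≤ ρ / m := by
      rw [div_le_div_iff₀ hx0 (by linarith)]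
      nlinarith
    rw [mul_div_assoc]; linarith
  have h6 : y ^ (-s) ≤ m ^ (-1 : ℝ) := by
    calc y ^ (-s) ≤ y ^ (-1 : ℝ) := Real.rpow_le_rpow_of_exponent_le (by linarith) (by linarith)
      _ ≤ _ := Real.rpow_le_rpow_of_nonpos (by linarith) hy (by norm_num)
  have h7 : 0 ≤ y ^ (-s) := by positivity
  rw [e, abs_sub_comm, abs_of_nonneg (by nlinarith)]
  calc y ^ (-s) - y ^ (-s) * (y / x) ^ s = y ^ (-s) * (1 - (y / x) ^ s) := by ring
    _ ≤ m ^ (-1 : ℝ) * (2 * ρ / m) := mul_le_mul h6 h2 (by linarith) (by positivity)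
    _ = 2 * ρ * m ^ (-2 : ℝ) := by
        rw [show (-2 : ℝ) = -1 + -1 by norm_num, Real.rpow_add (by linarith), Real.rpow_neg_one]
        ring

lemma summable_ab {s : ℝ} (hs : 1 < s) : Summable fun a : {a : A // a ≠ 0} => (β.ab a.1 : ℝ) ^ (-s) := by
  have hfin : ∀ Y : ℕ, {a : {a : A // a ≠ 0} | β.ab a.1 ≤ Y}.Finite := fun Y => by
    refine Set.Finite.of_finite_image (f := Subtype.val) ((β.ball_fin Y).subset ?_)
      Subtype.val_injective.injOn
    rintro _ ⟨a, ha, rfl⟩; exact ha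
  refine summable_rpow (C := β.K) (fun a => β.ab_pos a.2) hfin (fun Y hY => ?_) (by positivity) hs
  have h2 := β.ball_le Y hY
  have := Set.ncard_le_ncard_of_injOn (s := {a : {a : A // a ≠ 0} | β.ab a.1 ≤ Y})
    (t := {a : A | β.ab a ≤ Y}) Subtype.val (fun a ha => ha) Subtype.val_injective.injOn (β.ball_fin Y)
  exact_mod_cast this.trans h2

lemma summable_ab' {s : ℝ} (hs : 1 < s) : Summable fun a : A => (β.ab a : ℝ) ^ (-s) := by
  have h := summable_ab β hs
  refine (Function.Injective.summable_iff (f := fun a : A => (β.ab a : ℝ) ^ (-s))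
    (Subtype.val_injective (p := fun a : A => a ≠ 0)) fun a ha => ?_).1 h
  have : a = 0 := by simpa using ha
  rw [this, β.ab_zero, Nat.cast_zero, Real.zero_rpow (by linarith)]

/-- Boundedness of the `L`-series (over elements) near `s = 1`. -/
lemma char_sum_bound (h : IsChar M ψ) (hM : M ≠ 0) {p : A} (hp : IsCoprime p M) (hp1 : ψ p ≠ 1) :
    ∃ C : ℝ, ∀ s : ℝ, 1 < s → s ≤ 2 → ‖∑' a : A, ψ a * ((β.ab a : ℝ) ^ (-s) : ℝ)‖ ≤ C := by
  classical
  have hfin : Finite (A ⧸ span {M}) := Nat.finite_of_card_ne_zero (by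
    rw [β.card_quot M hM]; exact (β.ab_pos hM).ne')
  have := Fintype.ofFinite (A ⧸ span {M})
  set Q := Fintype.card (A ⧸ span {M})
  have hout : ∀ r : A ⧸ span {M}, Ideal.Quotient.mk (span {M}) r.out = r := fun r =>
    Quotient.out_eq' _
  let e : A × (A ⧸ span {M}) ≃ A := Equiv.ofBijective (fun x => M * x.1 + x.2.out) (by
    constructor
    · rintro ⟨b, r⟩ ⟨b', r'⟩ hbr
      simp only at hbr
      have h1 := congrArg (Ideal.Quotient.mk (span {M})) hbr
      have h0 : Ideal.Quotient.mk (span {M}) M = 0 :=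
        Ideal.Quotient.eq_zero_iff_mem.2 (mem_span_singleton_self M)
      simp only [map_add, map_mul, h0, zero_mul, zero_add, hout] at h1
      subst h1
      rw [add_left_inj] at hbr
      rw [mul_left_cancel₀ hM hbr]
    · intro a
      obtain ⟨b, hb⟩ := mem_span_singleton.1 (Ideal.Quotient.eq.1 (hout (Ideal.Quotient.mk _ a)).symm)
      exact ⟨(b, Ideal.Quotient.mk _ a), by simp only; linear_combination -hb⟩)
  have he : ∀ b r, e (b, r) = M * b + r.out := fun b r => rfl
  set ρ : ℕ := ∑ r : A ⧸ span {M}, β.ab r.out with hρ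
  have hρr : ∀ r : A ⧸ span {M}, β.ab r.out ≤ ρ := fun r =>
    Finset.single_le_sum (f := fun r : A ⧸ span {M} => β.ab r.out) (fun _ _ => Nat.zero_le _)
      (Finset.mem_univ r)
  have hF := (β.ball_fin (2 * ρ + 1))
  set F := hF.toFinset with hFdef
  -- a uniform summable majorant for the block sums
  let g : A → ℝ := fun b => Q * (8 * ρ * (β.ab b : ℝ) ^ (-2 : ℝ)) + if b ∈ F then (Q : ℝ) else 0
  have hg : Summable g := by
    refine (((summable_ab' β (s := 2) (by norm_num)).mul_left _).mul_left _).add ?_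
    exact summable_of_ne_finset_zero (s := F) fun b hb => if_neg hb
  refine ⟨∑' b, g b, fun s hs hs2 => ?_⟩
  have hsum : Summable fun a : A => ψ a * ((β.ab a : ℝ) ^ (-s) : ℝ) := by
    refine Summable.of_norm_bounded (summable_ab' β hs) fun a => ?_
    rw [norm_mul, Complex.norm_real, Real.norm_of_nonneg (by positivity)]
    exact mul_le_of_le_one_left (by positivity) (h.norm_le a)
  rw [← e.tsum_eq]
  have hsum2 := e.summable_iff.2 hsum
  simp only [Function.comp_def] at hsum2
  rw [hsum2.tsum_prod]
  have hle1 : ∀ a : A, (β.ab a : ℝ) ^ (-s) ≤ 1 := fun a => by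
    by_cases ha : a = 0
    · rw [ha, β.ab_zero, Nat.cast_zero, Real.zero_rpow (by linarith)]; norm_num
    · exact Real.rpow_le_one_of_one_le_of_nonpos (by exact_mod_cast β.ab_pos ha) (by linarith)
  refine tsum_of_norm_bounded hg.hasSum fun b => ?_
  rw [tsum_fintype]
  have hψ : ∀ r : A ⧸ span {M}, ψ (e (b, r)) = ψ r.out := fun r =>
    h.per _ _ ⟨b, by rw [he, add_sub_cancel_right]⟩
  simp only [hψ]
  by_cases hb : b ∈ F
  · have h1 : ‖∑ r : A ⧸ span {M}, ψ r.out * (((β.ab (e (b, r)) : ℝ) ^ (-s) : ℝ) : ℂ)‖ ≤ Q := by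
      refine (norm_sum_le _ _).trans ((Finset.sum_le_card_nsmul _ _ 1 fun r _ => ?_).trans ?_)
      · rw [norm_mul, Complex.norm_real, Real.norm_of_nonneg (by positivity)]
        exact mul_le_one₀ (h.norm_le _) (by positivity) (hle1 _)
      · simp [Q]
    refine h1.trans ?_
    simp only [g, if_pos hb]
    have : (0 : ℝ) ≤ Q * (8 * ρ * (β.ab b : ℝ) ^ (-2 : ℝ)) := by positivity
    linarith
  · have hb' : 2 * ρ + 1 < β.ab b := by simpa [F] using hb
    have hMb : β.ab b ≤ β.ab (M * b) := by
      rw [β.ab_mul]; exact Nat.le_mul_of_pos_left _ (β.ab_pos hM)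
    have h0 : ∑ r : A ⧸ span {M}, ψ r.out * (((β.ab (e (b, r)) : ℝ) ^ (-s) : ℝ) : ℂ) =
        ∑ r : A ⧸ span {M}, ψ r.out *
          (((β.ab (e (b, r)) : ℝ) ^ (-s) - (β.ab (M * b) : ℝ) ^ (-s) : ℝ) : ℂ) := by
      simp only [Complex.ofReal_sub, mul_sub, Finset.sum_sub_distrib]
      rw [← Finset.sum_mul, sum_char_zero h hp hp1, zero_mul, sub_zero]
    rw [h0]
    refine (norm_sum_le _ _).trans ((Finset.sum_le_card_nsmul _ _
      (8 * ρ * (β.ab b : ℝ) ^ (-2 : ℝ)) fun r _ => ?_).trans ?_)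
    · rw [norm_mul, Complex.norm_real, Real.norm_eq_abs]
      refine (mul_le_of_le_one_left (abs_nonneg _) (h.norm_le _)).trans ?_
      have ha1 : β.ab (e (b, r)) ≤ β.ab (M * b) + ρ :=
        (β.ab_add _ _).trans (Nat.add_le_add_left (hρr r) _)
      have ha2 : β.ab (M * b) ≤ β.ab (e (b, r)) + ρ := by
        have := β.ab_sub (e (b, r)) r.out
        have h3 : e (b, r) - r.out = M * b := by rw [he, add_sub_cancel_right]
        rw [h3] at this
        exact this.trans (Nat.add_le_add_left (hρr r) _)
      have hbr : (2 * ρ + 1 : ℝ) < β.ab b := by exact_mod_cast hb'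
      have hMbr : (β.ab b : ℝ) ≤ β.ab (M * b) := by exact_mod_cast hMb
      have ha1r : (β.ab (e (b, r)) : ℝ) ≤ β.ab (M * b) + ρ := by exact_mod_cast ha1
      have ha2r : (β.ab (M * b) : ℝ) ≤ β.ab (e (b, r)) + ρ := by exact_mod_cast ha2
      have hρ0 : (0 : ℝ) ≤ ρ := by positivity
      have hb2 : (2 : ℝ) ≤ β.ab b := by exact_mod_cast (by omega : 2 ≤ β.ab b)
      refine (abs_rpow_sub (m := (β.ab b : ℝ) / 2) (ρ := ρ) hs hs2 (by linarith) (by linarith)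
        (by linarith) (abs_le.2 ⟨by linarith, by linarith⟩)).trans (le_of_eq ?_)
      rw [Real.div_rpow (by positivity) (by norm_num)]
      norm_num
      ring
    · simp only [g, if_neg hb]
      simp [Q]

include β in
/-- Boundedness of the `L`-series (over ideals) near `s = 1`. -/
lemma char_L_bound (h : IsChar M ψ) (hM : M ≠ 0) {p : A} (hp : IsCoprime p M) (hp1 : ψ p ≠ 1) :
    ∃ C : ℝ, ∀ s : ℝ, 1 < s → s ≤ 2 →
      ‖∑' I : NZI A, onIdeal ψ I.1 * ((nm I.1 : ℝ) ^ (-s) : ℝ)‖ ≤ C := by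
  classical
  obtain ⟨C, hC⟩ := char_sum_bound β h hM hp hp1
  have hUfin : Finite Aˣ := by
    have := (β.ball_fin 1).to_subtype
    refine Finite.of_injective (fun u : Aˣ => (⟨u.1, (β.ab_unit u.isUnit).le⟩ : {a : A | β.ab a ≤ 1}))
      fun u v huv => Units.ext (congrArg Subtype.val huv)
  have := Fintype.ofFinite Aˣ
  refine ⟨C, fun s hs hs2 => ?_⟩
  have hgen0 : ∀ I : NZI A, Submodule.IsPrincipal.generator I.1 ≠ 0 := fun I h0 =>
    I.2 ((Submodule.IsPrincipal.eq_bot_iff_generator_eq_zero I.1).2 h0)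
  let e : NZI A × Aˣ ≃ {a : A // a ≠ 0} := Equiv.ofBijective
    (fun x => ⟨Submodule.IsPrincipal.generator x.1.1 * x.2, mul_ne_zero (hgen0 _) x.2.ne_zero⟩) (by
    constructor
    · rintro ⟨I, u⟩ ⟨J, v⟩ huv
      have h1 := congrArg Subtype.val huv
      simp only at h1
      have hIJ : I = J := by
        refine Subtype.ext ?_
        rw [← Ideal.span_singleton_generator I.1, ← Ideal.span_singleton_generator J.1,
          span_singleton_eq_span_singleton]
        exact ⟨u * v⁻¹, by rw [Units.val_mul, ← mul_assoc, h1, mul_assoc, Units.mul_inv, mul_one]⟩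
      subst hIJ
      rw [Units.ext (mul_left_cancel₀ (hgen0 I) h1)]
    · rintro ⟨a, ha⟩
      have : Associated (Submodule.IsPrincipal.generator (span {a})) a := by
        rw [← span_singleton_eq_span_singleton, Ideal.span_singleton_generator]
      obtain ⟨u, hu⟩ := this
      exact ⟨(⟨span {a}, by simpa using ha⟩, u), Subtype.ext hu⟩)
  have hval : ∀ x : NZI A × Aˣ, ψ (e x).1 * ((β.ab (e x).1 : ℝ) ^ (-s) : ℝ) =
      onIdeal ψ x.1.1 * ((nm x.1.1 : ℝ) ^ (-s) : ℝ) := fun x => by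
    have h1 : (e x).1 = Submodule.IsPrincipal.generator x.1.1 * x.2 := rfl
    rw [h1, h.mul, h.unit _ x.2.isUnit, mul_one, β.ab_mul, β.ab_unit x.2.isUnit, mul_one, onIdeal,
      ← nm_span_base β (hgen0 x.1), Ideal.span_singleton_generator]
  have hsum : Summable fun a : {a : A // a ≠ 0} => ψ a.1 * ((β.ab a.1 : ℝ) ^ (-s) : ℝ) := by
    refine Summable.of_norm_bounded (summable_ab β hs) fun a => ?_
    rw [norm_mul, Complex.norm_real, Real.norm_of_nonneg (by positivity)]
    exact mul_le_of_le_one_left (by positivity) (h.norm_le a)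
  have h1 : ∑' a : A, ψ a * ((β.ab a : ℝ) ^ (-s) : ℝ) =
      Fintype.card Aˣ * ∑' I : NZI A, onIdeal ψ I.1 * ((nm I.1 : ℝ) ^ (-s) : ℝ) := by
    have h2 : ∑' a : {a : A // a ≠ 0}, ψ a.1 * ((β.ab a.1 : ℝ) ^ (-s) : ℝ) =
        ∑' a : A, ψ a * ((β.ab a : ℝ) ^ (-s) : ℝ) := by
      refine (Subtype.val_injective (p := fun a : A => a ≠ 0)).tsum_eq
        (f := fun a : A => ψ a * (((β.ab a : ℝ) ^ (-s) : ℝ) : ℂ)) fun a ha => ?_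
      by_contra hne
      have : a = 0 := by simpa using hne
      rw [Function.mem_support, this, β.ab_zero, Nat.cast_zero, Real.zero_rpow (by linarith)] at ha
      simp at ha
    have hsum2 := e.summable_iff.2 hsum
    simp only [Function.comp_def] at hsum2
    rw [← h2, ← e.tsum_eq, hsum2.tsum_prod, ← tsum_mul_left]
    refine tsum_congr fun I => ?_
    rw [tsum_fintype, Finset.sum_congr rfl fun u _ => hval (I, u)]
    simp
  have h3 := hC s hs hs2
  rw [h1, norm_mul, Complex.norm_natCast] at h3
  have hcard : (1 : ℝ) ≤ Fintype.card Aˣ := by exact_mod_cast Fintype.card_pos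
  nlinarith [norm_nonneg (∑' I : NZI A, onIdeal ψ I.1 * (((nm I.1 : ℝ) ^ (-s) : ℝ) : ℂ))]

include β in
/-- The prime sum of a nontrivial character is bounded above (no nonvanishing is needed). -/
lemma char_prime_sum (h : IsChar M ψ) (hM : M ≠ 0) {p : A} (hp : IsCoprime p M) (hp1 : ψ p ≠ 1) :
    ∃ C : ℝ, ∀ s : ℝ, 1 < s → s ≤ 2 →
      ∑' v : HeightOneSpectrum A, (onIdeal ψ v.asIdeal).re * (nm v.asIdeal : ℝ) ^ (-s) ≤ C := by
  obtain ⟨C, hC⟩ := char_L_bound β h hM hp hp1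
  have hZ := zeta_base β
  have hinf := hZ.inf
  refine ⟨Real.log (max C 1) + ∑' v : HeightOneSpectrum A, (nm v.asIdeal : ℝ) ^ (-2 : ℝ),
    fun s hs hs2 => ?_⟩
  have hE := euler hZ (f := fun I => onIdeal ψ I * ((nm I : ℝ) ^ (-s) : ℝ))
    (by
      simp only [nm_top, Nat.cast_one, Real.one_rpow, Complex.ofReal_one, mul_one]
      rw [← Ideal.span_singleton_one, onIdeal_span h, h.unit _ isUnit_one])
    (fun I J => by
      rw [onIdeal_mul h, nm_mul, Nat.cast_mul, Real.mul_rpow (by positivity) (by positivity),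
        Complex.ofReal_mul]; ring) hs
    (fun I => by
      rw [norm_mul, Complex.norm_real, Real.norm_of_nonneg (by positivity)]
      exact mul_le_of_le_one_left (by positivity) (h.norm_le _))
  have h2 := (abs_le.1 hE.2).1
  have h3 : Real.log ‖∑' I : NZI A, onIdeal ψ I.1 * (((nm I.1 : ℝ) ^ (-s) : ℝ) : ℂ)‖ ≤
      Real.log (max C 1) :=
    Real.log_le_log (norm_pos_iff.2 hE.1) ((hC s hs hs2).trans (le_max_left _ _))
  simp only [Complex.re_mul_ofReal] at h2
  linarith

include β in
/-- The primes on which `k` independent characters of order divisible by `ℓ` are all trivial have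
upper density at most `ℓ ^ (-k)`. -/
lemma char_density {k ℓ n : ℕ} (hℓ : ℓ.Prime) (hn : 0 < n) (hM : M ≠ 0)
    (χ : Fin k → A → ℂ) (h : ∀ i, IsChar M (χ i))
    (hval : ∀ i a, χ i a = 0 ∨ χ i a ^ (ℓ * n) = 1) (p : Fin k → A) (hp : ∀ i, IsCoprime (p i) M)
    (hp1 : ∀ i, ℓ ∣ orderOf (χ i (p i))) (hpj : ∀ i j, i ≠ j → χ i (p j) = 1) :
    ∃ C : ℝ, ∀ s : ℝ, 1 < s → s ≤ 2 →
      (ℓ : ℝ) ^ k * dens {v : HeightOneSpectrum A | ∀ i, onIdeal (χ i) v.asIdeal = 1} s ≤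
        Real.log (1 / (s - 1)) + C := by
  classical
  have hZ := zeta_base β
  let ψ : (Fin k → Fin (ℓ * n)) → A → ℂ := fun e a => ∏ i, χ i a ^ ((e i : ℕ) + 1)
  have hψ : ∀ e, IsChar M (ψ e) := fun e => by
    refine ⟨fun a b => ?_, fun a ha => ?_, fun a => ?_, fun a b hab => ?_⟩
    · simp only [ψ, (h _).mul, mul_pow, Finset.prod_mul_distrib]
    · simp only [ψ, (h _).unit a ha, one_pow, Finset.prod_const_one]
    · simp only [ψ, norm_prod, norm_pow]
      exact Finset.prod_le_one (fun _ _ => by positivity)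
        fun i _ => pow_le_one₀ (norm_nonneg _) ((h i).norm_le a)
    · simp only [ψ, (h _).per a b hab]
  -- only these exponents can give a trivial character
  let E0 : Finset (Fin k → Fin (ℓ * n)) :=
    Fintype.piFinset fun _ => Finset.univ.filter fun j : Fin (ℓ * n) => ℓ ∣ (j : ℕ) + 1
  have hE0 : E0.card = n ^ k := by
    have : (Finset.univ.filter fun j : Fin (ℓ * n) => ℓ ∣ (j : ℕ) + 1).card = n := by
      rw [Finset.card_filter, Fin.sum_univ_eq_sum_range (fun j => if ℓ ∣ j + 1 then 1 else 0),
        ← Finset.card_filter, Nat.card_multiples, Nat.mul_div_cancel_left _ hℓ.pos]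
    simp [E0, Fintype.card_piFinset, this]
  have hψp : ∀ e i, ψ e (p i) = χ i (p i) ^ ((e i : ℕ) + 1) := fun e i => by
    simp only [ψ]
    refine Finset.prod_eq_single i (fun j _ hj => by rw [hpj j i hj, one_pow]) (by simp)
  have hbd : ∀ e ∉ E0, ∃ C : ℝ, ∀ s : ℝ, 1 < s → s ≤ 2 →
      ∑' v : HeightOneSpectrum A, (onIdeal (ψ e) v.asIdeal).re * (nm v.asIdeal : ℝ) ^ (-s) ≤ C := by
    intro e he
    simp only [E0, Fintype.mem_piFinset, Finset.mem_filter, Finset.mem_univ, true_and, not_forall] at he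
    obtain ⟨i, hi⟩ := he
    refine char_prime_sum β (hψ e) hM (hp i) ?_
    rw [hψp]
    exact fun h1 => hi ((hp1 i).trans (orderOf_dvd_of_pow_eq_one h1))
  choose! C hC using hbd
  obtain ⟨C0, hC0⟩ := dens_univ hZ
  refine ⟨C0 + (∑ e ∈ E0ᶜ, C e) / (n : ℝ) ^ k, fun s hs hs2 => ?_⟩
  have hsm : ∀ e, Summable fun v : HeightOneSpectrum A =>
      (onIdeal (ψ e) v.asIdeal).re * (nm v.asIdeal : ℝ) ^ (-s) := fun e => by
    refine Summable.of_norm_bounded (hZ.summ_prime hs) fun v => ?_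
    rw [norm_mul, Real.norm_of_nonneg (r := (nm v.asIdeal : ℝ) ^ (-s)) (by positivity)]
    exact mul_le_of_le_one_left (by positivity)
      ((Complex.abs_re_le_norm _).trans ((hψ e).norm_le _))
  have hkey : ((ℓ * n : ℕ) : ℝ) ^ k * dens {v : HeightOneSpectrum A | ∀ i, onIdeal (χ i) v.asIdeal = 1} s =
      ∑ e, ∑' v : HeightOneSpectrum A,
        (onIdeal (ψ e) v.asIdeal).re * (nm v.asIdeal : ℝ) ^ (-s) := by
    rw [← Summable.tsum_finsetSum (fun e _ => hsm e), dens, ← tsum_mul_left]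
    refine tsum_congr fun v => ?_
    rw [← Finset.sum_mul, ← Complex.re_sum]
    -- orthogonality, one factor at a time
    have hprod : ∑ e, onIdeal (ψ e) v.asIdeal =
        ∏ i, ∑ j : Fin (ℓ * n), onIdeal (χ i) v.asIdeal ^ ((j : ℕ) + 1) := by
      rw [Finset.prod_univ_sum, Fintype.piFinset_univ]
      rfl
    rw [hprod]
    by_cases hv : ∀ i, onIdeal (χ i) v.asIdeal = 1
    · rw [if_pos (by exact hv)]
      congr 1
      simp only [hv, one_pow, Finset.sum_const, Finset.card_univ, Fintype.card_fin, nsmul_eq_mul,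
        mul_one, Finset.prod_const]
      rw [← Complex.ofReal_natCast, ← Complex.ofReal_pow, Complex.ofReal_re]
    · rw [if_neg (by exact hv), mul_zero]
      obtain ⟨i, hi⟩ := not_forall.1 hv
      rw [Finset.prod_eq_zero (Finset.mem_univ i), Complex.zero_re, zero_mul]
      rw [Fin.sum_univ_eq_sum_range (fun j => onIdeal (χ i) v.asIdeal ^ (j + 1)) (ℓ * n)]
      rcases hval i (Submodule.IsPrincipal.generator v.asIdeal) with h0 | h1
      · refine Finset.sum_eq_zero fun j _ => ?_
        rw [onIdeal, h0, zero_pow (by omega)]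
      · simp only [pow_succ]
        rw [← Finset.sum_mul]
        have h2 := mul_neg_geom_sum (onIdeal (χ i) v.asIdeal) (ℓ * n)
        rw [show onIdeal (χ i) v.asIdeal ^ (ℓ * n) = 1 from h1, sub_self] at h2
        rw [(mul_eq_zero.1 h2).resolve_left (sub_ne_zero.2 (Ne.symm hi)), zero_mul]
  have h1 : ∀ e, ∑' v : HeightOneSpectrum A,
      (onIdeal (ψ e) v.asIdeal).re * (nm v.asIdeal : ℝ) ^ (-s) ≤ Real.log (1 / (s - 1)) + C0 := by
    intro e
    have hd : dens (Set.univ : Set (HeightOneSpectrum A)) s =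
        ∑' v : HeightOneSpectrum A, (nm v.asIdeal : ℝ) ^ (-s) := by simp [dens]
    have := (abs_le.1 (hC0 s hs hs2)).2
    rw [hd] at this
    refine ((hsm e).tsum_le_tsum (fun v => ?_) (hZ.summ_prime hs)).trans (by linarith)
    exact mul_le_of_le_one_left (by positivity)
      ((Complex.re_le_norm _).trans ((hψ e).norm_le _))
  rw [← Finset.sum_add_sum_compl E0] at hkey
  have h2 := Finset.sum_le_sum fun e (he : e ∈ E0ᶜ) => hC e (Finset.mem_compl.1 he) s hs hs2
  have h3 := Finset.sum_le_card_nsmul E0 _ _ fun e _ => h1 e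
  rw [hE0, nsmul_eq_mul, Nat.cast_pow] at h3
  have hnk : (0 : ℝ) < (n : ℝ) ^ k := by positivity
  have h4 : (n : ℝ) ^ k * ((ℓ : ℝ) ^ k *
      dens {v : HeightOneSpectrum A | ∀ i, onIdeal (χ i) v.asIdeal = 1} s) ≤
      (n : ℝ) ^ k * (Real.log (1 / (s - 1)) + (C0 + (∑ e ∈ E0ᶜ, C e) / (n : ℝ) ^ k)) := by
    have e1 : (n : ℝ) ^ k * ((∑ e ∈ E0ᶜ, C e) / (n : ℝ) ^ k) = ∑ e ∈ E0ᶜ, C e :=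
      mul_div_cancel₀ _ hnk.ne'
    rw [mul_add, mul_add, e1, ← mul_assoc, mul_comm ((n : ℝ) ^ k), ← mul_pow]
    push_cast at hkey
    linarith
  exact le_of_mul_le_mul_left h4 hnk

end Chars
end SKOne

namespace SKOne
open Ideal Module IsDedekindDomain Filter Topology

/-! ### Split primes and density bounds -/

section Split

lemma zeta_of_finite {A : Type} [CommRing A] [IsDomain A] [IsPrincipalIdealRing A] (β : BaseRing A)
    (B : Type) [CommRing B] [IsDedekindDomain B] [Algebra A B] [Module.Finite A B]
    [Module.IsTorsionFree A B] : Zeta B :=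
  zeta_of_basis β (Module.finBasis A B)

variable {O : Type} [CommRing O] [IsDedekindDomain O]

/-- For almost all `v ∈ Φ` there are at least `r` homomorphisms of `O`-algebras from `B` to the
residue field of `v`. -/
def SplitsAE (B : Type) [CommRing B] [Algebra O B] (r : ℕ) (Φ : Set (HeightOneSpectrum O)) : Prop :=
  ∃ T : Set (HeightOneSpectrum O), T.Finite ∧ ∀ v ∈ Φ, v ∉ T →
    ∃ s : Fin r → (B →ₐ[O] O ⧸ v.asIdeal), Function.Injective s

lemma ker_eq_imp {B : Type} [CommRing B] [Algebra O B] {I : Ideal O} (f g : B →ₐ[O] O ⧸ I)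
    (h : RingHom.ker f = RingHom.ker g) : f = g := by
  ext x
  obtain ⟨o, ho⟩ := Ideal.Quotient.mk_surjective (f x)
  have h1 : x - algebraMap O B o ∈ RingHom.ker f := by
    rw [RingHom.mem_ker, map_sub, ← ho, AlgHom.commutes]; simp
  rw [h, RingHom.mem_ker, map_sub, AlgHom.commutes, sub_eq_zero] at h1
  rw [h1, ← ho]; rfl

lemma algHom_surj {B : Type} [CommRing B] [Algebra O B] {I : Ideal O} (f : B →ₐ[O] O ⧸ I) :
    Function.Surjective f := fun y => by
  obtain ⟨o, rfl⟩ := Ideal.Quotient.mk_surjective y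
  exact ⟨algebraMap O B o, by rw [AlgHom.commutes]; rfl⟩

lemma ker_comap {B : Type} [CommRing B] [Algebra O B] {I : Ideal O} (f : B →ₐ[O] O ⧸ I) :
    (RingHom.ker f).comap (algebraMap O B) = I := by
  ext x
  rw [Ideal.mem_comap, RingHom.mem_ker, AlgHom.commutes]
  exact Ideal.Quotient.eq_zero_iff_mem

lemma nm_ker {B : Type} [CommRing B] [Algebra O B] {I : Ideal O} (f : B →ₐ[O] O ⧸ I) :
    nm (RingHom.ker f) = nm I :=
  Nat.card_congr (Ideal.quotientKerAlgEquivOfSurjective (algHom_surj f)).toEquiv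

/-- The kernel of a homomorphism to a residue field, as a height one prime. -/
noncomputable def kerSpec (hO : Zeta O) {B : Type} [CommRing B] [IsDedekindDomain B] [Infinite B] [Algebra O B]
    (v : HeightOneSpectrum O) (f : B →ₐ[O] O ⧸ v.asIdeal) : HeightOneSpectrum B where
  asIdeal := RingHom.ker f
  isPrime := by
    have := v.isPrime
    exact RingHom.ker_isPrime f
  ne_bot := fun h => by
    have h1 := nm_ker f
    have h2 := hO.pos _ v.ne_bot
    have : Finite (O ⧸ v.asIdeal) := Nat.finite_of_card_ne_zero h2.ne'
    have h3 : Function.Injective f := (RingHom.injective_iff_ker_eq_bot f).2 h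
    exact not_finite_iff_infinite.2 ‹Infinite B› (Finite.of_injective _ h3)

/-- The `r` homomorphisms to the residue field of `v ∈ Φ` give `r` primes of `B` above `v` of the same
norm, so that `Φ` has upper density at most `1 / r`. -/
lemma dens_of_splits (hO : Zeta O) {B : Type} [CommRing B] [IsDedekindDomain B] [Algebra O B]
    (hB : Zeta B) {r : ℕ} {Φ : Set (HeightOneSpectrum O)} (h : SplitsAE B r Φ) :
    ∃ C : ℝ, ∀ s : ℝ, 1 < s → s ≤ 2 → r * dens Φ s ≤ Real.log (1 / (s - 1)) + C := by
  classical
  obtain ⟨T, hT, h⟩ := h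
  obtain ⟨C, hC⟩ := dens_le hB
  have := hB.inf
  refine ⟨C + r * T.ncard, fun s hs hs2 => ?_⟩
  obtain ⟨Φ', hΦ'⟩ : ∃ X, X = Φ \ T := ⟨_, rfl⟩
  have h' : ∀ v ∈ Φ', ∃ g : Fin r → HeightOneSpectrum B, Function.Injective g ∧
      (∀ i, nm (g i).asIdeal = nm v.asIdeal) ∧
      ∀ i, (g i).asIdeal.comap (algebraMap O B) = v.asIdeal := by
    intro v hv
    rw [hΦ'] at hv
    obtain ⟨t, ht⟩ := h v hv.1 hv.2
    refine ⟨fun i => kerSpec hO v (t i), fun i j hij => ht ?_, fun i => nm_ker _, fun i => ker_comap _⟩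
    exact ker_eq_imp _ _ (congrArg HeightOneSpectrum.asIdeal hij)
  have key : r * dens Φ' s ≤ dens (Set.univ : Set (HeightOneSpectrum B)) s := by
    rcases isEmpty_or_nonempty (HeightOneSpectrum B) with he | hne
    · by_cases hr : r = 0
      · rw [hr, Nat.cast_zero, zero_mul]; exact dens_nonneg _ _
      · have : Φ' = ∅ := Set.eq_empty_of_forall_notMem fun v hv => by
          obtain ⟨g, -⟩ := h' v hv
          exact he.false (g ⟨0, by omega⟩)
        rw [this]
        have : dens (∅ : Set (HeightOneSpectrum O)) s = 0 := by simp [dens]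
        rw [this, mul_zero]; exact dens_nonneg _ _
    choose! g hg hgn hgc using h'
    rw [dens, ← tsum_mul_left]
    refine Real.tsum_le_of_sum_le (fun v => by split_ifs <;> positivity) fun u => ?_
    have e1 : ∀ v, (r : ℝ) * (if v ∈ Φ' then (nm v.asIdeal : ℝ) ^ (-s) else 0) =
        if v ∈ Φ' then ∑ i : Fin r, (nm (g v i).asIdeal : ℝ) ^ (-s) else 0 := by
      intro v
      split_ifs with hv
      · simp only [hgn v hv]; simp
      · simp
    rw [Finset.sum_congr rfl fun v _ => e1 v, ← Finset.sum_filter, ← Finset.sum_product']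
    rw [dens]
    simp only [Set.mem_univ, if_true]
    rw [← Finset.sum_image (f := fun w : HeightOneSpectrum B => (nm w.asIdeal : ℝ) ^ (-s))
      (g := fun x : HeightOneSpectrum O × Fin r => g x.1 x.2)]
    · exact (hB.summ_prime hs).sum_le_tsum _ fun w _ => by positivity
    · rintro ⟨v, i⟩ hv ⟨v', i'⟩ hv' hvv
      simp only [Finset.coe_product, Set.mem_prod, Finset.coe_filter, Set.mem_ofPred_eq] at hv hv'
      have h1 : v = v' := by
        apply HeightOneSpectrum.ext
        rw [← hgc v hv.1.2 i, ← hgc v' hv'.1.2 i']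
        exact congrArg (fun w : HeightOneSpectrum B => w.asIdeal.comap (algebraMap O B)) hvv
      subst h1
      exact Prod.ext rfl (hg v hv.1.2 hvv)
  have h3 : dens Φ s ≤ dens Φ' s + T.ncard := by
    refine (dens_mono hO (Ψ := Φ' ∪ T) (by intro v hv; by_cases h : v ∈ T; exacts [Or.inr h, Or.inl (hΦ' ▸ ⟨hv, h⟩)]) hs).trans ?_
    refine (dens_union_le hO _ _ hs).trans ?_
    gcongr
    exact dens_finite_le hO hT hs
  have h4 := hC Set.univ s hs hs2
  have h5 : (r : ℝ) * dens Φ s ≤ r * (dens Φ' s + T.ncard) := by gcongr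
  linarith

/-- A homomorphism to a field extends to an overring contained in `f⁻¹` times the ring, if `f` is
not in the kernel. -/
lemma extend_hom {O B0 B1 k : Type} [CommRing O] [CommRing B0] [CommRing B1] [IsDomain B1] [Field k]
    [Algebra O B0] [Algebra O B1] [Algebra O k]
    (ι : B0 →ₐ[O] B1) (hι : Function.Injective ι) (ψ : B0 →ₐ[O] k) (f : B0) (hf : ψ f ≠ 0)
    (h : ∀ x, ∃ b, ι b = ι f * x) : ∃ ψ' : B1 →ₐ[O] k, ∀ b, ψ' (ι b) = ψ b := by
  choose b hb using h
  have hf0 : ι f ≠ 0 := fun h => hf (by rw [(map_eq_zero_iff ι hι).1 h, map_zero])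
  have hbι : ∀ c, b (ι c) = f * c := fun c => hι (by rw [hb, map_mul])
  refine ⟨{ toFun := fun x => ψ (b x) / ψ f
            map_one' := ?_, map_mul' := ?_, map_zero' := ?_, map_add' := ?_, commutes' := ?_ }, ?_⟩
  · rw [← map_one ι, hbι, mul_one, div_self hf]
  · intro x y
    have : f * b (x * y) = b x * b y := hι (by rw [map_mul, map_mul, hb, hb, hb]; ring)
    have h2 := congrArg ψ this
    rw [map_mul, map_mul] at h2
    field_simp
    linear_combination h2
  · have h0 := hbι 0
    rw [map_zero] at h0
    change ψ (b 0) / ψ f = 0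
    rw [h0, mul_zero, map_zero, zero_div]
  · intro x y
    have : b (x + y) = b x + b y := hι (by rw [map_add, hb, hb, hb]; ring)
    change ψ (b (x + y)) / ψ f = ψ (b x) / ψ f + ψ (b y) / ψ f
    rw [this, map_add, add_div]
  · intro o
    change ψ (b (algebraMap O B1 o)) / ψ f = _
    rw [← ι.commutes, hbι, map_mul, ψ.commutes, mul_div_cancel_left₀ _ hf]
  · intro c
    change ψ (b (ι c)) / ψ f = ψ c
    rw [hbι, map_mul, mul_div_cancel_left₀ _ hf]

end Split
end SKOne

namespace SKOne
open Ideal Module IsDedekindDomain Filter Topology Polynomial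

/-! ### Adjoining a root and counting homomorphisms to residue fields -/

lemma adjoinRoot_separable {L : Type} [Field L] (g : L[X]) [Fact (Irreducible g)] (hs : g.Separable) :
    Algebra.IsSeparable L (AdjoinRoot g) := by
  have h1 : IsSeparable L (AdjoinRoot.root g) := by
    refine Separable.of_dvd hs (minpoly.dvd _ _ ?_)
    rw [AdjoinRoot.aeval_eq, AdjoinRoot.mk_self]
  have h2 : IntermediateField.adjoin L {AdjoinRoot.root g} = ⊤ := by
    rw [← IntermediateField.toSubalgebra_inj, IntermediateField.top_toSubalgebra, eq_top_iff,
      ← AdjoinRoot.adjoinRoot_eq_top]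
    exact IntermediateField.algebra_adjoin_le_adjoin _ _
  have h3 := (IntermediateField.isSeparable_adjoin_simple_iff_isSeparable L _).2 h1
  rw [h2] at h3
  exact Algebra.IsSeparable.of_algHom _ _ (IntermediateField.topEquiv.symm.toAlgHom)

section Adjoin
variable {O : Type} [CommRing O] [IsDedekindDomain O]

lemma finite_mem {f : O} (hf : f ≠ 0) : {v : HeightOneSpectrum O | f ∈ v.asIdeal}.Finite := by
  refine (Ideal.finite_factors (I := span {f}) (by simpa using hf)).subset fun v hv => ?_
  exact Ideal.dvd_span_singleton.2 hv

variable (K : Type) [Field K] [Algebra O K] [IsFractionRing O K]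

/-- Some finite separable extension of `K` has `r` homomorphisms from its ring of integers to
almost all residue fields at `Φ`. -/
def HasSplit (r : ℕ) (Φ : Set (HeightOneSpectrum O)) : Prop :=
  ∃ (L : Type) (_ : Field L) (_ : Algebra K L) (_ : Algebra O L) (_ : IsScalarTower O K L)
    (_ : FiniteDimensional K L) (_ : Algebra.IsSeparable K L), SplitsAE (integralClosure O L) r Φ

variable {K}
variable {L : Type} [Field L] [Algebra K L] [Algebra O L] [IsScalarTower O K L]
  [FiniteDimensional K L] [Algebra.IsSeparable K L]

variable (K) in
include K in
lemma lift_smul (P : L[X]) : ∃ o : O, o ≠ 0 ∧ ∃ Q : (integralClosure O L)[X],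
    Q.map (algebraMap (integralClosure O L) L) = C (algebraMap O L o) * P := by
  obtain ⟨o, ho, h⟩ := exists_integral_multiples O K P.coeffs
  refine ⟨o, ho, ?_⟩
  have : C (algebraMap O L o) * P ∈ lifts (algebraMap (integralClosure O L) L) := by
    rw [lifts_iff_coeff_lifts]
    intro n
    by_cases hn : P.coeff n = 0
    · exact ⟨0, by simp [hn]⟩
    · have := h _ (coeff_mem_coeffs hn)
      refine ⟨⟨_, this⟩, ?_⟩
      rw [coeff_C_mul, ← Algebra.smul_def]; rfl
  exact (mem_lifts _).1 this

variable (g : O[X]) (hg : g.Monic)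

/-- If `g` has `k` roots in almost all residue fields at `Φ` and remains irreducible over `L`, then
adjoining a root of `g` to `L` multiplies the number of homomorphisms to residue fields by `k`. -/
theorem hasSplit_adjoin {r k : ℕ} {Φ : Set (HeightOneSpectrum O)}
    (h : SplitsAE (integralClosure O L) r Φ)
    (hg : g.Monic) (hirr : Irreducible (g.map (algebraMap O L)))
    (hsep : (g.map (algebraMap O L)).Separable)
    (hroots : ∃ T : Set (HeightOneSpectrum O), T.Finite ∧ ∀ v ∈ Φ, v ∉ T →
      ∃ t : Fin k → O ⧸ v.asIdeal, Function.Injective t ∧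
        ∀ i, g.eval₂ (algebraMap O (O ⧸ v.asIdeal)) (t i) = 0) :
    HasSplit K (r * k) Φ := by
  classical
  have hF : Fact (Irreducible (g.map (algebraMap O L))) := ⟨hirr⟩
  let L' := AdjoinRoot (g.map (algebraMap O L))
  have hsL : Algebra.IsSeparable L L' := adjoinRoot_separable _ hsep
  have hfL : FiniteDimensional L L' := (AdjoinRoot.powerBasis hirr.ne_zero).finite
  have hs' : Algebra.IsSeparable K L' := Algebra.IsSeparable.trans K L L'
  have hf' : FiniteDimensional K L' := FiniteDimensional.trans K L L'
  refine ⟨L', inferInstance, inferInstance, inferInstance, inferInstance, hf', hs', ?_⟩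
  let B := integralClosure O L
  let B' := integralClosure O L'
  let gB := g.map (algebraMap O B)
  have hgB : gB.Monic := hg.map _
  let B0 := AdjoinRoot gB
  let j : B →ₐ[O] B' := ((IsScalarTower.toAlgHom O L L').comp B.val).codRestrict B'
    fun x => (x.2.map (IsScalarTower.toAlgHom O L L'))
  have hroot : g.eval₂ (algebraMap O L') (AdjoinRoot.root (g.map (algebraMap O L))) = 0 := by
    have := AdjoinRoot.eval₂_root (g.map (algebraMap O L))
    rw [eval₂_map] at this
    exact this
  let θ : B' := ⟨AdjoinRoot.root _, ⟨g, hg, hroot⟩⟩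
  have hθ : gB.eval₂ (j : B →+* B') θ = 0 := by
    apply Subtype.ext
    rw [eval₂_map]
    have : (B'.val : B' →+* L') (g.eval₂ ((j : B →+* B').comp (algebraMap O B)) θ) = 0 := by
      rw [hom_eval₂, ← hroot]
      congr 1
    exact this
  let ι : B0 →ₐ[O] B' := AdjoinRoot.liftAlgHom gB j θ hθ
  have hval : ∀ Q : B[X], ((ι (AdjoinRoot.mk gB Q) : B') : L') =
      AdjoinRoot.mk _ (Q.map (algebraMap B L)) := by
    intro Q
    rw [AdjoinRoot.liftAlgHom_mk]
    have : (B'.val : B' →+* L') (Q.eval₂ (j : B →+* B') θ) =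
        AdjoinRoot.mk (g.map (algebraMap O L)) (Q.map (algebraMap B L)) := by
      rw [hom_eval₂, ← AdjoinRoot.aeval_eq, aeval_def, eval₂_map]
      rfl
    exact this
  have hgmap : gB.map (algebraMap B L) = g.map (algebraMap O L) := by
    rw [Polynomial.map_map]; rfl
  have hι : Function.Injective ι := by
    rw [injective_iff_map_eq_zero]
    intro b hb
    obtain ⟨Q, rfl⟩ := AdjoinRoot.mk_surjective b
    have h1 := hval Q
    rw [hb, ZeroMemClass.coe_zero, eq_comm, AdjoinRoot.mk_eq_zero, ← hgmap,
      ← modByMonic_eq_zero_iff_dvd (hgB.map _), ← map_modByMonic _ hgB] at h1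
    rw [AdjoinRoot.mk_eq_zero, ← modByMonic_eq_zero_iff_dvd hgB]
    exact Polynomial.map_injective _ (Subtype.val_injective) (by rw [h1, Polynomial.map_zero])
  -- the conductor
  have hcond : ∃ f : O, f ≠ 0 ∧ ∀ x : B', ∃ b, ι b = ι (algebraMap O B0 f) * x := by
    have h1 : ∀ x : B', ∃ f : O, f ≠ 0 ∧ ∃ b, ι b = f • x := by
      intro x
      obtain ⟨P, hP⟩ := AdjoinRoot.mk_surjective (x : L')
      obtain ⟨o, ho, Q, hQ⟩ := lift_smul (O := O) K P
      refine ⟨o, ho, AdjoinRoot.mk gB Q, Subtype.ext ?_⟩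
      rw [hval, hQ, map_mul, hP, Algebra.smul_def]
      rfl
    have hfin : Module.Finite O B' := IsIntegralClosure.finite O K L' B'
    obtain ⟨s, hs⟩ := hfin.fg_top
    choose f hf0 hf using h1
    refine ⟨∏ x ∈ s, f x, Finset.prod_ne_zero_iff.2 fun x _ => hf0 x, ?_⟩
    let N : Submodule O B' := (LinearMap.range ι.toLinearMap).comap
      (LinearMap.lsmul O B' (∏ x ∈ s, f x))
    have hN : (⊤ : Submodule O B') ≤ N := by
      rw [← hs, Submodule.span_le]
      intro x hx
      obtain ⟨b, hb⟩ := hf x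
      refine ⟨(∏ y ∈ s.erase x, f y) • b, ?_⟩
      have : (∏ y ∈ s, f y) = (∏ y ∈ s.erase x, f y) * f x := (Finset.prod_erase_mul _ _ hx).symm
      rw [LinearMap.lsmul_apply, this, mul_smul, ← hb]
      simp
    intro x
    obtain ⟨b, hb⟩ := hN (Submodule.mem_top (x := x))
    refine ⟨b, ?_⟩
    rw [ι.commutes, ← Algebra.smul_def]
    exact hb
  obtain ⟨f, hf0, hf⟩ := hcond
  obtain ⟨T1, hT1, h1⟩ := h
  obtain ⟨T2, hT2, h2⟩ := hroots
  refine ⟨T1 ∪ T2 ∪ {v | f ∈ v.asIdeal}, (hT1.union hT2).union (finite_mem hf0), fun v hv hvT => ?_⟩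
  simp only [Set.mem_union, not_or, Set.mem_ofPred_eq] at hvT
  obtain ⟨φ, hφ⟩ := h1 v hv hvT.1.1
  obtain ⟨t, ht, htr⟩ := h2 v hv hvT.1.2
  have := v.isMaximal
  let _ : Field (O ⧸ v.asIdeal) := Ideal.Quotient.field _
  have h3 : ∀ x : Fin r × Fin k, ∃ ψ : B' →ₐ[O] O ⧸ v.asIdeal,
      (∀ b, ψ (j b) = φ x.1 b) ∧ ψ θ = t x.2 := by
    intro x
    have hx : gB.eval₂ (φ x.1 : B →+* O ⧸ v.asIdeal) (t x.2) = 0 := by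
      rw [eval₂_map, ← htr x.2]
      congr 1
      exact (φ x.1).comp_algebraMap
    obtain ⟨ψ, hψ⟩ := extend_hom ι hι (AdjoinRoot.liftAlgHom gB (φ x.1) (t x.2) hx)
      (algebraMap O B0 f) (by
        rw [AlgHom.commutes]
        exact fun h0 => hvT.2 (Ideal.Quotient.eq_zero_iff_mem.1 h0)) hf
    refine ⟨ψ, fun b => ?_, ?_⟩
    · have := hψ (AdjoinRoot.mk gB (C b))
      rw [AdjoinRoot.liftAlgHom_mk, AdjoinRoot.liftAlgHom_mk, eval₂_C, eval₂_C] at this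
      exact this
    · have := hψ (AdjoinRoot.mk gB X)
      rw [AdjoinRoot.liftAlgHom_mk, AdjoinRoot.liftAlgHom_mk, eval₂_X, eval₂_X] at this
      exact this
  choose ψ hψ1 hψ2 using h3
  refine ⟨ψ ∘ finProdFinEquiv.symm, Function.Injective.comp ?_ finProdFinEquiv.symm.injective⟩
  intro x y hxy
  refine Prod.ext (hφ ?_) (ht ?_)
  · ext b
    rw [← hψ1, ← hψ1, hxy]
  · rw [← hψ2, ← hψ2, hxy]

end Adjoin
end SKOne

namespace SKOne
open Ideal Module IsDedekindDomain Filter Topology Polynomial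

/-! ### Ramified primes are finite in number -/

attribute [local instance] FractionRing.liftAlgebra FractionRing.isScalarTower_liftAlgebra

section Ram

lemma isSeparable_fractionRing (A K B L : Type) [CommRing A] [IsDomain A] [CommRing B] [IsDomain B]
    [Field K] [Field L] [Algebra A K] [IsFractionRing A K] [Algebra B L] [IsFractionRing B L]
    [Algebra A B] [Algebra K L] [Algebra A L] [IsScalarTower A K L] [IsScalarTower A B L]
    [Module.IsTorsionFree A B] [Algebra.IsSeparable K L] :
    Algebra.IsSeparable (FractionRing A) (FractionRing B) := by
  refine Algebra.IsSeparable.of_equiv_equiv (FractionRing.algEquiv A K).symm.toRingEquiv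
        (FractionRing.algEquiv B L).symm.toRingEquiv ?_
  ext _
  exact IsFractionRing.algEquiv_commutes (FractionRing.algEquiv A K).symm
    (FractionRing.algEquiv B L).symm _

lemma finite_ramified (A B : Type) [CommRing A] [CommRing B] [IsDedekindDomain A]
    [IsDedekindDomain B] [Algebra A B] [Module.IsTorsionFree A B] [Module.Finite A B]
    [Algebra.IsSeparable (FractionRing A) (FractionRing B)] :
    {v : HeightOneSpectrum A | ∃ w : HeightOneSpectrum B,
      w.asIdeal ^ 2 ∣ v.asIdeal.map (algebraMap A B)}.Finite := by
  have hD := differentIdeal_ne_bot (A := A) (B := B)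
  have hfin := Ideal.finite_factors hD
  refine Set.Finite.of_finite_image (f := HeightOneSpectrum.asIdeal) (Set.Finite.subset
    (hfin.image fun w => w.asIdeal.comap (algebraMap A B)) ?_) (fun v _ w _ h => HeightOneSpectrum.ext h)
  rintro _ ⟨v, ⟨w, hw⟩, rfl⟩
  have := v.isMaximal
  refine ⟨w, ?_, ?_⟩
  · have := pow_sub_one_dvd_differentIdeal A w.asIdeal 2 v.ne_bot hw
    simpa using this
  · have h1 : v.asIdeal ≤ w.asIdeal.comap (algebraMap A B) := by
      rw [← Ideal.map_le_iff_le_comap]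
      exact (Ideal.le_of_dvd hw).trans (Ideal.pow_le_self two_ne_zero)
    exact (v.isMaximal.eq_of_le (Ideal.comap_ne_top _ w.isPrime.ne_top) h1).symm

end Ram

section NonPower
variable {O : Type} [CommRing O] [IsDedekindDomain O]
  (K : Type) [Field K] [Algebra O K] [IsFractionRing O K]
  (L : Type) [Field L] [Algebra K L] [Algebra O L] [IsScalarTower O K L]
  [FiniteDimensional K L] [Algebra.IsSeparable K L]

include K in
/-- Elements with a simple zero at an unramified prime are not proper powers. -/
lemma exists_bad : ∃ T : Set (HeightOneSpectrum O), T.Finite ∧ ∀ v ∉ T, ∀ y ∈ v.asIdeal,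
    y ∉ v.asIdeal ^ 2 → ∀ n, 2 ≤ n → ∀ z : L, z ^ n ≠ algebraMap O L y := by
  let B := integralClosure O L
  have : IsDedekindDomain B := integralClosure.isDedekindDomain O K L
  have : Module.Finite O B := IsIntegralClosure.finite O K L B
  have hinjL : Function.Injective (algebraMap O L) := by
    rw [IsScalarTower.algebraMap_eq O K L]
    exact (algebraMap K L).injective.comp (IsFractionRing.injective O K)
  have : FaithfulSMul O L := (faithfulSMul_iff_algebraMap_injective O L).2 hinjL
  have hinj : Function.Injective (algebraMap O B) := fun x y h =>
    hinjL (congrArg (algebraMap B L) h)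
  have : FaithfulSMul O B := (faithfulSMul_iff_algebraMap_injective O B).2 hinj
  have : Module.IsTorsionFree O B := inferInstance
  have : IsFractionRing B L := integralClosure.isFractionRing_of_finite_extension K L
  have := isSeparable_fractionRing O K B L
  refine ⟨_, finite_ramified O B, fun v hv y hy hy2 n hn z hz => hv ?_⟩
  have hzi : IsIntegral O z := IsIntegral.of_pow (by omega : 0 < n) (hz ▸ isIntegral_algebraMap)
  let zB : B := ⟨z, hzi⟩
  have hzB : zB ^ n = algebraMap O B y := Subtype.ext hz
  have := v.isPrime
  obtain ⟨w, -, hwp, hw⟩ := Ideal.exists_ideal_over_prime_of_isIntegral (S := B) v.asIdeal ⊥ (by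
    rw [Ideal.comap_bot_of_injective _ hinj]; exact bot_le)
  have hwne : w ≠ ⊥ := fun h => v.ne_bot (by rw [← hw, h, Ideal.comap_bot_of_injective _ hinj])
  refine ⟨⟨w, hwp, hwne⟩, ?_⟩
  change w ^ 2 ∣ _
  -- `(y) = v c` with `c` prime to `v`
  obtain ⟨c, hc⟩ := Ideal.dvd_span_singleton.2 hy
  have hcv : ¬ c ≤ v.asIdeal := fun h => hy2 (by
    rw [← Ideal.span_singleton_le_iff_mem, hc, sq]
    exact Ideal.mul_mono le_rfl h)
  have hzw : zB ∈ w := hwp.mem_of_pow_mem n (by rw [hzB, ← Ideal.mem_comap, hw]; exact hy)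
  have h1 : w ^ n ∣ v.asIdeal.map (algebraMap O B) * c.map (algebraMap O B) := by
    rw [← Ideal.map_mul, ← hc, Ideal.map_span, Set.image_singleton, ← hzB, ← Ideal.span_singleton_pow]
    exact pow_dvd_pow_of_dvd (Ideal.dvd_span_singleton.2 hzw) n
  have h2 : ¬ w ∣ c.map (algebraMap O B) := fun h => hcv (by
    rw [← hw, ← Ideal.map_le_iff_le_comap]; exact Ideal.le_of_dvd h)
  have hwP : Prime w := Ideal.prime_of_isPrime hwne hwp
  exact (pow_dvd_pow w hn).trans (hwP.pow_dvd_of_dvd_mul_right n h2 h1)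

end NonPower

section Roots
variable {O : Type} [CommRing O] [IsDedekindDomain O] (S : Symb O ℂˣ)

lemma exists_roots_field {k : Type} [Field k] [Finite k] {ℓ : ℕ} (hℓ : ℓ.Prime)
    (h : ℓ ∣ Nat.card kˣ) {y z : k} (hz : z ^ ℓ = y) (hy : y ≠ 0) :
    ∃ t : Fin ℓ → k, Function.Injective t ∧ ∀ i, t i ^ ℓ = y := by
  have : Fact ℓ.Prime := ⟨hℓ⟩
  obtain ⟨ζ, hζ⟩ := exists_prime_orderOf_dvd_card' ℓ h
  refine ⟨fun i => z * ((ζ ^ (i : ℕ) : kˣ) : k), fun i j hij => ?_, fun i => ?_⟩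
  · have hz0 : z ≠ 0 := fun h0 => hy (by rw [← hz, h0, zero_pow hℓ.ne_zero])
    have h1 := Units.ext (mul_left_cancel₀ hz0 hij)
    exact Fin.ext (pow_injOn_Iio_orderOf (by simp [hζ]) (by simp [hζ]) h1)
  · have hζ1 : ζ ^ ℓ = 1 := by
      have := pow_orderOf_eq_one ζ
      rwa [hζ] at this
    rw [mul_pow, hz, ← Units.val_pow_eq_pow_val, ← pow_mul, mul_comm (i : ℕ), pow_mul,
      hζ1, one_pow]; simp

lemma finite_quot {O : Type} [CommRing O] [IsDedekindDomain O] (hO : FinQuot O)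
    (v : HeightOneSpectrum O) : Finite (O ⧸ v.asIdeal) := by
  obtain ⟨w, hw, hw0⟩ := Submodule.exists_mem_ne_zero_of_ne_bot v.ne_bot
  have := hO w hw0
  exact Finite.of_surjective _ (Ideal.Quotient.factor_surjective
    ((Ideal.span_singleton_le_iff_mem _).2 hw))

lemma exists_roots (hO : FinQuot O) {ℓ : ℕ} (hℓ : ℓ.Prime)
    (hp : ∀ a b, IsCoprime a b → ∃ k, S.m a b ^ (ℓ ^ k) = 1) (v : HeightOneSpectrum O)
    (hv : ¬ Free S v) {y : O} (hy : y ∉ v.asIdeal) (hM : S.M v.asIdeal y = 1) :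
    ∃ t : Fin ℓ → O ⧸ v.asIdeal, Function.Injective t ∧ ∀ i, t i ^ ℓ = Ideal.Quotient.mk _ y := by
  have hv' : ∃ b ∉ v.asIdeal, S.M v.asIdeal b ^ (ℓ ^ 0) ≠ 1 := by
    simpa [Free] using hv
  obtain ⟨h1, h2⟩ := key_aux S hO hℓ hp v 0 hv'
  have := v.isMaximal
  let _ : Field (O ⧸ v.asIdeal) := Ideal.Quotient.field _
  have := finite_quot hO v
  obtain ⟨z, hz⟩ := h2 y hy hM
  refine exists_roots_field hℓ (by simpa using h1) (z := Ideal.Quotient.mk _ z) ?_ ?_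
  · rw [← map_pow]; exact Ideal.Quotient.eq.2 hz
  · exact fun h => hy (Ideal.Quotient.eq_zero_iff_mem.1 h)

end Roots

section Tower
variable {O : Type} [CommRing O] [IsDedekindDomain O]
  (K : Type) [Field K] [Algebra O K] [IsFractionRing O K]

lemma splits_base (Φ : Set (HeightOneSpectrum O)) : SplitsAE (integralClosure O K) 1 Φ := by
  refine ⟨∅, Set.finite_empty, fun v _ _ => ⟨fun _ => ?_, Function.injective_of_subsingleton _⟩⟩
  exact (Algebra.ofId O (O ⧸ v.asIdeal)).comp
    (IsIntegralClosure.equiv O (integralClosure O K) K O).toAlgHom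

variable {K}
variable {L : Type} [Field L] [Algebra K L] [Algebra O L] [IsScalarTower O K L]
  [FiniteDimensional K L] [Algebra.IsSeparable K L]
variable (S : Symb O ℂˣ) (hO : FinQuot O) {ℓ : ℕ} (hℓ : ℓ.Prime)
  (hp : ∀ a b, IsCoprime a b → ∃ k, S.m a b ^ (ℓ ^ k) = 1)

include hO hℓ hp in
lemma hasSplit_root {r : ℕ} (h : SplitsAE (integralClosure O L) r {v | ¬ Free S v})
    (hchar : (ℓ : K) ≠ 0) {y : O} (hy : y ≠ 0) (hκ : HasKappa S y 1)
    (hpow : ∀ z : L, z ^ ℓ ≠ algebraMap O L y) : HasSplit K (r * ℓ) {v | ¬ Free S v} := by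
  have hinjL : Function.Injective (algebraMap O L) := by
    rw [IsScalarTower.algebraMap_eq O K L]
    exact (algebraMap K L).injective.comp (IsFractionRing.injective O K)
  have hmap : (X ^ ℓ - C y : O[X]).map (algebraMap O L) = X ^ ℓ - C (algebraMap O L y) := by simp
  refine hasSplit_adjoin (L := L) (X ^ ℓ - C y) h (monic_X_pow_sub_C y hℓ.ne_zero) ?_ ?_ ?_
  · rw [hmap]; exact X_pow_sub_C_irreducible_of_prime hℓ hpow
  · rw [hmap]
    refine separable_X_pow_sub_C _ ?_ (fun h0 => hy (hinjL (by rw [h0, map_zero])))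
    rw [← map_natCast (algebraMap K L), Ne, map_eq_zero]
    exact hchar
  · refine ⟨_, finite_mem hy, fun v hv hyv => ?_⟩
    obtain ⟨t, ht, htr⟩ := exists_roots S hO hℓ hp v hv (y := y) hyv (by rw [hκ v hyv]; rfl)
    refine ⟨t, ht, fun i => ?_⟩
    rw [eval₂_sub, eval₂_pow, eval₂_X, eval₂_C, htr i, sub_eq_zero]
    rfl

end Tower

section Density
variable {O : Type} [CommRing O] [IsDedekindDomain O]

lemma log_unbounded (C : ℝ) : ∃ s : ℝ, 1 < s ∧ s ≤ 2 ∧ C < Real.log (1 / (s - 1)) := by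
  refine ⟨1 + Real.exp (-(|C| + 1)), by linarith [Real.exp_pos (-(|C| + 1))], ?_, ?_⟩
  · have : Real.exp (-(|C| + 1)) ≤ 1 := Real.exp_le_one_iff.2 (by linarith [abs_nonneg C])
    linarith
  · rw [add_sub_cancel_left, one_div, ← Real.exp_neg, Real.log_exp]
    linarith [le_abs_self C]

/-- If more than half of the primes split twice over `Φ`, the complement of `Φ` is infinite. -/
lemma infinite_compl (hZ : Zeta O) {Φ : Set (HeightOneSpectrum O)} {r : ℕ} (hr : 2 ≤ r)
    (h : ∃ C : ℝ, ∀ s : ℝ, 1 < s → s ≤ 2 → r * dens Φ s ≤ Real.log (1 / (s - 1)) + C) :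
    Φᶜ.Infinite := by
  intro hfin
  obtain ⟨C, hC⟩ := h
  obtain ⟨D, hD⟩ := dens_univ hZ
  obtain ⟨s, hs, hs2, hlog⟩ := log_unbounded (C + 2 * D + 2 * (Φᶜ).ncard)
  have h1 := hC s hs hs2
  have h2 := (abs_le.1 (hD s hs hs2)).1
  have h3 : dens (Set.univ : Set (HeightOneSpectrum O)) s ≤ dens Φ s + (Φᶜ).ncard := by
    rw [← Set.union_compl_self Φ]
    refine (dens_union_le hZ _ _ hs).trans ?_
    gcongr
    exact dens_finite_le hZ hfin hs
  have h4 : (2 : ℝ) * dens Φ s ≤ r * dens Φ s := by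
    have := dens_nonneg Φ s
    gcongr
    exact_mod_cast hr
  linarith

end Density
end SKOne

namespace SKOne
open Ideal Module IsDedekindDomain Filter Topology Polynomial
open scoped nonZeroDivisors

/-! ### Infinitely many free primes -/

section Z
variable {A : Type} [CommRing A] [IsDomain A] [IsPrincipalIdealRing A] (β : BaseRing A)
  {O : Type} [CommRing O] [IsDedekindDomain O] [Algebra A O] [Module.Finite A O]
  [Module.IsTorsionFree A O]
  {K : Type} [Field K] [Algebra O K] [IsFractionRing O K]

include β in
lemma dens_of_hasSplit {r : ℕ} {Φ : Set (HeightOneSpectrum O)} (h : HasSplit K r Φ) :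
    ∃ C : ℝ, ∀ s : ℝ, 1 < s → s ≤ 2 → r * dens Φ s ≤ Real.log (1 / (s - 1)) + C := by
  obtain ⟨L, _, _, _, _, _, _, h⟩ := h
  have := integralClosure.isDedekindDomain O K L
  have : Module.Finite O (integralClosure O L) := IsIntegralClosure.finite O K L _
  let _ : Algebra A (integralClosure O L) :=
    ((algebraMap O (integralClosure O L)).comp (algebraMap A O)).toAlgebra
  have : IsScalarTower A O (integralClosure O L) := IsScalarTower.of_algebraMap_eq' rfl
  have : Module.Finite A (integralClosure O L) := Module.Finite.trans O _
  have hinjL : Function.Injective (algebraMap O L) := by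
    rw [IsScalarTower.algebraMap_eq O K L]
    exact (algebraMap K L).injective.comp (IsFractionRing.injective O K)
  have : FaithfulSMul O (integralClosure O L) := by
    rw [faithfulSMul_iff_algebraMap_injective]
    exact fun x y hxy => hinjL (congrArg Subtype.val hxy)
  have : FaithfulSMul A (integralClosure O L) := by
    rw [faithfulSMul_iff_algebraMap_injective]
    exact (FaithfulSMul.algebraMap_injective O _).comp (FaithfulSMul.algebraMap_injective A O)
  have : Module.IsTorsionFree A (integralClosure O L) := inferInstance
  exact dens_of_splits (zeta_of_finite β O) (zeta_of_finite β _) h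

end Z

section Many
variable {O : Type} [CommRing O] [IsDedekindDomain O] (S : Symb O ℂˣ)

lemma card_dual (G : Type) [CommGroup G] [Finite G] : Nonempty ((G →* ℂˣ) ≃* G) :=
  CommGroup.monoidHom_mulEquiv_of_hasEnoughRootsOfUnity G ℂ

/-- If infinitely many primes are free, there are elements with trivial `κ` which are divisible
exactly once by primes outside any given finite set. -/
lemma exists_many [Finite (ClassGroup O)] (h : {v | Free S v}.Infinite)
    (T : Set (HeightOneSpectrum O)) (hT : T.Finite) :
    ∃ y : O, y ≠ 0 ∧ HasKappa S y 1 ∧ ∃ v ∉ T, y ∈ v.asIdeal ∧ y ∉ v.asIdeal ^ 2 := by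
  have hinf : Infinite {v | Free S v} := h.to_subtype
  let cl : HeightOneSpectrum O → ClassGroup O := fun v =>
    ClassGroup.mk0 ⟨v.asIdeal, mem_nonZeroDivisors_of_ne_zero v.ne_bot⟩
  obtain ⟨c, hc⟩ := Finite.exists_infinite_fiber fun v : {v | Free S v} => cl v.1
  obtain ⟨⟨⟨v0, hv0⟩, hv0c⟩⟩ : Nonempty ((fun v : {v | Free S v} => cl v.1) ⁻¹' {c}) := inferInstance
  have hv0c : cl v0 = c := hv0c
  set n := Nat.card (ClassGroup O) with hn
  have hn0 : 0 < n := Nat.card_pos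
  have hx : ∀ v : (fun v : {v | Free S v} => cl v.1) ⁻¹' {c},
      ∃ x : O, x ≠ 0 ∧ span {x} = v.1.1.asIdeal * v0.asIdeal ^ (n - 1) := by
    rintro ⟨⟨v, hv⟩, hvc⟩
    have hvc : cl v = c := hvc
    have h1 : ClassGroup.mk0 (⟨v.asIdeal, mem_nonZeroDivisors_of_ne_zero v.ne_bot⟩ *
        ⟨v0.asIdeal, mem_nonZeroDivisors_of_ne_zero v0.ne_bot⟩ ^ (n - 1)) = 1 := by
      rw [map_mul, map_pow]
      change cl v * cl v0 ^ (n - 1) = 1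
      rw [hvc, hv0c, mul_pow_sub_one hn0.ne', hn, pow_card_eq_one']
    rw [ClassGroup.mk0_eq_one_iff] at h1
    obtain ⟨x, hx⟩ := h1
    have hx' : v.asIdeal * v0.asIdeal ^ (n - 1) = span {x} := hx
    refine ⟨x, ?_, hx'.symm⟩
    rintro rfl
    rw [Ideal.span_singleton_zero] at hx'
    exact mul_ne_zero v.ne_bot (pow_ne_zero _ v0.ne_bot) hx'
  choose x hx0 hx using hx
  have hnull : ∀ v, Null S (x v) := fun v b hb => by
    rw [← S.M_span (hx0 v) hb]
    refine M_trivial_of_free S _ (by simpa using hx0 v) (isCoprime_iff_sup.1 hb) fun w hw => ?_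
    have hbw : b ∉ w.asIdeal := by
      rw [← sup_span_iff, eq_top_iff, ← isCoprime_iff_sup.1 hb]
      exact sup_le_sup_right hw _
    rw [hx] at hw
    have := w.isPrime
    rcases this.mul_le.1 hw with h1 | h1
    · have : v.1.1 = w := HeightOneSpectrum.ext
        (v.1.1.isMaximal.eq_of_le w.isPrime.ne_top h1)
      rw [← this] at hbw ⊢
      exact v.1.2 b hbw
    · have : v0 = w := HeightOneSpectrum.ext
        (v0.isMaximal.eq_of_le w.isPrime.ne_top (w.isPrime.le_of_pow_le h1))
      rw [← this] at hbw ⊢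
      exact hv0 b hbw
  choose κ hκ using fun v => exists_hasKappa S (hx0 v) (hnull v)
  have : Finite (ClassGroup O →* ℂˣ) := Finite.of_equiv _ (card_dual (ClassGroup O)).some.symm.toEquiv
  obtain ⟨κ0, hκ0⟩ := Finite.exists_infinite_fiber κ
  obtain ⟨⟨v1, hv1⟩⟩ : Nonempty (κ ⁻¹' {κ0}) := inferInstance
  have hfin : ((fun v : ((fun v : {v | Free S v} => cl v.1) ⁻¹' {c}) => v.1.1) ⁻¹'
      (T ∪ {v0, v1.1.1})).Finite :=
    (hT.union (Set.toFinite _)).preimage fun a _ b _ hab => Subtype.ext (Subtype.ext hab)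
  obtain ⟨v, hv, hvT⟩ := (Set.infinite_coe_iff.1 hκ0).exists_notMem_finite hfin
  simp only [Set.mem_preimage, Set.mem_union, Set.mem_insert_iff, Set.mem_singleton_iff,
    not_or] at hvT hv hv1
  obtain ⟨hvT, hvv0, hvv1⟩ := hvT
  refine ⟨x v * x v1 ^ (n - 1), mul_ne_zero (hx0 _) (pow_ne_zero _ (hx0 _)), ?_, v.1.1, hvT, ?_, ?_⟩
  · have := (hκ v).mul S ((hκ v1).pow S (n - 1))
    rw [hv, hv1] at this
    have h1 : κ0 * κ0 ^ (n - 1) = 1 := by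
      ext c
      rw [MonoidHom.mul_apply, MonoidHom.pow_apply, mul_pow_sub_one hn0.ne', ← map_pow, hn,
        pow_card_eq_one', map_one, MonoidHom.one_apply]
    rwa [h1] at this
  · refine Ideal.mul_mem_right _ _ ?_
    rw [← Ideal.span_singleton_le_iff_mem, hx]
    exact Ideal.mul_le_left
  · rw [← Ideal.span_singleton_le_iff_mem, ← Ideal.dvd_iff_le, ← Ideal.span_singleton_mul_span_singleton,
      ← Ideal.span_singleton_pow, hx, hx, pow_two, mul_assoc,
      mul_dvd_mul_iff_left v.1.1.ne_bot, Ideal.dvd_iff_le]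
    intro hle
    have hp := v.1.1.isPrime
    have key : ∀ w : HeightOneSpectrum O, w.asIdeal ≤ v.1.1.asIdeal → v.1.1 = w := fun w hw =>
      (HeightOneSpectrum.ext (w.isMaximal.eq_of_le hp.ne_top hw)).symm
    rcases hp.mul_le.1 hle with h1 | h1
    · exact hvv0 (key _ (hp.le_of_pow_le h1))
    · rcases hp.mul_le.1 (hp.le_of_pow_le h1) with h1 | h1
      · exact hvv1 (key _ h1)
      · exact hvv0 (key _ (hp.le_of_pow_le h1))

end Many

section Steps
variable {O : Type} [CommRing O] [IsDedekindDomain O]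
  {K : Type} [Field K] [Algebra O K] [IsFractionRing O K]
variable (S : Symb O ℂˣ) (hO : FinQuot O) {ℓ : ℕ} (hℓ : ℓ.Prime)
  (hp : ∀ a b, IsCoprime a b → ∃ k, S.m a b ^ (ℓ ^ k) = 1)

include hO hℓ hp in
lemma split_all [Finite (ClassGroup O)] (hchar : (ℓ : K) ≠ 0) (h : {v | Free S v}.Infinite)
    (k : ℕ) : HasSplit K (ℓ ^ k) {v | ¬ Free S v} := by
  induction k with
  | zero => exact ⟨K, _, inferInstance, _, inferInstance, inferInstance, inferInstance,
      by rw [pow_zero]; exact splits_base K _⟩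
  | succ k ih =>
    obtain ⟨L, _, _, _, _, _, _, hL⟩ := ih
    obtain ⟨T, hT, hbad⟩ := exists_bad (O := O) K L
    obtain ⟨y, hy, hκ, v, hvT, hv1, hv2⟩ := exists_many S h T hT
    rw [pow_succ]
    exact hasSplit_root S hO hℓ hp hL hchar hy hκ (hbad v hvT y hv1 hv2 ℓ hℓ.two_le)

lemma M_map (φ : ℂˣ →* ℂˣ) {I : Ideal O} (hI : I ≠ ⊥) {b : O} (hb : I ⊔ span {b} = ⊤) :
    (S.map φ).M I b = φ (S.M I b) := by
  obtain ⟨x, y, h⟩ := exists_rep I hI b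
  rw [(S.map φ).M_eq h hb, S.M_eq h hb]
  rfl

include hO hℓ in
lemma exists_no_root (hinf : (Set.univ : Set (HeightOneSpectrum O)).Infinite)
    (hchar : (ℓ : K) ≠ 0) : ∃ J, ∀ z : K, ¬ IsPrimitiveRoot z (ℓ ^ (J + 1)) := by
  have hℓ0 : (ℓ : O) ≠ 0 := fun h => hchar (by rw [← map_natCast (algebraMap O K), h, map_zero])
  obtain ⟨v, -, hv⟩ := hinf.exists_notMem_finite (finite_mem hℓ0)
  have hv : (ℓ : O) ∉ v.asIdeal := hv
  have := finite_quot hO v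
  refine ⟨Nat.card (O ⧸ v.asIdeal), fun z hz => ?_⟩
  set J := Nat.card (O ⧸ v.asIdeal)
  obtain ⟨x, rfl⟩ := IsIntegrallyClosed.isIntegral_iff.1
    ((hz.isIntegral (pow_pos hℓ.pos _)).tower_top (A := O))
  have hx : IsPrimitiveRoot x (ℓ ^ (J + 1)) := hz.of_map_of_injective (IsFractionRing.injective O K)
  have hw : IsPrimitiveRoot (x ^ (ℓ ^ J)) ((ℓ - 1) + 1) := by
    rw [Nat.sub_add_cancel hℓ.one_le]
    exact hx.pow (pow_pos hℓ.pos _) (by rw [pow_succ])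
  have h1 : x ^ (ℓ ^ J) - 1 ∉ v.asIdeal := by
    intro hmem
    have h2 := hw.prod_one_sub_pow_eq_order
    apply hv
    have e : ((ℓ - 1 : ℕ) : O) + 1 = ℓ := by
      rw [← Nat.cast_add_one, Nat.sub_add_cancel hℓ.one_le]
    rw [← e, ← h2]
    refine Ideal.mem_of_dvd _ (Finset.dvd_prod_of_mem _
      (Finset.mem_range.2 (Nat.sub_pos_of_lt hℓ.one_lt))) ?_
    rw [zero_add, pow_one, ← neg_sub]
    exact neg_mem hmem
  have h3 : orderOf (Ideal.Quotient.mk v.asIdeal x) = ℓ ^ (J + 1) := by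
    have : Fact ℓ.Prime := ⟨hℓ⟩
    refine orderOf_eq_prime_pow ?_ ?_
    · rw [← map_pow, ← map_one (Ideal.Quotient.mk v.asIdeal), Ideal.Quotient.eq]
      exact h1
    · rw [← map_pow, hx.pow_eq_one, map_one]
  have h4 : orderOf (Ideal.Quotient.mk v.asIdeal x) ≤ J := orderOf_le_card
  have h5 : J + 1 < ℓ ^ (J + 1) := Nat.lt_pow_self hℓ.one_lt
  omega

/-- A monic factor of `X ^ N - 1` splits into distinct linear factors over any finite field with
`N ∣ #kˣ`. -/
lemma roots_of_dvd {k : Type} [Field k] [Finite k] {N : ℕ} (hN : N ∣ Nat.card kˣ) {g : k[X]}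
    (hgd : g ∣ X ^ N - 1) :
    ∃ t : Fin g.natDegree → k, Function.Injective t ∧ ∀ i, g.eval (t i) = 0 := by
  classical
  have hN0 : 0 < N := Nat.pos_of_dvd_of_pos hN Nat.card_pos
  obtain ⟨u, hu⟩ := IsCyclic.exists_ofOrder_eq_natCard (α := kˣ)
  obtain ⟨c, hc⟩ := hN
  have hc0 : c ≠ 0 := by
    rintro rfl
    exact (Nat.card_pos (α := kˣ)).ne' (by simpa using hc)
  have hprim : IsPrimitiveRoot (u ^ c) N := by
    have := IsPrimitiveRoot.orderOf (u ^ c)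
    rwa [orderOf_pow_of_dvd hc0 (by rw [hu, hc]; exact dvd_mul_left _ _), hu, hc,
      Nat.mul_div_cancel _ (Nat.pos_of_ne_zero hc0)] at this
  have hprim' : IsPrimitiveRoot ((u ^ c : kˣ) : k) N := IsPrimitiveRoot.coe_units_iff.2 hprim
  have hsplit := X_pow_sub_one_splits hprim'
  have hne : (X ^ N - 1 : k[X]) ≠ 0 := by
    simpa using (monic_X_pow_sub_C (1 : k) hN0.ne').ne_zero
  have hg := hsplit.of_dvd hne hgd
  have hnodup : g.roots.Nodup := Multiset.nodup_of_le (Polynomial.roots.le_of_dvd hne hgd)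
    (by have := hprim'.nthRoots_one_nodup; rwa [nthRoots, C_1] at this)
  have hcard : Fintype.card {x // x ∈ g.roots.toFinset} = g.natDegree := by
    rw [Fintype.card_coe, Multiset.toFinset_card_of_nodup hnodup, hg.natDegree_eq_card_roots]
  let e := (Fintype.equivFinOfCardEq hcard).symm
  refine ⟨fun i => (e i).1, Subtype.val_injective.comp e.injective, fun i => ?_⟩
  have := (e i).2
  rw [Multiset.mem_toFinset] at this
  exact (mem_roots'.1 this).2

include hO hℓ in
/-- The primes of norm `1` modulo `ℓ ^ J` split in the cyclotomic extension of level `ℓ ^ J`, which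
is proper by hypothesis. -/
lemma hasSplit_cyclotomic (hchar : (ℓ : K) ≠ 0) {J : ℕ}
    (hJ : ∀ z : K, ¬ IsPrimitiveRoot z (ℓ ^ J)) {Φ : Set (HeightOneSpectrum O)}
    (hΦ : ∀ v ∈ Φ, ℓ ^ J ∣ Nat.card (O ⧸ v.asIdeal)ˣ) : ∃ k, 2 ≤ k ∧ HasSplit K k Φ := by
  let Ω := AlgebraicClosure K
  have : FaithfulSMul O Ω := by
    rw [faithfulSMul_iff_algebraMap_injective, IsScalarTower.algebraMap_eq O K Ω]
    exact (algebraMap K Ω).injective.comp (IsFractionRing.injective O K)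
  let N := ℓ ^ J
  have hN0 : 0 < N := pow_pos hℓ.pos _
  have hNK : (N : K) ≠ 0 := by simpa [N] using fun h => absurd h hchar
  have : NeZero (N : Ω) := ⟨by
    rw [← map_natCast (algebraMap K Ω), Ne, map_eq_zero]; exact hNK⟩
  obtain ⟨ζ, hζ⟩ := HasEnoughRootsOfUnity.exists_primitiveRoot Ω N
  have hInt : IsIntegral O ζ := (hζ.isIntegral hN0).tower_top
  have hg := minpoly.monic hInt
  have hmap : minpoly K ζ = (minpoly O ζ).map (algebraMap O K) :=
    minpoly.isIntegrallyClosed_eq_field_fractions' K hInt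
  have hdvd : minpoly O ζ ∣ X ^ N - 1 :=
    minpoly.isIntegrallyClosed_dvd hInt (by simp [hζ.pow_eq_one])
  have hdeg : 2 ≤ (minpoly O ζ).natDegree := by
    rw [← hg.natDegree_map (algebraMap O K), ← hmap]
    have h0 := minpoly.natDegree_pos (A := K) (x := ζ) hInt.tower_top
    by_contra hlt
    have h1 : (minpoly K ζ).natDegree = 1 := by omega
    obtain ⟨z, hz⟩ := minpoly.mem_range_of_degree_eq_one K ζ
      (by rw [Polynomial.degree_eq_natDegree (minpoly.ne_zero hInt.tower_top), h1]; rfl)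
    rw [← hz] at hζ
    exact hJ z (hζ.of_map_of_injective (algebraMap K Ω).injective)
  refine ⟨_, hdeg, ?_⟩
  have hB : HasSplit K (1 * (minpoly O ζ).natDegree) Φ := by
    refine hasSplit_adjoin (L := K) (minpoly O ζ) (splits_base K Φ) hg ?_ ?_ ?_
    · rw [← hmap]; exact minpoly.irreducible hInt.tower_top
    · refine Separable.of_dvd (X_pow_sub_one_separable_iff.2 hNK) ?_
      have := Polynomial.map_dvd (algebraMap O K) hdvd
      simpa using this
    · refine ⟨∅, Set.finite_empty, fun v hv _ => ?_⟩
      have := v.isMaximal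
      let _ : Field (O ⧸ v.asIdeal) := Ideal.Quotient.field _
      have := finite_quot hO v
      have h1 := Polynomial.map_dvd (algebraMap O (O ⧸ v.asIdeal)) hdvd
      simp only [Polynomial.map_sub, Polynomial.map_pow, Polynomial.map_X, Polynomial.map_one] at h1
      have := roots_of_dvd (hΦ v hv) h1
      rw [hg.natDegree_map] at this
      simpa only [eval_map] using this
  rwa [one_mul] at hB

end Steps
end SKOne

namespace SKOne
open Ideal Module IsDedekindDomain Filter Topology Polynomial
open scoped nonZeroDivisors

/-! ### Reduction to non-free primes of density zero -/

section Step2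
variable {O : Type} [CommRing O] [IsDedekindDomain O]
  {K : Type} [Field K] [Algebra O K] [IsFractionRing O K]
variable (S : Symb O ℂˣ) (hO : FinQuot O) {ℓ : ℕ} (hℓ : ℓ.Prime)

include hO hℓ in
/-- For a symbol of exponent `ℓ` there are more classes of singular elements modulo `ℓ`-th powers
than characters of `ClassGroup O` of order `ℓ`; so some singular non-power `y` has trivial `κ`. -/
lemma hasSplit_singular [Finite (ClassGroup O)] (h1 : ∀ a b, IsCoprime a b → S.m a b ^ ℓ = 1)
    (hchar : (ℓ : K) ≠ 0) {ζ : O} (hu : IsUnit ζ) (hζ : ∀ z : K, z ^ ℓ ≠ algebraMap O K ζ) :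
    HasSplit K ℓ {v | ¬ Free S v} := by
  have hx : ∀ c : {c : ClassGroup O // c ^ ℓ = 1}, ∃ (I : (Ideal O)⁰) (x : O),
      ClassGroup.mk0 I = c ∧ x ≠ 0 ∧ span {x} = (I : Ideal O) ^ ℓ := by
    rintro ⟨c, hc⟩
    obtain ⟨I, rfl⟩ := ClassGroup.mk0_surjective c
    rw [← map_pow, ClassGroup.mk0_eq_one_iff] at hc
    obtain ⟨x, hx⟩ := hc
    have hx : (I : Ideal O) ^ ℓ = span {x} := hx
    refine ⟨I, x, rfl, ?_, hx.symm⟩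
    rintro rfl
    rw [Ideal.span_singleton_zero] at hx
    exact pow_ne_zero ℓ (nonZeroDivisors.ne_zero I.2) hx
  choose I x hI hx0 hx using hx
  have hy0 : ∀ (i : Fin ℓ) c, ζ ^ (i : ℕ) * x c ≠ 0 := fun i c =>
    mul_ne_zero (pow_ne_zero _ hu.ne_zero) (hx0 c)
  have hM1 : ∀ (I : Ideal O) b, I ≠ ⊥ → I ⊔ span {b} = ⊤ → S.M I b ^ ℓ = 1 := fun I b hI hb => by
    obtain ⟨s, t, hst, h⟩ := S.M_values I b hI hb
    rw [h, h1 s t hst]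
  have hnull : ∀ (i : Fin ℓ) c, Null S (ζ ^ (i : ℕ) * x c) := fun i c b hb => by
    have hs : span {ζ ^ (i : ℕ) * x c} = (I c : Ideal O) ^ ℓ := by
      rw [Ideal.span_singleton_mul_left_unit (hu.pow _), hx]
    have hI0 : (I c : Ideal O) ≠ ⊥ := nonZeroDivisors.ne_zero (I c).2
    have hcop := isCoprime_iff_sup.1 hb
    rw [hs] at hcop
    have hcop' : (I c : Ideal O) ⊔ span {b} = ⊤ := by
      rw [eq_top_iff, ← hcop]
      exact sup_le_sup_right (Ideal.pow_le_self hℓ.ne_zero) _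
    rw [← S.M_span (hy0 i c) hb, hs, (S.M_pow_left hI0 hcop' ℓ).1, hM1 _ _ hI0 hcop']
  choose κ hκ using fun (p : Fin ℓ × {c : ClassGroup O // c ^ ℓ = 1}) =>
    exists_kappa S (hy0 p.1 p.2) (hnull p.1 p.2)
  have hκℓ : ∀ p c, κ p c ^ ℓ = 1 := fun p c => by
    obtain ⟨W, hW, hW'⟩ := exists_coprime_rep c (span {ζ ^ (p.1 : ℕ) * x p.2})
      (by simpa using hy0 p.1 p.2)
    rw [← hW, ← hκ p W hW', hM1 _ _ (nonZeroDivisors.ne_zero W.2) hW']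
  obtain ⟨e⟩ := card_dual (ClassGroup O)
  have hninj : ¬ Function.Injective fun p => (⟨e (κ p), by
      rw [← map_pow, show κ p ^ ℓ = 1 from MonoidHom.ext (hκℓ p), map_one]⟩ :
        {c : ClassGroup O // c ^ ℓ = 1}) := by
    intro hinj
    have h2 := Nat.card_le_card_of_injective _ hinj
    rw [Nat.card_prod, Nat.card_fin] at h2
    have : Nonempty {c : ClassGroup O // c ^ ℓ = 1} := ⟨⟨1, one_pow _⟩⟩
    have h3 : 0 < Nat.card {c : ClassGroup O // c ^ ℓ = 1} := Nat.card_pos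
    nlinarith [hℓ.two_le]
  obtain ⟨⟨i, c⟩, ⟨i', c'⟩, heq, hne⟩ : ∃ p q, κ p = κ q ∧ p ≠ q := by
    simp only [Function.Injective, not_forall] at hninj
    obtain ⟨p, q, h, hpq⟩ := hninj
    exact ⟨p, q, e.injective (Subtype.ext_iff.1 h), hpq⟩
  have hK : ∀ p, HasKappa S (ζ ^ (p.1 : ℕ) * x p.2) (κ p) := fun p v hv =>
    hκ p ⟨v.asIdeal, mem_nonZeroDivisors_of_ne_zero v.ne_bot⟩ ((sup_span_iff v _).2 hv)
  have hy : HasKappa S (ζ ^ (i : ℕ) * x c * (ζ ^ (i' : ℕ) * x c') ^ (ℓ - 1)) 1 := by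
    have := (hK (i, c)).mul S ((hK (i', c')).pow S (ℓ - 1))
    rw [← heq] at this
    have h2 : κ (i, c) * κ (i, c) ^ (ℓ - 1) = 1 := by
      ext d
      rw [MonoidHom.mul_apply, MonoidHom.pow_apply, mul_pow_sub_one hℓ.ne_zero, hκℓ,
        MonoidHom.one_apply]
    rwa [h2] at this
  rw [show ℓ = 1 * ℓ from (one_mul _).symm]
  refine hasSplit_root S hO hℓ (fun a b hab => ⟨1, by rw [pow_one, h1 a b hab]⟩) (splits_base K _)
    hchar (mul_ne_zero (hy0 i c) (pow_ne_zero _ (hy0 i' c'))) hy fun z hz => hne ?_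
  obtain ⟨z, rfl⟩ := IsIntegrallyClosed.isIntegral_iff.1
    (IsIntegral.of_pow hℓ.pos (by rw [hz]; exact isIntegral_algebraMap) : IsIntegral O z)
  rw [← map_pow] at hz
  have hz := IsFractionRing.injective O K hz
  -- comparing ideals shows that the two classes agree
  have hcc : c = c' := by
    have h2 : (span {z}) ^ ℓ = ((I c : Ideal O) * (I c' : Ideal O) ^ (ℓ - 1)) ^ ℓ := by
      rw [Ideal.span_singleton_pow, hz, ← Ideal.span_singleton_mul_span_singleton,
        ← Ideal.span_singleton_pow, Ideal.span_singleton_mul_left_unit (hu.pow _),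
        Ideal.span_singleton_mul_left_unit (hu.pow _), hx, hx, mul_pow, ← pow_mul, ← pow_mul,
        mul_comm ℓ]
    have h3 : span {z} = (I c : Ideal O) * (I c' : Ideal O) ^ (ℓ - 1) := by
      have hd := fun P Q : Ideal O =>
        UniqueFactorizationMonoid.pow_dvd_pow_iff_dvd (a := P) (b := Q) hℓ.ne_zero
      exact dvd_antisymm ((hd _ _).1 h2.dvd) ((hd _ _).1 h2.symm.dvd)
    have h4 : ClassGroup.mk0 (I c * I c' ^ (ℓ - 1)) = 1 := by
      rw [ClassGroup.mk0_eq_one_iff]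
      exact ⟨z, h3.symm⟩
    rw [map_mul, map_pow, hI, hI] at h4
    apply Subtype.ext
    have h5 := c'.2
    rw [← mul_pow_sub_one hℓ.ne_zero] at h5
    exact mul_right_cancel (h4.trans h5.symm)
  subst hcc
  -- now a power of `ζ` is an `ℓ`-th power
  by_contra hne'
  have hii : i ≠ i' := fun h => hne' (by rw [h])
  have h2 : z ^ ℓ = ζ ^ ((i : ℕ) + i' * (ℓ - 1)) * x c ^ ℓ := by
    rw [hz, pow_add, pow_mul, mul_pow, ← mul_pow_sub_one hℓ.ne_zero (x c)]; ring
  have hxK : algebraMap O K (x c) ≠ 0 := by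
    rw [Ne, map_eq_zero_iff _ (IsFractionRing.injective O K)]; exact hx0 c
  have h3 : (algebraMap O K z / algebraMap O K (x c)) ^ ℓ =
      algebraMap O K ζ ^ ((i : ℕ) + i' * (ℓ - 1)) := by
    rw [div_pow, ← map_pow, h2, map_mul, map_pow, map_pow, mul_div_cancel_right₀ _ (pow_ne_zero _ hxK)]
  have hcop : Int.gcd ((i : ℤ) + i' * (ℓ - 1)) ℓ = 1 := by
    rw [Int.gcd_comm, ← Int.isCoprime_iff_gcd_eq_one,
      (Nat.prime_iff_prime_int.1 hℓ).coprime_iff_not_dvd]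
    intro hd
    have h4 : (ℓ : ℤ) ∣ (i : ℤ) - i' := by
      have : (i : ℤ) - i' = ((i : ℤ) + i' * (ℓ - 1)) - ℓ * i' := by ring
      rw [this]
      exact dvd_sub hd (dvd_mul_right _ _)
    have h5 := Int.eq_zero_of_abs_lt_dvd h4 (by
      have := i.2; have := i'.2
      rw [abs_lt]; omega)
    exact hii (Fin.ext (by omega))
  have hζ0 : algebraMap O K ζ ≠ 0 := (hu.map (algebraMap O K)).ne_zero
  have h4 := Int.gcd_eq_gcd_ab ((i : ℤ) + i' * (ℓ - 1)) ℓ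
  rw [hcop] at h4
  set a := Int.gcdA ((i : ℤ) + i' * (ℓ - 1)) ℓ
  set b := Int.gcdB ((i : ℤ) + i' * (ℓ - 1)) ℓ
  refine hζ ((algebraMap O K z / algebraMap O K (x c)) ^ a * algebraMap O K ζ ^ b) ?_
  rw [mul_pow, ← zpow_natCast, ← zpow_natCast, zpow_comm, zpow_natCast, h3, ← zpow_natCast,
    ← zpow_mul, ← zpow_mul, ← zpow_add₀ hζ0]
  conv_rhs => rw [← zpow_one (algebraMap O K ζ)]
  congr 1
  rw [Nat.cast_add, Nat.cast_mul, Nat.cast_sub hℓ.one_le]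
  push_cast at h4 ⊢
  linarith

end Step2

section Reduce
variable {A : Type} [CommRing A] [IsDomain A] [IsPrincipalIdealRing A] (β : BaseRing A)
  {O : Type} [CommRing O] [IsDedekindDomain O] [Algebra A O] [Module.Finite A O]
  [Module.IsTorsionFree A O]
  {K : Type} [Field K] [Algebra O K] [IsFractionRing O K] {ℓ : ℕ} (hℓ : ℓ.Prime)

/-- The set `Φ` has density zero. -/
def ZeroDens (Φ : Set (HeightOneSpectrum O)) : Prop :=
  ∀ N : ℕ, ∃ C : ℝ, ∀ s : ℝ, 1 < s → s ≤ 2 → N * dens Φ s ≤ Real.log (1 / (s - 1)) + C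

include β hℓ in
lemma zeroDens_of_hasSplit (S : Symb O ℂˣ) (hp : ∀ a b, IsCoprime a b → ∃ k, S.m a b ^ (ℓ ^ k) = 1)
    (hchar : (ℓ : K) ≠ 0) {k : ℕ} (hk : 2 ≤ k) (h : HasSplit K k {v | ¬ Free S v}) :
    ZeroDens {v | ¬ Free S v} := by
  have b := Module.finBasis A O
  have := finite_classGroup β b
  have hO := finQuot_of_basis β b
  have hinf := infinite_compl (zeta_of_finite β O) hk (dens_of_hasSplit β h)
  have hfree : {v | Free S v}.Infinite := by
    convert hinf using 1
    ext v; simp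
  intro N
  obtain ⟨C, hC⟩ := dens_of_hasSplit β (split_all (K := K) S hO hℓ hp hchar hfree N)
  refine ⟨C, fun s hs hs2 => le_trans ?_ (hC s hs hs2)⟩
  have := dens_nonneg {v | ¬ Free S v} s
  gcongr
  exact (Nat.lt_pow_self hℓ.one_lt).le

include β hℓ in
/-- Triviality of all `ℓ`-primary symbols follows from that of symbols whose non-free primes have
density zero. -/
theorem trivial_of_zeroDens (hchar : (ℓ : K) ≠ 0)
    (hFC : ∀ S : Symb O ℂˣ, (∀ a b, IsCoprime a b → ∃ k, S.m a b ^ (ℓ ^ k) = 1) →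
      ZeroDens {v | ¬ Free S v} → ∀ a b, IsCoprime a b → S.m a b = 1)
    (S : Symb O ℂˣ) (hp : ∀ a b, IsCoprime a b → ∃ k, S.m a b ^ (ℓ ^ k) = 1)
    (a b : O) (hab : IsCoprime a b) : S.m a b = 1 := by
  classical
  have bas := Module.finBasis A O
  have := finite_classGroup β bas
  have hO := finQuot_of_basis β bas
  have hZ := zeta_of_finite β O
  have hinf : (Set.univ : Set (HeightOneSpectrum O)).Infinite := by
    have := infinite_compl hZ (Φ := ∅) (r := 2) le_rfl ⟨0, fun s hs hs2 => by
      rw [show dens (∅ : Set (HeightOneSpectrum O)) s = 0 by simp [dens]]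
      simp only [mul_zero, add_zero]
      exact Real.log_nonneg (by rw [le_div_iff₀ (by linarith)]; linarith)⟩
    simpa using this
  have hex := exists_no_root (K := K) hO hℓ hinf hchar
  have hJ := Nat.find_spec hex
  set J := Nat.find hex with hJdef
  -- the power `S ^ (ℓ ^ J)`
  have hstep1 : ∀ a b, IsCoprime a b → S.m a b ^ (ℓ ^ J) = 1 := by
    let S' := S.map (powMonoidHom (ℓ ^ J))
    have hp' : ∀ a b, IsCoprime a b → ∃ k, S'.m a b ^ (ℓ ^ k) = 1 := fun a b hab => by
      obtain ⟨k, hk⟩ := hp a b hab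
      refine ⟨k, ?_⟩
      change (S.m a b ^ (ℓ ^ J)) ^ (ℓ ^ k) = 1
      rw [pow_right_comm, hk, one_pow]
    obtain ⟨k, hk, hs⟩ := hasSplit_cyclotomic (K := K) hO hℓ hchar hJ
      (Φ := {v | ¬ Free S' v}) fun v hv => by
        refine (key_aux S hO hℓ hp v J ?_).1
        have hv : ¬ Free S' v := hv
        simp only [Free, not_forall] at hv
        obtain ⟨b, hb, hne⟩ := hv
        refine ⟨b, hb, fun h => hne ?_⟩
        rw [M_map S _ v.ne_bot ((sup_span_iff v b).2 hb)]
        exact h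
    exact hFC S' hp' (zeroDens_of_hasSplit β hℓ S' hp' hchar hk hs)
  -- descending induction on the exponent
  have hind : ∀ j ≤ J, ∀ a b, IsCoprime a b → S.m a b ^ (ℓ ^ (J - j)) = 1 := by
    intro j
    induction j with
    | zero => exact fun _ => hstep1
    | succ j ih =>
      intro hj
      have ih := ih (by omega)
      let S' := S.map (powMonoidHom (ℓ ^ (J - (j + 1))))
      have h1 : ∀ a b, IsCoprime a b → S'.m a b ^ ℓ = 1 := fun a b hab => by
        change (S.m a b ^ (ℓ ^ (J - (j + 1)))) ^ ℓ = 1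
        rw [← pow_mul, ← pow_succ, show J - (j + 1) + 1 = J - j by omega, ih a b hab]
      have hp' : ∀ a b, IsCoprime a b → ∃ k, S'.m a b ^ (ℓ ^ k) = 1 := fun a b hab =>
        ⟨1, by rw [pow_one, h1 a b hab]⟩
      have hmin := Nat.find_min hex (m := J - 1) (by omega)
      push Not at hmin
      obtain ⟨z, hz⟩ := hmin
      rw [Nat.sub_add_cancel (by omega : 1 ≤ J)] at hz
      obtain ⟨ζ, rfl⟩ := IsIntegrallyClosed.isIntegral_iff.1
        ((hz.isIntegral (pow_pos hℓ.pos _)).tower_top (A := O))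
      have hζ : IsPrimitiveRoot ζ (ℓ ^ J) := hz.of_map_of_injective (IsFractionRing.injective O K)
      have hs := hasSplit_singular (K := K) S' hO hℓ h1 hchar
        (hζ.isUnit (pow_pos hℓ.pos _).ne') fun w hw => by
          refine hJ w ?_
          have : Fact ℓ.Prime := ⟨hℓ⟩
          have : orderOf w = ℓ ^ (J + 1) := by
            refine orderOf_eq_prime_pow (fun h => ?_) ?_
            · rw [show J = J - 1 + 1 by omega, pow_succ', pow_mul, hw] at h
              have := hz.dvd_of_pow_eq_one _ h
              rw [Nat.pow_dvd_pow_iff_le_right hℓ.one_lt] at this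
              omega
            · rw [pow_succ', pow_mul, hw, hz.pow_eq_one]
          rw [← this]
          exact IsPrimitiveRoot.orderOf w
      exact hFC S' hp' (zeroDens_of_hasSplit β hℓ S' hp' hchar hℓ.two_le hs)
  simpa using hind J le_rfl a b hab

end Reduce
end SKOne

namespace SKOne
open Ideal Module IsDedekindDomain Filter Topology
open scoped nonZeroDivisors

/-! ### Independent characters from non-free primes -/

section Chars
variable {A : Type} [CommRing A] [IsDomain A] [IsPrincipalIdealRing A] (β : BaseRing A)
  {O : Type} [CommRing O] [IsDedekindDomain O] [Algebra A O] [Module.Finite A O]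
  [Module.IsTorsionFree A O]
variable (S : Symb O ℂˣ) (hO : FinQuot O) {ℓ : ℕ} (hℓ : ℓ.Prime)
  (hp : ∀ a b, IsCoprime a b → ∃ k, S.m a b ^ (ℓ ^ k) = 1)

include hO in
omit [IsDedekindDomain O] in
lemma exists_exponent {u : O} (hu : u ≠ 0) :
    ∃ n, 0 < n ∧ ∀ b, IsCoprime u b → S.m u b ^ n = 1 := by
  have := hO u hu
  refine ⟨Nat.card (O ⧸ span {u})ˣ, Nat.card_pos, fun b hb => ?_⟩
  have hub : IsUnit (Ideal.Quotient.mk (span {u}) b) := by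
    obtain ⟨x, y, hxy⟩ := hb
    refine IsUnit.of_mul_eq_one (Ideal.Quotient.mk _ y) ?_
    rw [← map_mul, ← map_one (Ideal.Quotient.mk (span {u})), Ideal.Quotient.eq,
      Ideal.mem_span_singleton]
    exact ⟨-x, by linear_combination hxy⟩
  obtain ⟨t, ht⟩ := hub
  have h1 : t ^ Nat.card (O ⧸ span {u})ˣ = 1 := pow_card_eq_one'
  rw [← S.pow_right hb, ← S.one_right u]
  refine S.congr_right isCoprime_one_right ?_
  rw [← Ideal.mem_span_singleton, ← Ideal.Quotient.eq, map_pow, ← ht, ← Units.val_pow_eq_pow_val,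
    h1, map_one, Units.val_one]

/-- The character `n ↦ m(u, n)` of `A`, extended by zero. -/
noncomputable def chr (A : Type) [CommRing A] [Algebra A O] (U u : O) (n : A) : ℂ :=
  open Classical in if IsCoprime U (algebraMap A O n) then (S.m u (algebraMap A O n) : ℂ) else 0

include hp hℓ in
omit [IsDomain A] [IsPrincipalIdealRing A] [Module.Finite A O] [Module.IsTorsionFree A O]
  [IsDedekindDomain O] in
lemma chr_isChar {U u : O} (hu : u ∣ U) {M : A} (hM : U ∣ algebraMap A O M) :
    IsChar M (chr S A U u) := by
  have hcop : ∀ {x}, IsCoprime U x → IsCoprime u x := fun h => h.of_isCoprime_of_dvd_left hu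
  refine ⟨fun a b => ?_, fun a ha => ?_, fun a => ?_, fun a b hab => ?_⟩
  · have hmul : IsCoprime U (algebraMap A O (a * b)) ↔
        IsCoprime U (algebraMap A O a) ∧ IsCoprime U (algebraMap A O b) := by
      rw [map_mul, IsCoprime.mul_right_iff]
    unfold chr
    by_cases h1 : IsCoprime U (algebraMap A O a)
    · by_cases h2 : IsCoprime U (algebraMap A O b)
      · rw [if_pos (hmul.2 ⟨h1, h2⟩), if_pos h1, if_pos h2, map_mul, S.mul (hcop h1) (hcop h2),
          Units.val_mul]
      · rw [if_neg (fun h => h2 (hmul.1 h).2), if_neg h2, mul_zero]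
    · rw [if_neg (fun h => h1 (hmul.1 h).1), if_neg h1, zero_mul]
  · have ha' := ha.map (algebraMap A O)
    rw [chr, if_pos (isCoprime_of_isUnit ha' U).symm, S.unit_right ha', Units.val_one]
  · unfold chr
    split_ifs with h1
    · obtain ⟨k, hk⟩ := hp _ _ (hcop h1)
      have : (S.m u (algebraMap A O a) : ℂ) ^ (ℓ ^ k) = 1 := by
        rw [← Units.val_pow_eq_pow_val, hk, Units.val_one]
      exact (Complex.norm_eq_one_of_pow_eq_one this (pow_pos hℓ.pos _).ne').le
    · simp
  · have hd : U ∣ algebraMap A O a - algebraMap A O b := by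
      rw [← map_sub]; exact hM.trans (map_dvd _ hab)
    have hiff : IsCoprime U (algebraMap A O a) ↔ IsCoprime U (algebraMap A O b) :=
      ⟨fun h => isCoprime_of_dvd_sub h (by rw [← neg_sub, dvd_neg]; exact hd),
        fun h => isCoprime_of_dvd_sub h hd⟩
    unfold chr
    by_cases h1 : IsCoprime U (algebraMap A O b)
    · rw [if_pos (hiff.2 h1), if_pos h1, S.congr_right (hcop h1) (hu.trans hd)]
    · rw [if_neg (mt hiff.1 h1), if_neg h1]

attribute [local instance] FractionRing.liftAlgebra FractionRing.isScalarTower_liftAlgebra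

lemma exists_nonfree_primes [Algebra.IsSeparable (FractionRing A) (FractionRing O)]
    (hΦ : {v | ¬ Free S v}.Infinite) (k : ℕ) :
    ∃ v : Fin k → HeightOneSpectrum O, (∀ i, ¬ Free S (v i)) ∧
      (∀ i j, i ≠ j → (v i).under A ≠ (v j).under A) ∧
      ∀ i, ¬ (v i).asIdeal ^ 2 ∣ ((v i).under A).asIdeal.map (algebraMap A O) := by
  have hram := finite_ramified A O
  set Ram := {v : HeightOneSpectrum A | ∃ w : HeightOneSpectrum O,
      w.asIdeal ^ 2 ∣ v.asIdeal.map (algebraMap A O)}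
  let P : Set (HeightOneSpectrum A) := (fun v : HeightOneSpectrum O => v.under A) '' {v | ¬ Free S v}
  have hP : P.Infinite := by
    intro hfin
    obtain ⟨c, hc, hcv⟩ := exists_mem_finite P hfin
    have hc' : algebraMap A O c ≠ 0 := by
      rw [Ne, map_eq_zero_iff _ (FaithfulSMul.algebraMap_injective A O)]; exact hc
    exact hΦ ((finite_mem hc').subset fun v hv => hcv (v.under A) ⟨v, hv, rfl⟩)
  have hP' := hP.sdiff hram
  let e := hP'.natEmbedding
  have hch : ∀ i : ℕ, ∃ v : HeightOneSpectrum O, ¬ Free S v ∧ v.under A = (e i).1 :=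
    fun i => (e i).2.1
  choose v hv hve using hch
  refine ⟨fun i => v i, fun i => hv i, fun i j hij h => hij ?_, fun i h => ?_⟩
  · rw [hve, hve] at h
    exact Fin.ext (e.injective (Subtype.ext h))
  · refine (e i).2.2 ⟨v i, ?_⟩
    rw [← hve]; exact h

include β hO hℓ hp in
/-- Given `k` unramified non-free primes over distinct primes of `A`, all but finitely many primes of
`A` outside a set `Ψ` of upper density at most `ℓ ^ (-k)` lie below a non-free prime. -/
lemma exists_cover {k : ℕ} (v : Fin k → HeightOneSpectrum O) (hv : ∀ i, ¬ Free S (v i))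
    (hvi : ∀ i j, i ≠ j → (v i).under A ≠ (v j).under A)
    (hvr : ∀ i, ¬ (v i).asIdeal ^ 2 ∣ ((v i).under A).asIdeal.map (algebraMap A O)) :
    ∃ Ψ T : Set (HeightOneSpectrum A), T.Finite ∧
      (∃ C : ℝ, ∀ s : ℝ, 1 < s → s ≤ 2 → (ℓ : ℝ) ^ k * dens Ψ s ≤ Real.log (1 / (s - 1)) + C) ∧
      ∀ p, p ∉ Ψ → p ∉ T → ∃ w, ¬ Free S w ∧ w.under A = p := by
  classical
  have hinj := FaithfulSMul.algebraMap_injective A O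
  -- generators of the primes below
  obtain ⟨π, hπ⟩ : ∃ π : Fin k → A, ∀ i, span {π i} = ((v i).under A).asIdeal :=
    ⟨fun i => Submodule.IsPrincipal.generator ((v i).under A).asIdeal,
      fun i => Ideal.span_singleton_generator _⟩
  have hπ0 : ∀ i, π i ≠ 0 := fun i h => ((v i).under A).ne_bot (by rw [← hπ i, h]; simp)
  have hπ0' : ∀ i, algebraMap A O (π i) ≠ 0 := fun i => by
    rw [Ne, map_eq_zero_iff _ hinj]; exact hπ0 i
  have hπcop : ∀ i j, i ≠ j → IsCoprime (π i) (π j) := fun i j hij => by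
    rw [← Ideal.isCoprime_span_singleton_iff, hπ, hπ]
    refine (Ideal.isCoprime_of_isMaximal (I := _) (J := _) ?_)
    exact fun h => hvi i j hij (HeightOneSpectrum.ext h)
  have hmap : ∀ i, ((v i).under A).asIdeal.map (algebraMap A O) = span {algebraMap A O (π i)} :=
    fun i => by rw [← hπ i, Ideal.map_span, Set.image_singleton]
  have hI : ∀ i, ∃ I : Ideal O, span {algebraMap A O (π i)} = (v i).asIdeal * I := fun i => by
    rw [← hmap]
    exact Ideal.dvd_iff_le.2 Ideal.map_comap_le
  choose I hI using hI
  have hI0 : ∀ i, I i ≠ ⊥ := fun i h => hπ0' i (by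
    have := hI i
    rwa [h, Ideal.mul_bot, Ideal.span_singleton_eq_bot] at this)
  have hvI : ∀ i, (v i).asIdeal ⊔ I i = ⊤ := fun i => by
    by_contra hne
    have : I i ≤ (v i).asIdeal := by
      have := (v i).isMaximal.eq_of_le hne le_sup_left
      rw [this]; exact le_sup_right
    apply hvr i
    rw [hmap, hI, pow_two]
    exact mul_dvd_mul_left _ (Ideal.dvd_iff_le.2 this)
  have hc : ∀ i, ∃ c ∉ (v i).asIdeal, S.M (v i).asIdeal c ≠ 1 := fun i => by
    simpa [Free] using hv i
  choose c hc hMc using hc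
  have hu : ∀ i, ∃ u, u - c i ∈ (v i).asIdeal ∧
      u - 1 ∈ I i * span {∏ j ∈ Finset.univ.erase i, algebraMap A O (π j)} := fun i => by
    refine exists_ideal_crt (sup_mul_top' (hvI i) ?_) _ _
    have : IsCoprime (algebraMap A O (π i)) (∏ j ∈ Finset.univ.erase i, algebraMap A O (π j)) :=
      IsCoprime.prod_right fun j hj =>
        (hπcop i j (Finset.ne_of_mem_erase hj).symm).map (algebraMap A O)
    rw [eq_top_iff, ← isCoprime_iff_sup.1 this, hI]
    exact sup_le_sup_right Ideal.mul_le_left _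
  choose u hu1 hu2 using hu
  have hv1 : ∀ i, (v i).asIdeal ⊔ span {u i} = ⊤ := fun i =>
    coprime_sup_of_sub_mem ((sup_span_iff _ _).2 (hc i)) (hu1 i)
  have hI1 : ∀ i, u i - 1 ∈ I i := fun i => Ideal.mul_le_left (hu2 i)
  have hij1 : ∀ i j, i ≠ j → algebraMap A O (π j) ∣ u i - 1 := fun i j hij => by
    rw [← Ideal.mem_span_singleton]
    refine (Ideal.span_singleton_le_span_singleton.2 ?_) (Ideal.mul_le_right (hu2 i))
    exact Finset.dvd_prod_of_mem _ (Finset.mem_erase.2 ⟨hij.symm, Finset.mem_univ _⟩)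
  have hcop : ∀ i j, IsCoprime (u i) (algebraMap A O (π j)) := fun i j => by
    by_cases hij : i = j
    · subst hij
      rw [isCoprime_comm, isCoprime_iff_sup, hI]
      exact sup_mul_top (hv1 i) (coprime_sup_of_sub_mem (coprime_one _) (hI1 i))
    · exact (isCoprime_of_dvd_sub isCoprime_one_right (hij1 i j hij)).symm
  have hu0 : ∀ i, u i ≠ 0 := fun i h => by
    have := hv1 i
    rw [h, Ideal.span_singleton_zero, sup_bot_eq] at this
    exact (v i).isPrime.ne_top this
  have hm1 : ∀ i, S.m (u i) (algebraMap A O (π i)) ≠ 1 := fun i => by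
    rw [S.symm (hcop i i), ← S.M_span (hπ0' i) (hcop i i).symm, hI,
      S.M_mul_left (v i).ne_bot (hI0 i) (hv1 i) (coprime_sup_of_sub_mem (coprime_one _) (hI1 i)),
      S.M_congr (v i).ne_bot ((sup_span_iff _ _).2 (hc i)) (hu1 i),
      S.M_congr (hI0 i) (coprime_one _) (hI1 i), S.M_one (hI0 i), mul_one]
    exact hMc i
  have hm2 : ∀ i j, i ≠ j → S.m (u i) (algebraMap A O (π j)) = 1 := fun i j hij => by
    rw [S.symm (hcop i j), S.congr_right isCoprime_one_right (hij1 i j hij), S.one_right]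
  -- the modulus
  let U : O := ∏ i, u i
  have hU0 : U ≠ 0 := Finset.prod_ne_zero_iff.2 fun i _ => hu0 i
  have huU : ∀ i, u i ∣ U := fun i => Finset.dvd_prod_of_mem _ (Finset.mem_univ i)
  have hUcop : ∀ j, IsCoprime U (algebraMap A O (π j)) := fun j =>
    IsCoprime.prod_left fun i _ => hcop i j
  obtain ⟨M, hM⟩ : ∃ M : A, (span {U}).comap (algebraMap A O) = span {M} :=
    ⟨_, (Ideal.span_singleton_generator _).symm⟩
  have hM0 : M ≠ 0 := by
    rintro rfl
    rw [Ideal.span_singleton_zero] at hM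
    have := Ideal.eq_bot_of_comap_eq_bot hM
    exact hU0 (by simpa using this)
  have hUM : U ∣ algebraMap A O M := by
    rw [← Ideal.mem_span_singleton, ← Ideal.mem_comap, hM]
    exact Ideal.mem_span_singleton_self M
  have hMπ : ∀ i, IsCoprime (π i) M := fun i => by
    have hprime : Prime (π i) := by
      rw [← Ideal.span_singleton_prime (hπ0 i), hπ]; exact ((v i).under A).isPrime
    refine (hprime.coprime_iff_not_dvd).2 ?_
    rintro ⟨M', rfl⟩
    rw [map_mul] at hUM
    have h1 : U ∣ algebraMap A O M' := (hUcop i).dvd_of_dvd_mul_left hUM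
    rw [← Ideal.mem_span_singleton, ← Ideal.mem_comap, hM, Ideal.mem_span_singleton] at h1
    obtain ⟨t, ht⟩ := h1
    have hM'0 : M' ≠ 0 := right_ne_zero_of_mul hM0
    refine hprime.not_isUnit (IsUnit.of_mul_eq_one t (mul_right_cancel₀ hM'0 ?_))
    linear_combination -ht
  choose n hn0 hn using fun i => exists_exponent S hO (hu0 i)
  have hcopu : ∀ i {x}, IsCoprime U x → IsCoprime (u i) x := fun i _ h =>
    h.of_isCoprime_of_dvd_left (huU i)
  obtain ⟨C, hC⟩ := char_density β (k := k) (ℓ := ℓ) (n := ∏ i, n i) hℓ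
    (Finset.prod_pos fun i _ => hn0 i) hM0 (fun i => chr S A U (u i))
    (fun i => chr_isChar S hℓ hp (huU i) hUM) (fun i a => by
      unfold chr
      split_ifs with h1
      · right
        obtain ⟨d, hd⟩ := (Finset.dvd_prod_of_mem n (Finset.mem_univ i)).mul_left ℓ
        rw [hd, pow_mul, ← Units.val_pow_eq_pow_val, hn i _ (hcopu i h1), Units.val_one, one_pow]
      · left; rfl) π hMπ (fun i => by
      rw [chr, if_pos (hUcop i), orderOf_units]
      obtain ⟨t, ht⟩ := hp _ _ (hcop i i)
      obtain ⟨r, -, hr⟩ := (Nat.dvd_prime_pow hℓ).1 (orderOf_dvd_of_pow_eq_one ht)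
      rw [hr]
      refine dvd_pow_self _ ?_
      rintro rfl
      rw [pow_zero, orderOf_eq_one_iff] at hr
      exact hm1 i hr) (fun i j hij => by
      rw [chr, if_pos (hUcop j), hm2 i j hij, Units.val_one])
  refine ⟨_, _, finite_mem hM0, ⟨C, hC⟩, fun p hpΨ hpT => ?_⟩
  have hpM : M ∉ p.asIdeal := hpT
  have hpΨ : ¬ ∀ i, onIdeal (chr S A U (u i)) p.asIdeal = 1 := hpΨ
  obtain ⟨i, hi⟩ := not_forall.1 hpΨ
  rw [onIdeal] at hi
  obtain ⟨g, hg⟩ : ∃ g, g = Submodule.IsPrincipal.generator p.asIdeal := ⟨_, rfl⟩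
  have hgp : span {g} = p.asIdeal := by rw [hg]; exact Ideal.span_singleton_generator _
  rw [← hg] at hi
  have hgM : IsCoprime g M := by
    rw [isCoprime_iff_sup, hgp, sup_span_iff]; exact hpM
  have hUg : IsCoprime U (algebraMap A O g) :=
    ((hgM.map (algebraMap A O)).of_isCoprime_of_dvd_right hUM).symm
  have hg0 : algebraMap A O g ≠ 0 := by
    rw [Ne, map_eq_zero_iff _ hinj]
    rintro rfl
    exact p.ne_bot (by rw [← hgp]; simp)
  rw [chr, if_pos hUg, Units.val_eq_one, S.symm (hcopu i hUg),
    ← S.M_span hg0 (hcopu i hUg).symm] at hi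
  by_contra hno
  push Not at hno
  refine hi (M_trivial_of_free S _ (by simpa using hg0) (isCoprime_iff_sup.1 (hcopu i hUg).symm)
    fun w hw => ?_)
  have hwp : w.under A = p := by
    refine HeightOneSpectrum.ext (p.isMaximal.eq_of_le (w.under A).isPrime.ne_top ?_).symm
    rw [← hgp, Ideal.span_singleton_le_iff_mem]
    exact (Ideal.span_singleton_le_iff_mem w.asIdeal).1 hw
  have hfree : Free S w := by
    by_contra hnf
    exact hno w hnf hwp
  refine hfree _ ?_
  rw [← sup_span_iff, eq_top_iff, ← isCoprime_iff_sup.1 (hcopu i hUg).symm]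
  exact sup_le_sup_right hw _

end Chars
end SKOne

namespace SKOne
open Ideal Module IsDedekindDomain Filter Topology
open scoped nonZeroDivisors Pointwise

/-! ### Primes of residue degree one in a Galois extension -/

section DegOne

lemma exists_over {A B : Type} [CommRing A] [IsDedekindDomain A] [CommRing B] [IsDedekindDomain B]
    [Algebra A B] [Module.Finite A B] [Module.IsTorsionFree A B] (p : HeightOneSpectrum A) :
    ∃ P : HeightOneSpectrum B, P.under A = p := by
  have := p.isPrime
  obtain ⟨⟨P, hP, hPp⟩⟩ := p.asIdeal.nonempty_primesOver (S := B)
  have hu : P.under A = p.asIdeal := (hPp.over).symm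
  refine ⟨⟨P, hP, fun h => p.ne_bot ?_⟩, HeightOneSpectrum.ext hu⟩
  rw [← hu, h]
  exact Ideal.comap_bot_of_injective _ (FaithfulSMul.algebraMap_injective A B)

variable {A : Type} [CommRing A] [IsDomain A] [IsPrincipalIdealRing A] (β : BaseRing A)
  (B : Type) [CommRing B] [IsDedekindDomain B] [Algebra A B] [Module.Finite A B]
  [Module.IsTorsionFree A B]

/-- The primes of `A` below a prime of `B` of residue degree one. -/
def degOne (A B : Type) [CommRing A] [IsDomain A] [IsPrincipalIdealRing A] [CommRing B]
    [IsDedekindDomain B] [Algebra A B] [Module.Finite A B] : Set (HeightOneSpectrum A) :=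
  {p | ∃ P : HeightOneSpectrum B, P.under A = p ∧ nm P.asIdeal = nm p.asIdeal}

variable {B}

include β in
lemma nm_under (P : HeightOneSpectrum B) :
    nm P.asIdeal = nm (P.under A).asIdeal ∨
      nm (P.under A).asIdeal ^ 2 ≤ nm P.asIdeal := by
  have hZA := zeta_base β
  have hZ := zeta_of_finite β B
  have hmax := (P.under A).isMaximal
  have hmax' := P.isMaximal
  let _ : Field (A ⧸ (P.under A).asIdeal) := Ideal.Quotient.field _
  have hlo : P.asIdeal.LiesOver (P.under A).asIdeal := ⟨rfl⟩
  have hfin : Finite (B ⧸ P.asIdeal) := Nat.finite_of_card_ne_zero (hZ.pos _ P.ne_bot).ne'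
  have hfin' : Module.Finite (A ⧸ (P.under A).asIdeal) (B ⧸ P.asIdeal) := Module.Finite.of_finite
  have h := Module.natCard_eq_pow_finrank (K := A ⧸ (P.under A).asIdeal) (V := B ⧸ P.asIdeal)
  have h1 : 0 < Module.finrank (A ⧸ (P.under A).asIdeal) (B ⧸ P.asIdeal) := by
    have : Nontrivial (B ⧸ P.asIdeal) := Ideal.Quotient.nontrivial_iff.2 hmax'.ne_top
    exact Module.finrank_pos
  change nm P.asIdeal = nm (P.under A).asIdeal ^ _ at h
  rcases (show _ = 1 ∨ 2 ≤ _ from by omega : Module.finrank (A ⧸ (P.under A).asIdeal) (B ⧸ P.asIdeal) = 1 ∨ 2 ≤ Module.finrank (A ⧸ (P.under A).asIdeal) (B ⧸ P.asIdeal)) with h2 | h2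
  · left; rw [h, h2, pow_one]
  · right; rw [h]; exact Nat.pow_le_pow_right (hZA.pos _ (P.under A).ne_bot) h2

variable {G : Type} [Group G] [Finite G] [MulSemiringAction G B] [Algebra.IsInvariant A B G]
  [SMulCommClass G A B]

omit [IsDedekindDomain B] [Module.IsTorsionFree A B] [IsPrincipalIdealRing A] [Module.Finite A B] [Finite G]
  [Algebra.IsInvariant A B G] [SMulCommClass G A B] [IsDomain A] [CommRing A] [Algebra A B] in
lemma nm_smul (g : G) (P : Ideal B) : nm (g • P) = nm P :=
  (Nat.card_congr (Ideal.quotientEquiv P (g • P) (MulSemiringAction.toRingEquiv G B g) rfl).toEquiv).symm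

variable (G) in
include G in
lemma nm_eq_of_under (P Q : HeightOneSpectrum B) (h : P.under A = Q.under A) :
    ∃ g : G, Q.asIdeal = g • P.asIdeal := by
  have := P.isPrime
  have := Q.isPrime
  exact Algebra.IsInvariant.exists_smul_of_under_eq A B G P.asIdeal Q.asIdeal
    (congrArg HeightOneSpectrum.asIdeal h)

variable (G) in
include β in
/-- The set `degOne A B` has lower density at least `1 / |G|`. -/
lemma dens_degOne : ∃ C : ℝ, ∀ s : ℝ, 1 < s → s ≤ 2 →
    Real.log (1 / (s - 1)) ≤ Nat.card G * dens (degOne A B) s + C := by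
  classical
  have hZA := zeta_base β
  have hZ := zeta_of_finite β B
  obtain ⟨C, hC⟩ := dens_univ hZ
  choose P hP using exists_over (A := A) (B := B)
  have hσ : ∀ Q : HeightOneSpectrum B, ∃ g : G, Q.asIdeal = g • (P (Q.under A)).asIdeal :=
    fun Q => nm_eq_of_under G _ _ (hP _)
  choose σ hσ using hσ
  have := Fintype.ofFinite G
  have hsum2 := hZA.summ_prime (s := 2) (by norm_num)
  refine ⟨C + Nat.card G * ∑' p : HeightOneSpectrum A, (nm p.asIdeal : ℝ) ^ (-(2 : ℝ)),
    fun s hs hs2 => ?_⟩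
  let f : HeightOneSpectrum A → ℝ := fun p =>
    (if p ∈ degOne A B then (nm p.asIdeal : ℝ) ^ (-s) else 0) + (nm p.asIdeal : ℝ) ^ (-(2 : ℝ))
  have hf0 : ∀ p, 0 ≤ f p := fun p => by
    refine add_nonneg ?_ (by positivity)
    split_ifs <;> positivity
  have hfs : Summable f := (dens_summable hZA _ hs).add hsum2
  have hle : ∀ Q : HeightOneSpectrum B, (nm Q.asIdeal : ℝ) ^ (-s) ≤ f (Q.under A) := fun Q => by
    rcases nm_under (A := A) β Q with h | h
    · have hmem : Q.under A ∈ degOne A B := ⟨Q, rfl, h⟩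
      simp only [f]
      rw [if_pos hmem, h]
      have : (0 : ℝ) ≤ (nm (Q.under A).asIdeal : ℝ) ^ (-(2 : ℝ)) := by positivity
      linarith
    · have hpos : 0 < nm (Q.under A).asIdeal := hZA.pos _ (Q.under A).ne_bot
      have h1 : (1 : ℝ) ≤ nm (Q.under A).asIdeal := by exact_mod_cast hpos
      have h2 : ((nm (Q.under A).asIdeal : ℝ) ^ 2) ≤ nm Q.asIdeal := by exact_mod_cast h
      calc (nm Q.asIdeal : ℝ) ^ (-s) ≤ ((nm (Q.under A).asIdeal : ℝ) ^ 2) ^ (-s) :=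
            Real.rpow_le_rpow_of_nonpos (by positivity) h2 (by linarith)
        _ = (nm (Q.under A).asIdeal : ℝ) ^ (2 * (-s)) := by
            rw [Real.rpow_mul (by positivity)]; norm_num
        _ ≤ (nm (Q.under A).asIdeal : ℝ) ^ (-(2 : ℝ)) :=
            Real.rpow_le_rpow_of_exponent_le h1 (by linarith)
        _ ≤ f (Q.under A) := by
            simp only [f]
            have : (0 : ℝ) ≤ if Q.under A ∈ degOne A B then
              (nm (Q.under A).asIdeal : ℝ) ^ (-s) else 0 := by split_ifs <;> positivity
            linarith
  have hmain : dens (Set.univ : Set (HeightOneSpectrum B)) s ≤ Nat.card G * ∑' p, f p := by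
    refine Real.tsum_le_of_sum_le (fun v => by split_ifs <;> positivity) fun u => ?_
    calc _ ≤ ∑ Q ∈ u, f (Q.under A) := Finset.sum_le_sum fun Q _ => by simpa using hle Q
      _ = ∑ x ∈ u.image (fun Q => (Q.under A, σ Q)), f x.1 := by
          rw [Finset.sum_image]
          intro Q _ Q' _ h
          simp only [Prod.mk.injEq] at h
          refine HeightOneSpectrum.ext ?_
          rw [hσ Q, hσ Q', h.1, h.2]
      _ ≤ ∑ x ∈ (u.image fun Q => Q.under A) ×ˢ (Finset.univ : Finset G), f x.1 := by
          refine Finset.sum_le_sum_of_subset_of_nonneg (fun x hx => ?_) fun x _ _ => hf0 _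
          obtain ⟨Q, hQ, rfl⟩ := Finset.mem_image.1 hx
          exact Finset.mem_product.2 ⟨Finset.mem_image_of_mem _ hQ, Finset.mem_univ _⟩
      _ = Nat.card G * ∑ p ∈ u.image fun Q => Q.under A, f p := by
          rw [Finset.sum_product, Finset.mul_sum]
          refine Finset.sum_congr rfl fun p _ => ?_
          simp
      _ ≤ _ := mul_le_mul_of_nonneg_left (hfs.sum_le_tsum _ fun p _ => hf0 p) (by positivity)
  have hft : ∑' p, f p = dens (degOne A B) s + ∑' p : HeightOneSpectrum A,
      (nm p.asIdeal : ℝ) ^ (-(2 : ℝ)) := by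
    rw [dens, ← (dens_summable hZA _ hs).tsum_add hsum2]
  rw [hft] at hmain
  have := hC s hs hs2
  rw [abs_le] at this
  linarith [this.1]

variable (G) in
include β G in
lemma nm_of_degOne {O : Type} [CommRing O] [IsDedekindDomain O] [Algebra A O] [Module.Finite A O]
    [Module.IsTorsionFree A O] [Algebra O B] [IsScalarTower A O B] [Module.Finite O B]
    [Module.IsTorsionFree O B] (w : HeightOneSpectrum O) (hw : w.under A ∈ degOne A B) :
    nm w.asIdeal = nm (w.under A).asIdeal := by
  obtain ⟨P, hP, hPn⟩ := hw
  obtain ⟨Q, hQ⟩ := exists_over (B := B) w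
  have hQA : Q.under A = w.under A := by
    rw [← hQ]
    refine HeightOneSpectrum.ext ?_
    change Q.asIdeal.under A = (Q.asIdeal.under O).under A
    rw [Ideal.under_under]
  obtain ⟨g, hg⟩ := nm_eq_of_under G P Q (hP.trans hQA.symm)
  have hQn : nm Q.asIdeal = nm (w.under A).asIdeal := by rw [hg, nm_smul, hPn]
  have hZO := zeta_of_finite β O
  have hZ := zeta_of_finite β B
  have hf1 : Finite (O ⧸ w.asIdeal) := Nat.finite_of_card_ne_zero (hZO.pos _ w.ne_bot).ne'
  have hf2 : Finite (B ⧸ Q.asIdeal) := Nat.finite_of_card_ne_zero (hZ.pos _ Q.ne_bot).ne'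
  have hle1 : nm (w.under A).asIdeal ≤ nm w.asIdeal :=
    Nat.card_le_card_of_injective _ (Ideal.quotientMap_injective' (f := algebraMap A O)
      (I := w.asIdeal) (J := (w.under A).asIdeal) (H := le_rfl) le_rfl)
  have hle2 : nm w.asIdeal ≤ nm Q.asIdeal :=
    Nat.card_le_card_of_injective _ (Ideal.quotientMap_injective' (f := algebraMap O B)
      (I := Q.asIdeal) (J := w.asIdeal) (H := hQ ▸ le_rfl) (hQ ▸ le_rfl))
  omega

end DegOne

section FC
variable {A : Type} [CommRing A] [IsDomain A] [IsPrincipalIdealRing A] (β : BaseRing A)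
  {O : Type} [CommRing O] [IsDedekindDomain O] [Algebra A O] [Module.Finite A O]
  [Module.IsTorsionFree A O]

attribute [local instance] FractionRing.liftAlgebra FractionRing.isScalarTower_liftAlgebra

lemma exists_galois (K0 K : Type) [Field K0] [Field K] [Algebra K0 K] [FiniteDimensional K0 K]
    [Algebra.IsSeparable K0 K] : ∃ (N : Type) (_ : Field N) (_ : Algebra K0 N) (_ : Algebra K N)
      (_ : IsScalarTower K0 K N), IsGalois K0 N ∧ FiniteDimensional K0 N := by
  have : Algebra.IsSeparable K0 (SeparableClosure K) := Algebra.IsSeparable.trans K0 K _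
  have : IsSepClosure K0 (SeparableClosure K) := ⟨inferInstance, inferInstance⟩
  have : IsGalois K0 (SeparableClosure K) := inferInstance
  exact ⟨IntermediateField.normalClosure K0 K (SeparableClosure K), inferInstance, inferInstance,
    inferInstance, inferInstance, inferInstance, inferInstance⟩

include β in
/-- The primes of `A` with a prime of degree one in a Galois extension `N` containing `K`: over these
all primes of `N`, and hence of `O`, have degree one. -/
lemma exists_degOne_aux (K0 K N : Type) [Field K0] [Field K] [Field N] [Algebra A K0]
    [IsFractionRing A K0] [Algebra O K] [IsFractionRing O K] [Algebra K0 K] [Algebra K0 N]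
    [Algebra K N] [IsScalarTower K0 K N] [Algebra A N] [Algebra O N] [Algebra A K]
    [IsScalarTower A O K] [IsScalarTower A K0 K] [IsScalarTower O K N]
    [IsScalarTower A K0 N] [IsGalois K0 N] [FiniteDimensional K0 N] :
    ∃ (T : Set (HeightOneSpectrum A)) (d : ℕ), (∃ C : ℝ, ∀ s : ℝ, 1 < s → s ≤ 2 →
      Real.log (1 / (s - 1)) ≤ d * dens T s + C) ∧
      ∀ w : HeightOneSpectrum O, w.under A ∈ T → nm w.asIdeal = nm (w.under A).asIdeal := by
  have : IsScalarTower A K N := IsScalarTower.of_algebraMap_eq fun x => by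
    rw [IsScalarTower.algebraMap_apply A K0 N, IsScalarTower.algebraMap_apply A K0 K,
      ← IsScalarTower.algebraMap_apply K0 K N]
  have : IsScalarTower A O N := IsScalarTower.of_algebraMap_eq fun x => by
    rw [IsScalarTower.algebraMap_apply A K N, IsScalarTower.algebraMap_apply A O K,
      ← IsScalarTower.algebraMap_apply O K N]
  have hfinN' : FiniteDimensional K N := FiniteDimensional.right K0 K N
  have hsep' : Algebra.IsSeparable K N := Algebra.isSeparable_tower_top_of_isSeparable K0 K N
  let B := integralClosure O N
  have : IsDedekindDomain B := integralClosure.isDedekindDomain O K N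
  have : Module.Finite O B := IsIntegralClosure.finite O K N B
  have : Module.Finite A B := Module.Finite.trans O B
  have : FaithfulSMul O N := (faithfulSMul_iff_algebraMap_injective O N).2 (by
    rw [IsScalarTower.algebraMap_eq O K N]
    exact (algebraMap K N).injective.comp (IsFractionRing.injective O K))
  have : Module.IsTorsionFree O B := inferInstance
  have : Module.IsTorsionFree A B := Module.IsTorsionFree.trans_faithfulSMul A O B
  have : IsScalarTower A B N := inferInstance
  have hic : IsIntegralClosure B A N := by
    refine ⟨Subtype.coe_injective, fun {x} => ⟨fun hx => ⟨⟨x, hx.tower_top⟩, rfl⟩, ?_⟩⟩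
    rintro ⟨y, rfl⟩
    exact (Algebra.IsIntegral.isIntegral (R := A) y).map (IsScalarTower.toAlgHom A B N)
  have : IsFractionRing B N := integralClosure.isFractionRing_of_finite_extension K N
  have := Algebra.isInvariant_of_isGalois' A K0 N B
  have : Finite (B ≃ₐ[A] B) := Finite.of_equiv _ (galRestrict A K0 N B).toEquiv
  exact ⟨degOne A B, Nat.card (B ≃ₐ[A] B), dens_degOne β (B ≃ₐ[A] B),
    fun w hw => nm_of_degOne β (B ≃ₐ[A] B) w hw⟩

include β in
/-- There is a set of primes of `A`, of positive lower density, above which all primes of `O` have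
residue degree one. -/
lemma exists_degOne [Algebra.IsSeparable (FractionRing A) (FractionRing O)] :
    ∃ (T : Set (HeightOneSpectrum A)) (d : ℕ), (∃ C : ℝ, ∀ s : ℝ, 1 < s → s ≤ 2 →
      Real.log (1 / (s - 1)) ≤ d * dens T s + C) ∧
      ∀ w : HeightOneSpectrum O, w.under A ∈ T → nm w.asIdeal = nm (w.under A).asIdeal := by
  obtain ⟨N, _, _, _, _, hgal, hfin⟩ := exists_galois (FractionRing A) (FractionRing O)
  let _ : Algebra O N := ((algebraMap (FractionRing O) N).comp (algebraMap O (FractionRing O))).toAlgebra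
  let _ : Algebra A N := ((algebraMap (FractionRing A) N).comp (algebraMap A (FractionRing A))).toAlgebra
  have : IsScalarTower O (FractionRing O) N := IsScalarTower.of_algebraMap_eq fun _ => rfl
  have : IsScalarTower A (FractionRing A) N := IsScalarTower.of_algebraMap_eq fun _ => rfl
  exact exists_degOne_aux β (FractionRing A) (FractionRing O) N

include β in
/-- A symbol whose non-free primes have density zero is trivial. -/
theorem trivial_of_zero [Algebra.IsSeparable (FractionRing A) (FractionRing O)]
    {ℓ : ℕ} (hℓ : ℓ.Prime) (S : Symb O ℂˣ) (hp : ∀ a b, IsCoprime a b → ∃ k, S.m a b ^ (ℓ ^ k) = 1)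
    (hz : ZeroDens {v | ¬ Free S v}) (a b : O) (hab : IsCoprime a b) : S.m a b = 1 := by
  have bas := Module.finBasis A O
  have hO : FinQuot O := finQuot_of_basis β bas
  by_cases hfin : {v | ¬ Free S v}.Finite
  · exact trivial_of_finite S hO hfin hab
  exfalso
  have hZA := zeta_base β
  have hZO := zeta_of_finite β O
  obtain ⟨T1, d, ⟨C1, hC1⟩, hT1⟩ := exists_degOne (O := O) β
  obtain ⟨k, hk⟩ : ∃ k, 4 * d ≤ ℓ ^ k := ⟨4 * d, (Nat.lt_pow_self hℓ.one_lt).le⟩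
  obtain ⟨v, hv, hvi, hvr⟩ := exists_nonfree_primes (A := A) S hfin k
  obtain ⟨Ψ, T, hT, ⟨C2, hC2⟩, hcov⟩ := exists_cover β S hO hℓ hp v hv hvi hvr
  obtain ⟨C3, hC3⟩ := hz (4 * d)
  obtain ⟨s, hs, hs2, hlog⟩ := log_unbounded ((4 * C1 + C2 + C3 + 4 * d * T.ncard) / 2)
  have hsplit : dens T1 s ≤ dens Ψ s + T.ncard + dens {v | ¬ Free S v} s := by
    classical
    have h1 : T1 ⊆ (Ψ ∪ T) ∪ (T1 \ (Ψ ∪ T)) := by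
      intro x hx
      by_cases h : x ∈ Ψ ∪ T
      · exact Or.inl h
      · exact Or.inr ⟨hx, h⟩
    have h2 : dens (T1 \ (Ψ ∪ T)) s ≤ dens {v | ¬ Free S v} s := by
      have hw : ∀ p, ∃ w : HeightOneSpectrum O, p ∈ T1 \ (Ψ ∪ T) → ¬ Free S w ∧ w.under A = p := by
        intro p
        by_cases hp : p ∈ T1 \ (Ψ ∪ T)
        · obtain ⟨w, hw⟩ := hcov p (fun h => hp.2 (Or.inl h)) (fun h => hp.2 (Or.inr h))
          exact ⟨w, fun _ => hw⟩
        · obtain ⟨w, -⟩ := exists_over (B := O) p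
          exact ⟨w, fun h => absurd h hp⟩
      choose w hw using hw
      refine dens_le_of_injOn hZO w (fun p hp q hq h => ?_) (fun p hp => (hw p hp).1)
        (fun p hp => ?_) hs
      · rw [← (hw p hp).2, ← (hw q hq).2, h]
      · rw [hT1 (w p) (by rw [(hw p hp).2]; exact hp.1), (hw p hp).2]
    have h3 := dens_mono hZA h1 hs
    have h4 := dens_union_le hZA (Ψ ∪ T) (T1 \ (Ψ ∪ T)) hs
    have h5 := dens_union_le hZA Ψ T hs
    have h6 := dens_finite_le hZA hT hs
    linarith
  have e1 := hC1 s hs hs2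
  have e2 := hC2 s hs hs2
  have e3 := hC3 s hs hs2
  have e4 : (4 * d : ℝ) * dens Ψ s ≤ (ℓ : ℝ) ^ k * dens Ψ s :=
    mul_le_mul_of_nonneg_right (by exact_mod_cast hk) (dens_nonneg _ _)
  push_cast at e3
  have e5 := mul_le_mul_of_nonneg_left hsplit (by positivity : (0 : ℝ) ≤ 4 * d)
  linarith

end FC
end SKOne

namespace SKOne
open Ideal Module IsDedekindDomain

/-! ### Triviality of symbols on rings of integers -/

section All
variable {A : Type} [CommRing A] [IsDomain A] [IsPrincipalIdealRing A] (β : BaseRing A)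
  {O : Type} [CommRing O] [IsDedekindDomain O] [Algebra A O] [Module.Finite A O]
  [Module.IsTorsionFree A O]

attribute [local instance] FractionRing.liftAlgebra FractionRing.isScalarTower_liftAlgebra

include β in
/-- In residue characteristic `ℓ` the residue fields have no units of order `ℓ`, so that all primes
are free. -/
lemma trivial_of_char {ℓ : ℕ} (hℓ : ℓ.Prime) (h0 : (ℓ : O) = 0) (S : Symb O ℂˣ)
    (hp : ∀ a b, IsCoprime a b → ∃ k, S.m a b ^ (ℓ ^ k) = 1)
    (a b : O) (hab : IsCoprime a b) : S.m a b = 1 := by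
  have hO : FinQuot O := finQuot_of_basis β (Module.finBasis A O)
  refine trivial_of_finite S hO ?_ hab
  convert Set.finite_empty
  refine Set.eq_empty_of_forall_notMem fun v hv => ?_
  have hv : ¬ Free S v := hv
  simp only [Free, not_forall] at hv
  obtain ⟨b, hb, hne⟩ := hv
  have hdvd := (key_aux S hO hℓ hp v 0 ⟨b, hb, by simpa using hne⟩).1
  have := finite_quot hO v
  have := v.isMaximal
  let _ : Field (O ⧸ v.asIdeal) := Ideal.Quotient.field _
  have : Fact ℓ.Prime := ⟨hℓ⟩
  have h1 : (ℓ : O ⧸ v.asIdeal) = 0 := by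
    rw [← map_natCast (Ideal.Quotient.mk v.asIdeal), h0, map_zero]
  have : CharP (O ⧸ v.asIdeal) ℓ := (CharP.charP_iff_prime_eq_zero hℓ).2 h1
  have := Fintype.ofFinite (O ⧸ v.asIdeal)
  obtain ⟨n, -, hn⟩ := FiniteField.card (O ⧸ v.asIdeal) ℓ
  rw [zero_add, pow_one, Nat.card_units, Nat.card_eq_fintype_card, hn] at hdvd
  have h2 : ℓ ∣ ℓ ^ (n : ℕ) := dvd_pow_self _ n.ne_zero
  have h3 : ℓ ∣ 1 := (Nat.dvd_sub h2 hdvd).trans (by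
    rw [Nat.sub_sub_self (Nat.one_le_pow _ _ hℓ.pos)])
  exact hℓ.one_lt.ne' (Nat.dvd_one.1 h3)

include β in
theorem trivial_all [Algebra.IsSeparable (FractionRing A) (FractionRing O)] {ℓ : ℕ}
    (hℓ : ℓ.Prime) (S : Symb O ℂˣ) (hp : ∀ a b, IsCoprime a b → ∃ k, S.m a b ^ (ℓ ^ k) = 1)
    (a b : O) (hab : IsCoprime a b) : S.m a b = 1 := by
  by_cases h0 : (ℓ : O) = 0
  · exact trivial_of_char β hℓ h0 S hp a b hab
  · refine trivial_of_zeroDens (K := FractionRing O) β hℓ ?_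
      (fun S hp hz => trivial_of_zero β hℓ S hp hz) S hp a b hab
    rw [← map_natCast (algebraMap O (FractionRing O))]
    exact fun h => h0 ((IsFractionRing.injective O (FractionRing O)) (by rw [h, map_zero]))

end All
end SKOne

namespace SKOne
open Ideal Module IsDedekindDomain Polynomial

/-! ### The base rings `ℤ` and `𝔽_q[X]` -/

/-- The base ring `ℤ`. -/
noncomputable def baseInt : BaseRing ℤ :=
  have hball : ∀ X : ℕ, {a : ℤ | a.natAbs ≤ X} = (Finset.Icc (-(X : ℤ)) X : Finset ℤ) := fun X => by
    ext a; simp only [Set.mem_ofPred_eq, Finset.coe_Icc, Set.mem_Icc]; omega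
  have hcard : ∀ X : ℕ, {a : ℤ | a.natAbs ≤ X}.ncard = 2 * X + 1 := fun X => by
    rw [hball, Set.ncard_coe_finset, Int.card_Icc]; omega
  { ab := Int.natAbs
    ab_eq_zero := fun a => Int.natAbs_eq_zero
    ab_mul := Int.natAbs_mul
    ab_add := Int.natAbs_add_le
    card_quot := fun a _ => by
      rw [Nat.card_congr (Int.quotientSpanEquivZMod a).toEquiv, Nat.card_zmod]
    ball_fin := fun X => by rw [hball]; exact Finset.finite_toSet _
    le_ball := fun X _ => by rw [hcard]; omega
    K := 3
    ball_le := fun X _ => by rw [hcard]; omega }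

section Poly
variable (k : Type) [Field k] [Finite k]

open Classical in
/-- The absolute value `q ^ deg f`. -/
noncomputable def polyAbs (f : k[X]) : ℕ := if f = 0 then 0 else Nat.card k ^ f.natDegree

variable {k}
omit [Finite k] in
lemma polyAbs_ne {f : k[X]} (h : f ≠ 0) : polyAbs k f = Nat.card k ^ f.natDegree := if_neg h

omit [Finite k] in
lemma polyAbs_zero : polyAbs k 0 = 0 := if_pos rfl

lemma poly_ball (X : ℕ) (hX : 1 ≤ X) :
    {f : k[X] | polyAbs k f ≤ X} = (degreeLT k (Nat.log (Nat.card k) X + 1) : Set k[X]) := by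
  have hq : 1 < Nat.card k := Finite.one_lt_card
  ext f
  rw [Set.mem_ofPred_eq, SetLike.mem_coe, mem_degreeLT]
  by_cases hf : f = 0
  · subst hf; rw [polyAbs_zero, degree_zero]; exact ⟨fun _ => WithBot.bot_lt_coe _, fun _ => by omega⟩
  · rw [polyAbs_ne hf, degree_eq_natDegree hf, Nat.cast_lt, Nat.lt_succ_iff,
      Nat.le_log_iff_pow_le hq (by omega)]

lemma poly_ball_card (X : ℕ) (hX : 1 ≤ X) :
    {f : k[X] | polyAbs k f ≤ X}.ncard = Nat.card k ^ (Nat.log (Nat.card k) X + 1) := by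
  rw [poly_ball X hX, ← Nat.card_coe_set_eq]
  exact (Nat.card_congr (degreeLTEquiv k _).toEquiv).trans (by
    rw [Nat.card_fun, Nat.card_fin])

variable (k) in
/-- The base ring `k[X]`, for a finite field `k`. -/
noncomputable def basePoly : BaseRing k[X] where
  ab := polyAbs k
  ab_eq_zero f := by
    by_cases hf : f = 0
    · simp [hf, polyAbs_zero]
    · rw [polyAbs_ne hf]
      simp [hf, (Nat.card_pos (α := k)).ne']
  ab_mul f g := by
    by_cases hf : f = 0
    · simp [hf, polyAbs_zero]
    by_cases hg : g = 0
    · simp [hg, polyAbs_zero]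
    rw [polyAbs_ne hf, polyAbs_ne hg, polyAbs_ne (mul_ne_zero hf hg), natDegree_mul hf hg, pow_add]
  ab_add f g := by
    by_cases hf : f = 0
    · simp [hf]
    by_cases hg : g = 0
    · simp [hg]
    by_cases hfg : f + g = 0
    · simp [hfg, polyAbs_zero]
    have hq : 0 < Nat.card k := Nat.card_pos
    rw [polyAbs_ne hf, polyAbs_ne hg, polyAbs_ne hfg]
    rcases le_max_iff.1 (natDegree_add_le f g) with h | h
    · exact (Nat.pow_le_pow_right hq h).trans (Nat.le_add_right _ _)
    · exact (Nat.pow_le_pow_right hq h).trans (Nat.le_add_left _ _)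
  card_quot f hf := by
    have h := finrank_quotient_span_eq_natDegree (K := k) (f := f)
    have : Module.Finite k (k[X] ⧸ span {f}) := (AdjoinRoot.powerBasis hf).finite
    rw [Module.natCard_eq_pow_finrank (K := k), h, polyAbs_ne hf]
  ball_fin X := by
    have : {f : k[X] | polyAbs k f ≤ X} ⊆ {f : k[X] | polyAbs k f ≤ X + 1} := fun f hf =>
      (show polyAbs k f ≤ X from hf).trans (Nat.le_succ X)
    refine Set.Finite.subset (Set.finite_of_ncard_pos ?_) this
    rw [poly_ball_card _ (by omega)]
    exact pow_pos Nat.card_pos _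
  le_ball X hX := by
    rw [poly_ball_card X hX]
    exact (Nat.lt_pow_succ_log_self Finite.one_lt_card X).le
  K := Nat.card k
  ball_le X hX := by
    rw [poly_ball_card X hX, pow_succ']
    exact Nat.mul_le_mul_left _ (Nat.pow_log_le_self _ (by omega))

end Poly
end SKOne

namespace SKOne
open IntermediateField

/-! ### Separating elements inside a ring of `S`-integers -/

section Separating

/-- If a finitely generated extension `K` of a perfect field `k` of characteristic `p` is generated
as a field by `C`, then it has a separating transcendence basis consisting of elements of `C`: one
for which the separable closure is as large as possible works, by the exchange lemma
`exists_isTranscendenceBasis_and_isSeparable_of_linearIndepOn_pow'`. -/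
theorem exists_separating_subset (k K : Type) [Field k] [Field K] [Algebra k K] [PerfectField k]
    [Algebra.EssFiniteType k K] (p : ℕ) [hp : Fact p.Prime] [CharP k p]
    (C : Set K) (hC : adjoin k C = ⊤) :
    ∃ s : Finset K, (s : Set K) ⊆ C ∧ IsTranscendenceBasis k ((↑) : s → K) ∧
      Algebra.IsSeparable (adjoin k (s : Set K)) K := by
  have : ExpChar k p := .prime hp.out
  have : CharP K p := .of_ringHom_of_ne_zero (algebraMap k K) p hp.out.ne_zero
  have H : ∀ s : Finset K,
      LinearIndepOn k _root_.id (s : Set K) → LinearIndepOn k (· ^ p) (s : Set K) := by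
    intro s hs
    have := PerfectField.toPerfectRing (K := k) p
    refine LinearIndependent.map_of_injective_injective hs (frobeniusEquiv k p).symm
      (frobenius K p).toAddMonoidHom (by simp) ?_ ?_
    · intro x hx
      exact (map_eq_zero (frobenius K p)).1 hx
    · intro r m
      change (((frobeniusEquiv k p).symm r) • m) ^ p = r • m ^ p
      rw [Algebra.smul_def, mul_pow, ← map_pow, frobeniusEquiv_symm_pow_p, Algebra.smul_def]
  -- minimise the inseparable degree over the transcendence bases contained in `C`
  let d (s : Finset K) := Field.finInsepDegree (adjoin k (s : Set K)) K
  let T : Set (Finset K) := {s | (s : Set K) ⊆ C ∧ IsTranscendenceBasis k ((↑) : s → K)}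
  have hfin : ∀ t : Set K, IsTranscendenceBasis k ((↑) : t → K) → t.Finite := by
    obtain ⟨s, hs⟩ := exists_finset_maximalFor_isTranscendenceBasis_separableClosure k K
    intro t ht
    have hs' : IsTranscendenceBasis k ((↑) : s → K) := hs.1
    simp [Set.Finite, ← Cardinal.mk_lt_aleph0_iff, ht.cardinalMk_eq hs', Cardinal.natCast_lt_aleph0]
  have Hexists : T.Nonempty := by
    have : Algebra.IsAlgebraic (Algebra.adjoin k C) K := by
      rw [← isAlgebraic_adjoin_iff_top, hC, Algebra.isAlgebraic_iff_isIntegral]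
      exact Algebra.isIntegral_of_surjective topEquiv.surjective
    obtain ⟨t, hts, ht⟩ := exists_isTranscendenceBasis_subset (R := k) C
    lift t to Finset K using hfin t ht
    exact ⟨t, hts, ht⟩
  let s := d.argminOn _ Hexists
  have hs : s ∈ T := d.argminOn_mem _ Hexists
  have : Module.Finite (adjoin k (s : Set K)) K := by
    apply +allowSynthFailures Algebra.finite_of_essFiniteType_of_isAlgebraic
    · exact .of_comp k _ _
    · convert! hs.2.isAlgebraic_field <;> simp [s]
  have : Module.Finite ((separableClosure (adjoin k (s : Set K)) K).restrictScalars k) K :=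
    inferInstanceAs <| Module.Finite (separableClosure (adjoin k (s : Set K)) K) K
  have Hmax : ∀ t : Set K, t ⊆ C → IsTranscendenceBasis k ((↑) : t → K) →
      ¬ (separableClosure (adjoin k (s : Set K)) K).restrictScalars k <
        (separableClosure (adjoin k t) K).restrictScalars k := by
    intro t htC ht Hlt
    lift t to Finset K using hfin t ht
    exact d.not_lt_argminOn T ⟨htC, ht⟩ (by apply finrank_lt_of_gt Hlt)
  refine ⟨s, hs.1, hs.2, ?_⟩
  rw [← separableClosure.eq_top_iff, ← (restrictScalars_injective k).eq_iff,
    restrictScalars_top, eq_top_iff, ← hC, adjoin_le_iff]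
  intro n hnC
  by_contra hn
  have hns : n ∉ (s : Set K) :=
    fun h ↦ hn (le_restrictScalars_separableClosure _ (subset_adjoin _ _ h))
  have ⟨i, hi₁, hi₂⟩ := exists_isTranscendenceBasis_and_isSeparable_of_linearIndepOn_pow'
    p hp.out (a := id) H s n hs.2 hns
  rw [Set.image_id] at hi₂
  refine Hmax _ ?_ hi₁ (SetLike.lt_iff_le_and_exists.mpr ⟨?_, n, ?_, hn⟩)
  · rintro x ⟨rfl | hx, -⟩
    exacts [hnC, hs.1 hx]
  · rw [separableClosure_le_separableClosure_iff, adjoin_le_iff]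
    intro x hx
    obtain rfl | ne := eq_or_ne x i
    exacts [hi₂, le_restrictScalars_separableClosure _ (subset_adjoin _ _ ⟨.inr hx, ne⟩)]
  · obtain rfl | ne := eq_or_ne n i
    exacts [hi₂, le_restrictScalars_separableClosure _ (subset_adjoin _ _ ⟨.inl rfl, ne⟩)]

open Polynomial in
/-- A function field `F` over the finite field `k` that is generated by `C` contains an element
`t ∈ C`, transcendental over `k`, with `F / k(t)` finite and separable. -/
theorem exists_separating_element (k F : Type) [Field k] [Finite k] [Field F]
    [Algebra (RatFunc k) F] [FunctionField k F] [Algebra k F] [IsScalarTower k (RatFunc k) F]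
    (C : Set F) (hC : adjoin k C = ⊤) :
    ∃ t ∈ C, Transcendental k t ∧ FiniteDimensional (adjoin k {t}) F ∧
      Algebra.IsSeparable (adjoin k {t}) F := by
  obtain ⟨p, hp, hpk⟩ : ∃ p : ℕ, ∃ _ : Fact p.Prime, CharP k p := by
    obtain ⟨p, hpk⟩ := CharP.exists k
    exact ⟨p, ⟨(CharP.char_is_prime_or_zero k p).resolve_right (CharP.char_ne_zero_of_finite k p)⟩,
      hpk⟩
  have : Algebra.EssFiniteType k (RatFunc k) := by
    have := Algebra.EssFiniteType.of_isLocalization (R := k[X]) (RatFunc k) (nonZeroDivisors k[X])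
    exact Algebra.EssFiniteType.comp k k[X] (RatFunc k)
  have : Algebra.EssFiniteType k F := Algebra.EssFiniteType.comp k (RatFunc k) F
  obtain ⟨s, hsC, hs, hsep⟩ := exists_separating_subset k F p C hC
  have hcard : Cardinal.mk s = 1 := by
    have h1 : IsTranscendenceBasis k (fun _ : Unit => (X : k[X])) := .polynomial Unit k
    have : Algebra.IsAlgebraic k[X] (RatFunc k) :=
      IsLocalization.isAlgebraic (RatFunc k) (nonZeroDivisors k[X])
    have h2 := (h1.algebraMap_comp (A := RatFunc k)).algebraMap_comp (A := F)
    simpa using hs.cardinalMk_eq h2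
  obtain ⟨t, rfl⟩ : ∃ t, s = {t} := by
    rw [← Finset.card_eq_one]
    simpa using hcard
  have hfin : FiniteDimensional (adjoin k (({t} : Finset F) : Set F)) F := by
    apply +allowSynthFailures Algebra.finite_of_essFiniteType_of_isAlgebraic
    · exact .of_comp k _ _
  rw [Finset.coe_singleton] at hfin hsep hsC
  refine ⟨t, by simpa using hsC, ?_, hfin, hsep⟩
  exact hs.1.transcendental ⟨t, by simp⟩

end Separating
end SKOne

namespace SKOne
open Ideal Module IsDedekindDomain

/-! ### Rings of `S`-integers as localisations -/

/-- Finiteness of quotients passes from `O` to `R = O[1/s]`. -/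
theorem FinQuot.of_loc {O R : Type} [CommRing O] [CommRing R] [IsDomain R]
    (i : O →+* R) (s : O) (hs : IsUnit (i s))
    (hloc : ∀ r : R, ∃ (k : ℕ) (x : O), i s ^ k * r = i x) (hO : FinQuot O) : FinQuot R := by
  intro c hc
  obtain ⟨k, c0, hk⟩ := hloc c
  have hc0 : c0 ≠ 0 := by
    rintro rfl
    rw [map_zero] at hk
    exact (mul_ne_zero (hs.pow k).ne_zero hc) hk
  have := hO c0 hc0
  let g : O →+* R ⧸ span {c} := (Ideal.Quotient.mk (span {c})).comp i
  have hg : ∀ x ∈ span {c0}, g x = 0 := by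
    intro x hx
    obtain ⟨y, rfl⟩ := mem_span_singleton'.1 hx
    refine Ideal.Quotient.eq_zero_iff_mem.2 (mem_span_singleton'.2 ⟨i y * i s ^ k, ?_⟩)
    rw [map_mul, ← hk]; ring
  let g' := Ideal.Quotient.lift (span {c0}) g hg
  have hfin : (Set.range g').Finite := Set.finite_range _
  -- the image of `s` has finite order in the quotient, so its inverse is one of its powers
  obtain ⟨a, b, hab, hpow⟩ : ∃ a b : ℕ, a < b ∧ g s ^ a = g s ^ b := by
    have : Finite (Set.range g') := hfin
    obtain ⟨a, b, hne, h⟩ := Finite.exists_ne_map_eq_of_infinite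
      (fun n : ℕ => (⟨g s ^ n, Ideal.Quotient.mk _ (s ^ n), by
        simp [g', Ideal.Quotient.lift_mk]⟩ : Set.range g'))
    have h' : g s ^ a = g s ^ b := congrArg Subtype.val h
    rcases lt_or_gt_of_ne hne with hlt | hlt
    exacts [⟨a, b, hlt, h'⟩, ⟨b, a, hlt, h'.symm⟩]
  have hu : IsUnit (g s) := hs.map (Ideal.Quotient.mk (span {c}))
  have h1 : g s ^ (b - a) = 1 := by
    refine (hu.pow a).mul_left_cancel ?_
    rw [← pow_add, mul_one, hpow]; congr 1; omega
  refine Set.finite_univ_iff.1 (hfin.subset fun r _ => ?_)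
  obtain ⟨r, rfl⟩ := Ideal.Quotient.mk_surjective r
  obtain ⟨l, x, hx⟩ := hloc r
  refine ⟨Ideal.Quotient.mk _ (x * s ^ (l * (b - a) - l)), ?_⟩
  have hx' : g x = g s ^ l * Ideal.Quotient.mk _ r := by
    simp only [g, RingHom.comp_apply, ← hx, map_mul, map_pow]
  have hle : l ≤ l * (b - a) := Nat.le_mul_of_pos_right l (by omega)
  change g _ = _
  rw [map_mul, map_pow, hx', mul_right_comm, ← pow_add, Nat.add_sub_cancel' hle, mul_comm l,
    pow_mul, h1, one_pow, one_mul]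

section Loc
variable {O F : Type} [CommRing O] [IsDedekindDomain O] [Field F] [Algebra O F] [IsFractionRing O F]

/-- Every proper valuation ring of `F` containing the Dedekind ring `O` is the valuation ring of a
nonzero prime of `O`. -/
theorem exists_prime_of_valuationSubring (V : ValuationSubring F) (hV : V ≠ ⊤)
    (hO : ∀ o : O, algebraMap O F o ∈ V) :
    ∃ v : HeightOneSpectrum O, V = (v.valuation F).valuationSubring ∧
      ∀ o : O, o ∈ v.asIdeal ↔ V.valuation (algebraMap O F o) < 1 := by
  let f : O →+* V := (algebraMap O F).codRestrict V.toSubring hO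
  let P : Ideal O := (IsLocalRing.maximalIdeal V).comap f
  have hPmem : ∀ o : O, o ∈ P ↔ V.valuation (algebraMap O F o) < 1 := fun o =>
    (V.valuation_lt_one_iff (f o))
  have hPp : P.IsPrime := Ideal.comap_isPrime _ _
  have hP0 : P ≠ ⊥ := by
    intro h0
    refine hV (eq_top_iff.2 fun x _ => ?_)
    obtain ⟨a, b, hb, rfl⟩ := IsFractionRing.div_surjective O x
    have hb0 : b ≠ 0 := nonZeroDivisors.ne_zero hb
    have h1 : ¬ V.valuation (algebraMap O F b) < 1 := fun h => hb0 (by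
      have := (hPmem b).2 h
      rwa [h0, Ideal.mem_bot] at this)
    have h2 : V.valuation (algebraMap O F b) = 1 :=
      le_antisymm ((V.valuation_le_one_iff _).2 (hO b)) (not_lt.1 h1)
    rw [← V.valuation_le_one_iff, map_div₀, h2, div_one]
    exact (V.valuation_le_one_iff _).2 (hO a)
  refine ⟨⟨P, hPp, hP0⟩, ?_, hPmem⟩
  set v : HeightOneSpectrum O := ⟨P, hPp, hP0⟩
  have hone : ∀ o : O, o ∉ P → V.valuation (algebraMap O F o) = 1 := fun o ho =>
    le_antisymm ((V.valuation_le_one_iff _).2 (hO o)) (not_lt.1 fun h => ho ((hPmem o).2 h))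
  have hle : ∀ x : F, v.valuation F x ≤ 1 → x ∈ V := by
    intro x hx
    obtain ⟨n, d, hnd⟩ := v.exists_primeCompl_mul_eq_of_integer x hx
    rw [← V.valuation_le_one_iff]
    have := congrArg V.valuation hnd
    rw [map_mul, hone d d.2, mul_one] at this
    rw [this]
    exact (V.valuation_le_one_iff _).2 (hO n)
  ext x
  rw [Valuation.mem_valuationSubring_iff]
  refine ⟨fun hx => ?_, hle x⟩
  by_contra hlt
  rw [not_le] at hlt
  have hx0 : x ≠ 0 := by rintro rfl; simp at hlt
  have hinv : v.valuation F x⁻¹ < 1 := by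
    rw [map_inv₀]; exact inv_lt_one_of_one_lt₀ hlt
  obtain ⟨n, d, hnd⟩ := v.exists_primeCompl_mul_eq_of_integer x⁻¹ hinv.le
  have hn : n ∈ P := by
    change n ∈ v.asIdeal
    rw [← v.valuation_lt_one_iff_mem (K := F)]
    change v.valuation F (algebraMap O F n) < 1
    rw [← hnd, map_mul, v.valuation_eq_one_iff_notMem.2 d.2, mul_one]
    exact hinv
  have hd : algebraMap O F d = algebraMap O F n * x := by rw [← hnd]; field_simp
  have h1 := hone d d.2
  rw [hd, map_mul] at h1
  have h2 := (hPmem n).1 hn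
  have h3 := (V.valuation_le_one_iff x).2 hx
  exact absurd h1 (mul_lt_one_of_lt_of_le h2 h3).ne

/-- If `O` has finite class group and lies in the ring `R` of `S`-integers, then `R = O[1/s]` for a
suitable `s`: the product over the primes of `O` in `S` of generators of principal powers. -/
theorem exists_loc [Finite (ClassGroup O)] (S : Set (ValuationSubring F)) (hS : S.Finite)
    (hO : ∀ V : ValuationSubring F, V ≠ ⊤ → V ∉ S → ∀ o : O, algebraMap O F o ∈ V) :
    ∃ s : O, s ≠ 0 ∧
      (∀ V : ValuationSubring F, V ≠ ⊤ → V ∉ S → (algebraMap O F s)⁻¹ ∈ V) ∧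
      ∀ x : F, (∀ V : ValuationSubring F, V ≠ ⊤ → V ∉ S → x ∈ V) →
        ∃ (k : ℕ) (y : O), algebraMap O F s ^ k * x = algebraMap O F y := by
  have hne : ∀ v : HeightOneSpectrum O, (v.valuation F).valuationSubring ≠ ⊤ := by
    intro v h
    obtain ⟨π, hπ, hπ0⟩ := Submodule.exists_mem_ne_zero_of_ne_bot v.ne_bot
    have h1 : (algebraMap O F π)⁻¹ ∈ (v.valuation F).valuationSubring := h ▸ trivial
    rw [Valuation.mem_valuationSubring_iff, map_inv₀] at h1
    have h2 := (v.valuation_lt_one_iff_mem (K := F) π).2 hπ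
    have h3 : 0 < v.valuation F (algebraMap O F π) := by
      rw [Valuation.pos_iff]
      simpa using hπ0
    exact absurd ((one_lt_inv₀ h3).2 h2) (not_lt.2 h1)
  have hinj : Function.Injective
      (fun v : HeightOneSpectrum O => (v.valuation F).valuationSubring) := fun v w h =>
    HeightOneSpectrum.eq_of_valuation_isEquiv_valuation (K := F)
      (Valuation.isEquiv_iff_valuationSubring _ _ |>.2 h)
  have hfin : {v : HeightOneSpectrum O | (v.valuation F).valuationSubring ∈ S}.Finite :=
    hS.preimage hinj.injOn
  have hgen : ∀ v : HeightOneSpectrum O, ∃ (h : ℕ) (g : O), h ≠ 0 ∧ v.asIdeal ^ h = span {g} := by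
    intro v
    refine ⟨Nat.card (ClassGroup O), ?_⟩
    let I : nonZeroDivisors (Ideal O) := ⟨v.asIdeal, mem_nonZeroDivisors_of_ne_zero v.ne_bot⟩
    have h1 : ClassGroup.mk0 (I ^ Nat.card (ClassGroup O)) = 1 := by
      rw [map_pow]; exact pow_card_eq_one'
    obtain ⟨g, hg⟩ := (ClassGroup.mk0_eq_one_iff (I ^ Nat.card (ClassGroup O)).2).1 h1
    exact ⟨g, Nat.card_pos.ne', hg⟩
  choose h g hh hg using hgen
  have hs : ∀ w : HeightOneSpectrum O, (∏ v ∈ hfin.toFinset, g v) ∈ w.asIdeal ↔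
      (w.valuation F).valuationSubring ∈ S := by
    intro w
    have := w.isPrime
    rw [Ideal.IsPrime.prod_mem_iff]
    constructor
    · rintro ⟨v, hv, hvw⟩
      have h1 : v.asIdeal ^ h v ≤ w.asIdeal := by
        rw [hg, span_singleton_le_iff_mem]; exact hvw
      have h2 : v.asIdeal ≤ w.asIdeal := this.le_of_pow_le h1
      have h3 : v = w := HeightOneSpectrum.ext (v.isMaximal.eq_of_le this.ne_top h2)
      rw [← h3]; simpa using hv
    · intro hw
      refine ⟨w, by simpa using hw, ?_⟩
      have : g w ∈ w.asIdeal ^ h w := hg w ▸ mem_span_singleton_self _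
      exact pow_le_self (hh w) this
  refine ⟨∏ v ∈ hfin.toFinset, g v, ?_, ?_, ?_⟩
  · refine Finset.prod_ne_zero_iff.2 fun v _ h0 => ?_
    have := hg v
    rw [h0, span_singleton_eq_bot.2 rfl] at this
    exact pow_ne_zero _ v.ne_bot this
  · intro V hV hVS
    obtain ⟨v, hVv, hmem⟩ := exists_prime_of_valuationSubring V hV (hO V hV hVS)
    have h1 := mt (hs v).1 (hVv ▸ hVS)
    rw [hmem] at h1
    rw [← V.valuation_le_one_iff, map_inv₀,
      le_antisymm ((V.valuation_le_one_iff _).2 (hO V hV hVS _)) (not_lt.1 h1), inv_one]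
  · intro x hx
    -- the denominator ideal of `x` is supported on the primes in `S`
    let D : Ideal O := ((⊥ : Subalgebra O F).toSubmodule.comap
      (LinearMap.toSpanSingleton O F x))
    have hD : ∀ o : O, o ∈ D ↔ ∃ y : O, algebraMap O F y = algebraMap O F o * x := by
      intro o
      simp only [D, Submodule.mem_comap, LinearMap.toSpanSingleton_apply,
        Subalgebra.mem_toSubmodule, Algebra.mem_bot, Set.mem_range, Algebra.smul_def]
    have hrad : (∏ v ∈ hfin.toFinset, g v) ∈ D.radical := by
      rw [Ideal.radical_eq_sInf, Ideal.mem_sInf]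
      rintro P ⟨hDP, hP⟩
      have hP0 : P ≠ ⊥ := by
        rintro rfl
        obtain ⟨a, b, hb, hab⟩ := IsFractionRing.div_surjective O x
        have hb0 : b ≠ 0 := nonZeroDivisors.ne_zero hb
        refine hb0 ((Ideal.mem_bot).1 (hDP ((hD b).2 ⟨a, ?_⟩)))
        have : algebraMap O F b ≠ 0 := by simpa using hb0
        rw [← hab]; field_simp
      refine (hs ⟨P, hP, hP0⟩).2 ?_
      by_contra hPS
      have hxv := hx _ (hne ⟨P, hP, hP0⟩) hPS
      obtain ⟨n, d, hnd⟩ := HeightOneSpectrum.exists_primeCompl_mul_eq_of_integer _ x hxv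
      exact d.2 (hDP ((hD d).2 ⟨n, by rw [← hnd, mul_comm]⟩))
    obtain ⟨k, hk⟩ := hrad
    obtain ⟨y, hy⟩ := (hD _).1 hk
    exact ⟨k, y, by rw [hy, map_pow]⟩

end Loc

section Assembly
attribute [local instance] FractionRing.liftAlgebra FractionRing.isScalarTower_liftAlgebra

variable {A : Type} [CommRing A] [IsDomain A] [IsPrincipalIdealRing A] (β : BaseRing A)

include β in
/-- `SL_n = E_n` for the `S`-integers of a finite separable extension `F` of the fraction field
`K` of a base ring `A` contained in the ring of `S`-integers. -/
theorem elementary_of_separable (K F : Type) [Field K] [Field F] [Algebra A K] [IsFractionRing A K]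
    [Algebra K F] [Algebra A F] [IsScalarTower A K F] [FiniteDimensional K F]
    [Algebra.IsSeparable K F] (R : Type) [CommRing R] [Algebra R F] [IsFractionRing R F]
    (S : Set (ValuationSubring F)) (hS : S.Finite)
    (hR : ∀ x : F, x ∈ (algebraMap R F).range ↔ ∀ V : ValuationSubring F, V ≠ ⊤ → V ∉ S → x ∈ V)
    (hA : ∀ a : A, algebraMap A F a ∈ (algebraMap R F).range) {n : ℕ} (hn : 3 ≤ n) :
    ElementarySubgroup n R = ⊤ := by
  have hRd : IsDomain R := (IsFractionRing.injective R F).isDomain (algebraMap R F)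
  let O := integralClosure A F
  have : IsDedekindDomain O := integralClosure.isDedekindDomain A K F
  have : IsFractionRing O F := integralClosure.isFractionRing_of_finite_extension K F
  have : Module.Finite A O := IsIntegralClosure.finite A K F O
  have : FaithfulSMul A F := by
    rw [faithfulSMul_iff_algebraMap_injective, IsScalarTower.algebraMap_eq A K F]
    exact (algebraMap K F).injective.comp (IsFractionRing.injective A K)
  have : Module.IsTorsionFree A O := inferInstance
  have : Algebra.IsSeparable (FractionRing A) (FractionRing O) := isSeparable_fractionRing A K O F
  have := Module.free_of_finite_type_torsion_free' (R := A) (M := O)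
  have hOfin : FinQuot O := finQuot_of_basis β (Module.finBasis A O)
  have : Finite (ClassGroup O) := finite_classGroup β (Module.finBasis A O)
  have hOV : ∀ V : ValuationSubring F, V ≠ ⊤ → V ∉ S → ∀ o : O, algebraMap O F o ∈ V := by
    intro V hV hVS o
    have hAV : ∀ a : A, algebraMap A F a ∈ V := fun a => (hR _).1 (hA a) V hV hVS
    let j : A →+* V := (algebraMap A F).codRestrict V.toSubring hAV
    obtain ⟨q, hq, hq0⟩ := o.2
    have hInt : IsIntegral V (algebraMap O F o) := by
      refine ⟨q.map j, hq.map j, ?_⟩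
      rw [Polynomial.eval₂_map]
      exact hq0
    obtain ⟨y, hy⟩ := IsIntegrallyClosed.isIntegral_iff.1 hInt
    rw [← hy]; exact y.2
  obtain ⟨s, hs0, hsinv, hloc⟩ := exists_loc S hS hOV
  have hOR : ∀ o : O, ∃ r : R, algebraMap R F r = algebraMap O F o := fun o =>
    (hR _).2 fun V hV hVS => hOV V hV hVS o
  have hRinj := IsFractionRing.injective R F
  let e : R ≃+* (algebraMap R F).range := RingEquiv.ofLeftInverse
    (Function.leftInverse_invFun hRinj)
  let i : O →+* R := (e.symm : (algebraMap R F).range →+* R).comp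
    ((algebraMap O F).codRestrict (algebraMap R F).range hOR)
  have hi : ∀ o, algebraMap R F (i o) = algebraMap O F o := fun o =>
    congrArg Subtype.val (e.apply_symm_apply ⟨algebraMap O F o, hOR o⟩)
  have hiinj : Function.Injective i := fun a b hab =>
    IsFractionRing.injective O F (by rw [← hi, ← hi, hab])
  have hsF : algebraMap O F s ≠ 0 := by simpa using hs0
  have hsu : IsUnit (i s) := by
    obtain ⟨r, hr⟩ := (hR _).2 hsinv
    refine IsUnit.of_mul_eq_one r (hRinj ?_)
    rw [map_mul, hi, hr, map_one, mul_inv_cancel₀ hsF]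
  have hlocR : ∀ r : R, ∃ (k : ℕ) (x : O), i s ^ k * r = i x := by
    intro r
    obtain ⟨k, y, hy⟩ := hloc _ ((hR _).1 ⟨r, rfl⟩)
    exact ⟨k, y, hRinj (by rw [map_mul, map_pow, hi, hy, hi])⟩
  refine elementary_of_symb (FinQuot.of_loc i s hsu hlocR hOfin) (fun ℓ hℓ T hT a b hab => ?_) hn
  refine T.trivial_of_comap i hiinj s hsu hlocR hOfin (fun a b hab => ?_) a b hab
  exact trivial_all β hℓ (T.comap i) (fun a b hab => hT _ _ (hab.map i)) a b hab

end Assembly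
end SKOne

namespace SKOne
open Polynomial IntermediateField

/-! ### Number fields and function fields -/

theorem elementary_numberField (R F : Type) [CommRing R] [Field F] [NumberField F] [Algebra R F]
    [IsFractionRing R F] (S : Set (ValuationSubring F)) (hS : S.Finite)
    (hR : ∀ x : F, x ∈ (algebraMap R F).range ↔ ∀ V : ValuationSubring F, V ≠ ⊤ → V ∉ S → x ∈ V)
    {n : ℕ} (hn : 3 ≤ n) : ElementarySubgroup n R = ⊤ :=
  elementary_of_separable baseInt ℚ F R S hS hR (fun a => ⟨(a : R), by simp⟩) hn

/-- With a separating element `t` of `F` chosen inside `R`, the field `F` is a finite separable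
extension of the fraction field of the base ring `k[t] ⊆ R`. -/
theorem elementary_functionField (R F k : Type) [CommRing R] [Field F] [Algebra R F]
    [IsFractionRing R F] [Field k] [Finite k] [Algebra (RatFunc k) F] [FunctionField k F]
    (S : Set (ValuationSubring F)) (hS : S.Finite)
    (hR : ∀ x : F, x ∈ (algebraMap R F).range ↔ ∀ V : ValuationSubring F, V ≠ ⊤ → V ∉ S → x ∈ V)
    {n : ℕ} (hn : 3 ≤ n) : ElementarySubgroup n R = ⊤ := by
  let : Algebra k F := ((algebraMap (RatFunc k) F).comp (algebraMap k (RatFunc k))).toAlgebra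
  have : IsScalarTower k (RatFunc k) F := .of_algebraMap_eq fun _ => rfl
  have hC : adjoin k (Set.range (algebraMap R F)) = ⊤ := by
    refine eq_top_iff.2 fun x _ => ?_
    obtain ⟨a, b, -, rfl⟩ := IsFractionRing.div_surjective R x
    exact div_mem (subset_adjoin _ _ ⟨a, rfl⟩) (subset_adjoin _ _ ⟨b, rfl⟩)
  obtain ⟨t, ⟨t₀, ht₀⟩, htr, hfin, hsep⟩ :=
    exists_separating_element k F (Set.range (algebraMap R F)) hC
  -- constants are roots of unity or zero, hence integral over `ℤ` and in every valuation ring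
  have hk : ∀ c : k, algebraMap k F c ∈ (algebraMap R F).range := by
    intro c
    refine (hR _).2 fun V _ _ => ?_
    have := Fintype.ofFinite k
    have hInt : IsIntegral V (algebraMap k F c) := by
      refine IsIntegral.of_pow (n := Fintype.card k - 1)
        (Nat.sub_pos_of_lt Fintype.one_lt_card) ?_
      rcases eq_or_ne c 0 with rfl | hc
      · rw [map_zero, zero_pow (Nat.sub_pos_of_lt Fintype.one_lt_card).ne']; exact isIntegral_zero
      · rw [← map_pow, FiniteField.pow_card_sub_one_eq_one c hc, map_one]; exact isIntegral_one
    obtain ⟨y, hy⟩ := IsIntegrallyClosed.isIntegral_iff.1 hInt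
    rw [← hy]; exact y.2
  let : Algebra k[X] F := (aeval t).toAlgebra
  let : Algebra k[X] k⟮t⟯ := (aeval (AdjoinSimple.gen k t)).toAlgebra
  have : IsScalarTower k[X] k⟮t⟯ F := .of_algebraMap_eq fun q => by
    change aeval t q = algebraMap k⟮t⟯ F (aeval (AdjoinSimple.gen k t) q)
    rw [← aeval_algebraMap_apply, AdjoinSimple.algebraMap_gen]
  have : IsFractionRing k[X] k⟮t⟯ :=
    IsLocalization.isLocalization_of_algEquiv (nonZeroDivisors k[X])
      (AlgEquiv.ofRingEquiv (f := (RatFunc.algEquivOfTranscendental t htr).toRingEquiv) (fun q => by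
        change RatFunc.algEquivOfTranscendental t htr (algebraMap k[X] (RatFunc k) q) =
          aeval (AdjoinSimple.gen k t) q
        rw [← RatFunc.algEquivOfTranscendental_symm_aeval t htr, AlgEquiv.apply_symm_apply]))
  refine elementary_of_separable (basePoly k) k⟮t⟯ F R S hS hR (fun q => ?_) hn
  change aeval t q ∈ _
  rw [aeval_eq_sum_range]
  refine Subring.sum_mem _ fun j _ => ?_
  rw [Algebra.smul_def]
  have ht : t ∈ (algebraMap R F).range := ⟨t₀, ht₀⟩
  exact mul_mem (hk _) (pow_mem ht _)

end SKOne

theorem statement5 (R : Type) [CommRing R]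
    (hR : IsDedekindRingOfArithmeticType R) (n : ℕ) (hn : 3 ≤ n) :
    ElementarySubgroup n R = ⊤ := by
  obtain ⟨F, _, _, _, S, hS, hRS, hF | ⟨-, k, _, _, _, hF⟩⟩ := hR
  · exact SKOne.elementary_numberField R F S hS hRS hn
  · exact SKOne.elementary_functionField R F k S hS hRS hn
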